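/- arXiv:1412.0562 — 3 statements merged into one kernel-verified Lean document; each statement's English description precedes it below -/
import Mathlib

section
/- Let $D \subseteq \mathbb{C}^n$ be a domain with Lipschitz boundary. Then for every boundary point $P \in \partial D$ there is an open neighbourhood $U$ of $P$ such that $D \cap U$ is an $\mathcal{S}$-domain with Lipschitz boundary; that is, for every plurisubharmonic function $u$ on $D \cap U$ there exists a sequence $(u_k)$ of smooth plurisubharmonic functions on $D \cap U$ decreasing pointwise to $u$. -/
open MeasureTheory Real Filter Topology Metric

noncomputable section

/-- Encoding of the circle mean `(2π)⁻¹ ∫₀^{2π} u(a+e^{iθ}b) dθ` for an `EReal`-valued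
(upper semicontinuous) function `u`, as the infimum of the means of the truncations
`max (u ·) (-m)`. -/
def circleMean {n : ℕ} (u : EuclideanSpace ℂ (Fin n) → EReal)
    (a b : EuclideanSpace ℂ (Fin n)) : EReal :=
  ⨅ m : ℕ, (((2 * π)⁻¹ *
      ∫ θ in (0:ℝ)..(2 * π),
        (u (a + Complex.exp ((θ : ℂ) * Complex.I) • b) ⊔ ((-(m : ℝ) : ℝ) : EReal)).toReal : ℝ)
      : EReal)

/-- `u : Ω → [-∞, ∞)` is plurisubharmonic on an open `Ω ⊆ ℂⁿ`. -/
def IsPSHOn {n : ℕ} (Ω : Set (EuclideanSpace ℂ (Fin n)))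
    (u : EuclideanSpace ℂ (Fin n) → EReal) : Prop :=
  UpperSemicontinuousOn u Ω ∧
  (∀ z ∈ Ω, u z ≠ ⊤) ∧
  (∀ z ∈ Ω, ∃ w ∈ connectedComponentIn Ω z, u w ≠ ⊥) ∧
  ∀ a b : EuclideanSpace ℂ (Fin n),
    (∀ l : ℂ, ‖l‖ ≤ 1 → a + l • b ∈ Ω) → u a ≤ circleMean u a b

/-- `D` is an `𝒮`-domain: a domain on which every plurisubharmonic function is the
pointwise limit of a decreasing sequence of smooth plurisubharmonic functions. -/
def IsSDomain {n : ℕ} (D : Set (EuclideanSpace ℂ (Fin n))) : Prop :=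
  IsOpen D ∧ IsConnected D ∧
  ∀ u : EuclideanSpace ℂ (Fin n) → EReal, IsPSHOn D u →
    ∃ v : ℕ → EuclideanSpace ℂ (Fin n) → ℝ,
      (∀ k, ContDiffOn ℝ (⊤ : ℕ∞) (v k) D) ∧
      (∀ k, IsPSHOn D (fun z => ((v k z : ℝ) : EReal))) ∧
      (∀ k, ∀ z ∈ D, v (k+1) z ≤ v k z) ∧
      (∀ z ∈ D, Tendsto (fun k => ((v k z : ℝ) : EReal)) atTop (nhds (u z)))

/-- `D ⊆ ℂⁿ` has Lipschitz boundary: near each boundary point, after a rigid motion of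
(the real) coordinates, the boundary is the graph of a Lipschitz function and the domain
is the region below the graph. -/
def HasLipschitzBoundary {n : ℕ} (D : Set (EuclideanSpace ℂ (Fin n))) : Prop :=
  ∀ p ∈ frontier D,
    ∃ (φ : EuclideanSpace ℂ (Fin n) ≃ᵢ WithLp 2 (EuclideanSpace ℝ (Fin (2*n-1)) × ℝ))
      (F : EuclideanSpace ℝ (Fin (2*n-1)) → ℝ) (L : NNReal)
      (V : Set (WithLp 2 (EuclideanSpace ℝ (Fin (2*n-1)) × ℝ))),
      LipschitzWith L F ∧ IsOpen V ∧ φ p ∈ V ∧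
      ∀ q ∈ V, (φ.symm q ∈ D ↔
        (WithLp.equiv 2 (EuclideanSpace ℝ (Fin (2*n-1)) × ℝ) q).2 <
          F (WithLp.equiv 2 (EuclideanSpace ℝ (Fin (2*n-1)) × ℝ) q).1)

abbrev Cn (n : ℕ) := EuclideanSpace ℂ (Fin n)

lemma circ_mem {n : ℕ} {Ω : Set (Cn n)} {a b : Cn n}
    (hab : ∀ l : ℂ, ‖l‖ ≤ 1 → a + l • b ∈ Ω) (θ : ℝ) :
    a + Complex.exp ((θ : ℂ) * Complex.I) • b ∈ Ω :=
  hab _ (by rw [Complex.norm_exp_ofReal_mul_I])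

lemma circ_cont {n : ℕ} (a b : Cn n) :
    Continuous (fun θ : ℝ => a + Complex.exp ((θ : ℂ) * Complex.I) • b) := by
  fun_prop

lemma usc_circ {n : ℕ} {Ω : Set (Cn n)} {u : Cn n → EReal} (hu : UpperSemicontinuousOn u Ω)
    {a b : Cn n} (hab : ∀ l : ℂ, ‖l‖ ≤ 1 → a + l • b ∈ Ω) :
    UpperSemicontinuous (fun θ : ℝ => u (a + Complex.exp ((θ : ℂ) * Complex.I) • b)) := by
  rw [← upperSemicontinuousOn_univ_iff]
  exact hu.comp (circ_cont a b).continuousOn (fun θ _ => circ_mem hab θ)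

/-- Comparison of `u a` with the mean of any integrable majorant on the circle. -/
lemma psh_le_mean {n : ℕ} {Ω : Set (Cn n)} {u : Cn n → EReal} (hu : IsPSHOn Ω u)
    {a b : Cn n} (hab : ∀ l : ℂ, ‖l‖ ≤ 1 → a + l • b ∈ Ω) (h : ℝ → ℝ)
    (hhI : IntervalIntegrable h volume 0 (2 * π)) (m : ℕ)
    (hm : ∀ θ ∈ Set.Icc 0 (2 * π), -(m : ℝ) ≤ h θ)
    (hle : ∀ θ ∈ Set.Icc 0 (2 * π), u (a + Complex.exp ((θ : ℂ) * Complex.I) • b) ≤ (h θ : EReal)) :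
    u a ≤ (((2 * π)⁻¹ * ∫ θ in (0:ℝ)..(2 * π), h θ : ℝ) : EReal) := by
  refine (hu.2.2.2 a b hab).trans ((iInf_le _ m).trans ?_)
  rw [EReal.coe_le_coe_iff]
  have hpi : (0:ℝ) ≤ 2 * π := by positivity
  set f : ℝ → ℝ := fun θ =>
    (u (a + Complex.exp ((θ : ℂ) * Complex.I) • b) ⊔ ((-(m : ℝ) : ℝ) : EReal)).toReal with hf
  have hbound : ∀ θ ∈ Set.Icc 0 (2 * π), -(m:ℝ) ≤ f θ ∧ f θ ≤ h θ := by
    intro θ hθ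
    have h1 : u (a + Complex.exp ((θ : ℂ) * Complex.I) • b) ⊔ ((-(m : ℝ) : ℝ) : EReal) ≤ (h θ : EReal) :=
      sup_le (hle θ hθ) (by exact_mod_cast hm θ hθ)
    have h2 : ((-(m : ℝ) : ℝ) : EReal) ≤
      u (a + Complex.exp ((θ : ℂ) * Complex.I) • b) ⊔ ((-(m : ℝ) : ℝ) : EReal) := le_sup_right
    have hb : u (a + Complex.exp ((θ : ℂ) * Complex.I) • b) ⊔ ((-(m : ℝ) : ℝ) : EReal) ≠ ⊥ :=
      ne_of_gt (lt_of_lt_of_le (EReal.bot_lt_coe _) h2)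
    have ht : u (a + Complex.exp ((θ : ℂ) * Complex.I) • b) ⊔ ((-(m : ℝ) : ℝ) : EReal) ≠ ⊤ :=
      ne_of_lt (lt_of_le_of_lt h1 (EReal.coe_lt_top _))
    constructor
    · have := EReal.toReal_le_toReal h2 (EReal.coe_ne_bot _) ht
      rwa [EReal.toReal_coe] at this
    · have := EReal.toReal_le_toReal h1 hb (EReal.coe_ne_top _)
      rwa [EReal.toReal_coe] at this
  have hmeas : Measurable f := by
    apply measurable_ereal_toReal.comp
    exact (usc_circ hu.1 hab).measurable.sup measurable_const
  have hfint : IntervalIntegrable f volume 0 (2 * π) := by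
    rw [intervalIntegrable_iff_integrableOn_Icc_of_le hpi] at hhI ⊢
    refine Integrable.mono' (g := fun θ => (m:ℝ) + |h θ|) ?_ hmeas.aestronglyMeasurable ?_
    · exact (integrable_const _).add hhI.abs
    · refine (ae_restrict_iff' measurableSet_Icc).2 (Eventually.of_forall fun θ hθ => ?_)
      obtain ⟨h1, h2⟩ := hbound θ hθ
      rw [Real.norm_eq_abs, abs_le]
      have hm0 : (0:ℝ) ≤ m := by positivity
      constructor
      · linarith [abs_nonneg (h θ)]
      · linarith [le_abs_self (h θ)]
  apply mul_le_mul_of_nonneg_left _ (by positivity)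
  exact intervalIntegral.integral_mono_on hpi hfint hhI (fun θ hθ => (hbound θ hθ).2)

/-- If `u ≤ M` on the circle, and `u ≤ c` on an arc, we can improve the bound at the centre. -/
lemma psh_le_arc {n : ℕ} {Ω : Set (Cn n)} {u : Cn n → EReal} (hu : IsPSHOn Ω u)
    {a b : Cn n} (hab : ∀ l : ℂ, ‖l‖ ≤ 1 → a + l • b ∈ Ω) (M c α : ℝ) (hα : 0 < α)
    (hα2 : α ≤ 2 * π)
    (hM : ∀ θ : ℝ, u (a + Complex.exp ((θ : ℂ) * Complex.I) • b) ≤ (M : EReal))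
    (hc : ∀ θ ∈ Set.Ioc 0 α, u (a + Complex.exp ((θ : ℂ) * Complex.I) • b) ≤ (c : EReal)) :
    u a ≤ (((2 * π)⁻¹ * (α * c + (2 * π - α) * M) : ℝ) : EReal) := by
  classical
  set h : ℝ → ℝ := fun θ => if θ ∈ Set.Ioc 0 α then c else M with hh
  have i1 : IntervalIntegrable h volume 0 α := by
    rw [intervalIntegrable_congr (g := fun _ => c)]
    · exact intervalIntegrable_const
    · rw [Set.uIoc_of_le hα.le]
      intro θ hθ
      simp [hh, hθ.1, hθ.2]
  have i2 : IntervalIntegrable h volume α (2 * π) := by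
    rw [intervalIntegrable_congr (g := fun _ => M)]
    · exact intervalIntegrable_const
    · rw [Set.uIoc_of_le hα2]
      intro θ hθ
      have : ¬ θ ≤ α := not_le.2 hθ.1
      simp [hh, this]
  have e1 : ∫ θ in (0:ℝ)..α, h θ = α * c := by
    rw [intervalIntegral.integral_congr_ae (g := fun _ => c)]
    · simp
    · rw [Set.uIoc_of_le hα.le]
      refine Eventually.of_forall fun θ hθ => ?_
      simp [hh, hθ.1, hθ.2]
  have e2 : ∫ θ in α..(2*π), h θ = (2 * π - α) * M := by
    rw [intervalIntegral.integral_congr_ae (g := fun _ => M)]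
    · simp
    · rw [Set.uIoc_of_le hα2]
      refine Eventually.of_forall fun θ hθ => ?_
      have : ¬ θ ≤ α := not_le.2 hθ.1
      simp [hh, this]
  rw [← e1, ← e2, intervalIntegral.integral_add_adjacent_intervals i1 i2]
  obtain ⟨m, hm⟩ := exists_nat_ge (|M| + |c|)
  refine psh_le_mean hu hab h (i1.trans i2) m ?_ ?_
  · intro θ _
    have := neg_abs_le M
    have := neg_abs_le c
    have := abs_nonneg M
    have := abs_nonneg c
    simp only [hh]
    split_ifs <;> linarith
  · intro θ _
    simp only [hh]
    split_ifs with h1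
    · exact hc θ h1
    · exact hM θ

lemma psh_usc_ev {n : ℕ} {Ω : Set (Cn n)} {u : Cn n → EReal} (hu : IsPSHOn Ω u)
    (hΩ : IsOpen Ω) {q : Cn n} (hq : q ∈ Ω) {c : EReal} (hc : u q < c) :
    ∀ᶠ z in 𝓝 q, u z < c ∧ z ∈ Ω := by
  have := hu.1 q hq c hc
  rw [hΩ.nhdsWithin_eq hq] at this
  exact this.and (hΩ.mem_nhds hq)

lemma psh_bdd {n : ℕ} {Ω : Set (Cn n)} {u : Cn n → EReal} (hu : IsPSHOn Ω u)
    {K : Set (Cn n)} (hK : IsCompact K) (hKΩ : K ⊆ Ω) : ∃ M : ℝ, ∀ z ∈ K, u z ≤ (M : EReal) := by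
  rcases K.eq_empty_or_nonempty with rfl | hne
  · exact ⟨0, by simp⟩
  obtain ⟨a, haK, ha⟩ := UpperSemicontinuousOn.exists_isMaxOn hne hK (hu.1.mono hKΩ)
  refine ⟨(u a).toReal, fun z hz => (ha hz).trans ?_⟩
  exact EReal.le_coe_toReal (hu.2.1 a (hKΩ haK))

lemma disc_compact {n : ℕ} (a b : Cn n) :
    IsCompact ((fun l : ℂ => a + l • b) '' closedBall 0 1) :=
  (isCompact_closedBall _ _).image (by fun_prop)

lemma psh_bdd_circ {n : ℕ} {Ω : Set (Cn n)} {u : Cn n → EReal} (hu : IsPSHOn Ω u)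
    {a b : Cn n} (hab : ∀ l : ℂ, ‖l‖ ≤ 1 → a + l • b ∈ Ω) :
    ∃ M : ℝ, ∀ θ : ℝ, u (a + Complex.exp ((θ : ℂ) * Complex.I) • b) ≤ (M : EReal) := by
  obtain ⟨M, hM⟩ := psh_bdd hu (disc_compact a b) (by
    rintro _ ⟨l, hl, rfl⟩
    exact hab l (by simpa using hl))
  refine ⟨M, fun θ => hM _ ⟨_, ?_, rfl⟩⟩
  simp [Complex.norm_exp_ofReal_mul_I]

lemma psh_not_bot {n : ℕ} {Ω : Set (Cn n)} {u : Cn n → EReal} (hu : IsPSHOn Ω u)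
    (hΩ : IsOpen Ω) (hconn : IsPreconnected Ω) {W : Set (Cn n)} (hW : IsOpen W) (hWΩ : W ⊆ Ω)
    (hWne : W.Nonempty) : ∃ w ∈ W, u w ≠ ⊥ := by
  by_contra! hbot
  obtain ⟨z0, hz0⟩ := hWne
  set A : Set (Cn n) := interior {z | z ∈ Ω ∧ u z = ⊥} with hA
  have hWA : W ⊆ A := interior_maximal (fun w hw => ⟨hWΩ hw, hbot w hw⟩) hW
  have hsub : Ω ⊆ A := by
    apply hconn.subset_of_closure_inter_subset isOpen_interior ⟨z0, hWΩ hz0, hWA hz0⟩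
    rintro z ⟨hzA, hzΩ⟩
    obtain ⟨r, hr, hball⟩ := Metric.isOpen_iff.1 hΩ z hzΩ
    set ρ := r / 4 with hρ
    have hρ0 : 0 < ρ := by positivity
    obtain ⟨a, haA, haz⟩ := Metric.mem_closure_iff.1 hzA ρ hρ0
    rw [mem_interior]
    refine ⟨ball z ρ, fun x hx => ?_, isOpen_ball, mem_ball_self hρ0⟩
    have hxz : dist x z < ρ := hx
    have hb : ‖a - x‖ < 2 * ρ := by
      rw [← dist_eq_norm]
      have := dist_triangle a z x
      rw [dist_comm a z, dist_comm z x] at this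
      linarith
    have hdisc : ∀ l : ℂ, ‖l‖ ≤ 1 → x + l • (a - x) ∈ Ω := by
      intro l hl
      apply hball
      rw [mem_ball]
      have h1 : dist (x + l • (a - x)) x ≤ ‖a - x‖ := by
        rw [dist_eq_norm, add_sub_cancel_left, norm_smul]
        exact mul_le_of_le_one_left (norm_nonneg _) hl
      have := dist_triangle (x + l • (a - x)) x z
      linarith
    obtain ⟨M, hM⟩ := psh_bdd_circ hu hdisc
    have hev : ∀ᶠ θ : ℝ in 𝓝 0, x + Complex.exp ((θ : ℂ) * Complex.I) • (a - x) ∈ A := by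
      apply (circ_cont x (a - x)).continuousAt.eventually_mem
      simp only [Complex.ofReal_zero, zero_mul, Complex.exp_zero, one_smul, add_sub_cancel]
      exact isOpen_interior.mem_nhds haA
    obtain ⟨δ, hδ, hδA⟩ := Metric.eventually_nhds_iff.1 hev
    set α := min (δ / 2) π with hα
    have hα0 : 0 < α := lt_min (by positivity) Real.pi_pos
    have hα2 : α ≤ 2 * π := (min_le_right _ _).trans (by linarith [Real.pi_pos])
    refine ⟨hball (by rw [mem_ball]; linarith), ?_⟩
    rw [EReal.eq_bot_iff_forall_lt]
    intro y
    have key := psh_le_arc hu hdisc M ((2 * π * (y - 1) - (2 * π - α) * M) / α) α hα0 hα2 hM (by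
      intro θ hθ
      have : x + Complex.exp ((θ : ℂ) * Complex.I) • (a - x) ∈ A := by
        apply hδA
        rw [Real.dist_eq, sub_zero, abs_of_pos hθ.1]
        have := hθ.2.trans (min_le_left _ _)
        linarith
      rw [(interior_subset this).2]
      exact bot_le)
    refine lt_of_le_of_lt key ?_
    rw [EReal.coe_lt_coe_iff]
    have hpi := Real.pi_pos
    have : (2 * π)⁻¹ * (α * ((2 * π * (y - 1) - (2 * π - α) * M) / α) + (2 * π - α) * M) = y - 1 := by
      field_simp
      ring
    linarith
  obtain ⟨w, hw, hwb⟩ := hu.2.2.1 z0 (hWΩ hz0)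
  exact hwb (interior_subset (hsub (connectedComponentIn_subset _ _ hw))).2

/-- A sector is not thin at its apex. -/
lemma psh_sector {n : ℕ} {Ω : Set (Cn n)} {u : Cn n → EReal} (hu : IsPSHOn Ω u)
    (hΩ : IsOpen Ω) {q b : Cn n} (hq : q ∈ Ω) (κ : ℝ) (hκ : 0 < κ) (c : ℝ)
    (hc : ∀ s τ : ℝ, 0 < s → s < 1 → 0 ≤ τ → τ ≤ κ * s →
      u (q + ((s : ℂ) + τ * Complex.I) • b) ≤ (c : EReal)) : u q ≤ (c : EReal) := by
  by_contra! hlt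
  have htop := hu.2.1 q hq
  have hbot : u q ≠ ⊥ := ne_of_gt (lt_trans (EReal.bot_lt_coe c) hlt)
  obtain ⟨x, hx⟩ : ∃ x : ℝ, u q = (x : EReal) := ⟨(u q).toReal, (EReal.coe_toReal htop hbot).symm⟩
  rw [hx, EReal.coe_lt_coe_iff] at hlt
  have hpi := Real.pi_pos
  have hev : ∀ᶠ θ : ℝ in 𝓝 0, Real.sin θ < κ * Real.cos θ ∧ 0 < Real.cos θ := by
    refine Filter.Eventually.and ?_ ?_
    · have h1 : ContinuousAt (fun θ : ℝ => Real.sin θ) 0 := by fun_prop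
      have h2 : ContinuousAt (fun θ : ℝ => κ * Real.cos θ) 0 := by fun_prop
      exact h1.eventually_lt h2 (by simpa using hκ)
    · have h2 : ContinuousAt (fun θ : ℝ => Real.cos θ) 0 := by fun_prop
      exact (continuousAt_const).eventually_lt h2 (by simp)
  obtain ⟨δ, hδ, hδA⟩ := Metric.eventually_nhds_iff.1 hev
  set α := min (δ / 2) π with hα
  have hα0 : 0 < α := lt_min (by positivity) hpi
  have hα2 : α ≤ π := min_le_right _ _
  set η := α * (x - c) / (4 * π) with hη
  have hη0 : 0 < η := by
    have : 0 < x - c := by linarith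
    positivity
  have husc : ∀ᶠ z in 𝓝 q, u z < ((x + η : ℝ) : EReal) ∧ z ∈ Ω := by
    apply psh_usc_ev hu hΩ hq
    rw [hx, EReal.coe_lt_coe_iff]
    linarith
  have hcont : Tendsto (fun l : ℂ => q + l • b) (𝓝 0) (𝓝 q) := by
    have : Continuous (fun l : ℂ => q + l • b) := by fun_prop
    simpa using this.tendsto 0
  obtain ⟨ε, hε, hεA⟩ := Metric.eventually_nhds_iff.1 (hcont.eventually husc)
  set ρ := min (ε / 2) (1 / 2) with hρ
  have hρ0 : 0 < ρ := lt_min (by positivity) (by norm_num)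
  have hρ1 : ρ ≤ 1 / 2 := min_le_right _ _
  have hρ2 : ρ ≤ ε / 2 := min_le_left _ _
  have hin : ∀ l : ℂ, ‖l‖ ≤ 1 → u (q + l • ((ρ : ℂ) • b)) < ((x + η : ℝ) : EReal) ∧
      q + l • ((ρ : ℂ) • b) ∈ Ω := by
    intro l hl
    rw [smul_smul]
    apply hεA
    rw [dist_zero_right, norm_mul, Complex.norm_real, Real.norm_eq_abs, abs_of_pos hρ0]
    nlinarith
  have key := psh_le_arc hu (b := (ρ : ℂ) • b) (fun l hl => (hin l hl).2) (x + η) c α hα0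
    (by linarith) (fun θ => (hin _ (by rw [Complex.norm_exp_ofReal_mul_I])).1.le) (by
      intro θ hθ
      obtain ⟨h1, h2⟩ := hδA (y := θ) (by
        rw [Real.dist_eq, sub_zero, abs_of_pos hθ.1]
        have := hθ.2.trans (min_le_left _ _)
        linarith)
      have h3 : 0 ≤ Real.sin θ := Real.sin_nonneg_of_nonneg_of_le_pi hθ.1.le (hθ.2.trans hα2)
      have := hc (ρ * Real.cos θ) (ρ * Real.sin θ) (by positivity)
        (by nlinarith [Real.cos_le_one θ]) (by positivity) (by nlinarith)
      convert this using 3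
      rw [smul_smul, Complex.exp_mul_I]
      congr 1
      push_cast
      ring)
  rw [hx, EReal.coe_le_coe_iff] at key
  have h4 : 2 * π * x ≤ α * c + (2 * π - α) * (x + η) := by
    have := mul_le_mul_of_nonneg_left key (by positivity : 0 ≤ 2 * π)
    rwa [mul_inv_cancel_left₀ (by positivity)] at this
  have h5 : 4 * π * η = α * (x - c) := by
    rw [hη]; field_simp
  nlinarith

/-- Real-valued continuous plurisubharmonic functions. -/
def RPSH {n : ℕ} (Ω : Set (Cn n)) (v : Cn n → ℝ) : Prop :=
  ContinuousOn v Ω ∧ ∀ a b : Cn n, (∀ l : ℂ, ‖l‖ ≤ 1 → a + l • b ∈ Ω) →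
    v a ≤ (2 * π)⁻¹ * ∫ θ in (0:ℝ)..(2 * π), v (a + Complex.exp ((θ : ℂ) * Complex.I) • b)

lemma cont_circ {n : ℕ} {Ω : Set (Cn n)} {v : Cn n → ℝ} (hv : ContinuousOn v Ω)
    {a b : Cn n} (hab : ∀ l : ℂ, ‖l‖ ≤ 1 → a + l • b ∈ Ω) :
    Continuous (fun θ : ℝ => v (a + Complex.exp ((θ : ℂ) * Complex.I) • b)) :=
  hv.comp_continuous (circ_cont a b) (circ_mem hab)

lemma RPSH.isPSHOn {n : ℕ} {Ω : Set (Cn n)} {v : Cn n → ℝ} (hv : RPSH Ω v) :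
    IsPSHOn Ω (fun z => ((v z : ℝ) : EReal)) := by
  refine ⟨?_, fun z _ => EReal.coe_ne_top _,
    fun z hz => ⟨z, mem_connectedComponentIn hz, EReal.coe_ne_bot _⟩, ?_⟩
  · exact (continuous_coe_real_ereal.comp_continuousOn hv.1).upperSemicontinuousOn
  · intro a b hab
    refine le_iInf fun m => ?_
    rw [EReal.coe_le_coe_iff]
    refine (hv.2 a b hab).trans ?_
    apply mul_le_mul_of_nonneg_left _ (by positivity)
    have hc := cont_circ hv.1 hab
    have he : ∀ θ : ℝ, ((v (a + Complex.exp ((θ : ℂ) * Complex.I) • b) : EReal) ⊔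
        ((-(m : ℝ) : ℝ) : EReal)).toReal = v (a + Complex.exp ((θ : ℂ) * Complex.I) • b) ⊔ (-(m:ℝ)) := by
      intro θ
      rw [← EReal.coe_strictMono.monotone.map_max, EReal.toReal_coe]
    simp_rw [he]
    apply intervalIntegral.integral_mono_on (by positivity) (hc.intervalIntegrable _ _)
    · exact (hc.max continuous_const).intervalIntegrable _ _
    · intro θ _
      exact le_max_left _ _

/-- The inward affine contraction. -/
def G {n : ℕ} (p0 : Cn n) (t : ℝ) (w z : Cn n) : Cn n := z + t • (p0 - z) + w

lemma G_circ {n : ℕ} (p0 : Cn n) (t : ℝ) (w a b : Cn n) (l : ℂ) :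
    G p0 t w (a + l • b) = G p0 t w a + l • ((1 - t) • b) := by
  unfold G
  rw [smul_comm l (1 - t) b]
  module

lemma G_cont {n : ℕ} (p0 : Cn n) : Continuous (fun x : (ℝ × Cn n) × Cn n => G p0 x.1.1 x.1.2 x.2) := by
  unfold G
  fun_prop

/-- `Ω` is open and star-shaped with respect to the closed ball `B(p0,R)`. -/
def StarBall {n : ℕ} (Ω : Set (Cn n)) (p0 : Cn n) (R : ℝ) : Prop :=
  0 < R ∧ IsOpen Ω ∧ p0 ∈ Ω ∧ ∀ z ∈ Ω, ∀ t : ℝ, 0 ≤ t → t ≤ 1 → ∀ w, ‖w‖ ≤ t * R → G p0 t w z ∈ Ω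

lemma StarBall.isPreconnected {n : ℕ} {Ω : Set (Cn n)} {p0 : Cn n} {R : ℝ}
    (h : StarBall Ω p0 R) : IsConnected Ω := by
  have : StarConvex ℝ p0 Ω := by
    intro z hz a b ha hb hab
    have := h.2.2.2 z hz a ha (by linarith) 0 (by simpa using mul_nonneg ha h.1.le)
    convert this using 1
    unfold G
    have : b = 1 - a := by linarith
    subst this
    module
  exact (this.isPathConnected h.2.2.1).isConnected

def Sc (n : ℕ) (R ε : ℝ) : Set (ℝ × Cn n) := {s | 0 ≤ s.1 ∧ s.1 ≤ ε ∧ ‖s.2‖ ≤ s.1 * R}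

lemma Sc_compact (n : ℕ) (R ε : ℝ) (hR : 0 < R) : IsCompact (Sc n R ε) := by
  have hcl : IsClosed (Sc n R ε) := by
    have h1 : IsClosed {s : ℝ × Cn n | ‖s.2‖ ≤ s.1 * R} := isClosed_le (by fun_prop) (by fun_prop)
    exact (isClosed_le continuous_const continuous_fst).inter
      ((isClosed_le continuous_fst continuous_const).inter h1)
  refine (isCompact_Icc.prod (isCompact_closedBall (0 : Cn n) (ε * R))).of_isClosed_subset hcl
    (?_ : Sc n R ε ⊆ Set.Icc (0:ℝ) ε ×ˢ closedBall (0 : Cn n) (ε * R))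
  rintro ⟨t, w⟩ ⟨h1, h2, h3⟩
  refine ⟨⟨h1, h2⟩, ?_⟩
  rw [mem_closedBall_zero_iff]
  exact h3.trans (by gcongr)

/-- supremum over the closed cone is bounded by the one over the open cone -/
lemma psh_open_cone {n : ℕ} {Ω : Set (Cn n)} {p0 : Cn n} {R : ℝ} (hΩ : StarBall Ω p0 R)
    {u : Cn n → EReal} (hu : IsPSHOn Ω u) {ε : ℝ} (hε : 0 < ε) (hε1 : ε ≤ 1) {z : Cn n}
    (hz : z ∈ Ω) (c : ℝ)
    (hc : ∀ t w, 0 < t → t < ε → ‖w‖ < t * R → u (G p0 t w z) ≤ (c : EReal)) :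
    ∀ s ∈ Sc n R ε, u (G p0 s.1 s.2 z) ≤ (c : EReal) := by
  rintro ⟨t, w⟩ ⟨ht0, htε, hw⟩
  simp only at ht0 htε hw ⊢
  have hR := hΩ.1
  set b : Cn n := (ε / 2 - t) • (p0 - z) - w with hb
  have hb0 := norm_nonneg b
  refine psh_sector hu hΩ.2.1 (b := b) (hΩ.2.2.2 z hz t ht0 (htε.trans hε1) w hw)
    (ε * R / (4 * (‖b‖ + 1))) (by positivity) c ?_
  intro s τ hs0 hs1 hτ0 hτ
  have hG : G p0 t w z + ((s : ℂ) + τ * Complex.I) • b =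
      G p0 ((1 - s) * t + s * (ε / 2)) ((1 - s) • w + ((τ : ℂ) * Complex.I) • b) z := by
    rw [add_smul, Complex.coe_smul]
    generalize ((τ : ℂ) * Complex.I) • b = y
    unfold G
    rw [hb]
    module
  rw [hG]
  apply hc
  · nlinarith
  · nlinarith
  · have h1 : ‖(1 - s) • w + ((τ : ℂ) * Complex.I) • b‖ ≤ (1 - s) * (t * R) + τ * ‖b‖ := by
      refine (norm_add_le _ _).trans (add_le_add ?_ ?_)
      · rw [norm_smul, Real.norm_eq_abs, abs_of_pos (by linarith)]
        exact mul_le_mul_of_nonneg_left hw (by linarith)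
      · rw [norm_smul, norm_mul, Complex.norm_real, Complex.norm_I, mul_one, Real.norm_eq_abs,
          abs_of_nonneg hτ0]
    have h2 : τ * ‖b‖ < s * (ε / 2) * R := by
      have h3 : τ * (‖b‖ + 1) ≤ s * ε * R / 4 := by
        calc τ * (‖b‖ + 1) ≤ (ε * R / (4 * (‖b‖ + 1)) * s) * (‖b‖ + 1) := by gcongr
          _ = s * ε * R / 4 := by field_simp
      have : 0 < s * ε * R := by positivity
      nlinarith
    nlinarith

/-- The sup over truncated inward cones. -/
def V {n : ℕ} (p0 : Cn n) (R : ℝ) (u : Cn n → EReal) (ε : ℝ) (z : Cn n) : EReal :=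
  ⨆ s ∈ Sc n R ε, u (G p0 s.1 s.2 z)

lemma le_V {n : ℕ} (p0 : Cn n) (R : ℝ) (u : Cn n → EReal) (ε : ℝ) (z : Cn n) (t : ℝ) (w : Cn n)
    (hs : (t, w) ∈ Sc n R ε) : u (G p0 t w z) ≤ V p0 R u ε z :=
  le_iSup₂ (f := fun (s : ℝ × Cn n) (_ : s ∈ Sc n R ε) => u (G p0 s.1 s.2 z)) (t, w) hs

lemma V_le {n : ℕ} {p0 : Cn n} {R : ℝ} {u : Cn n → EReal} {ε : ℝ} {z : Cn n} {c : EReal}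
    (h : ∀ t w, (t, w) ∈ Sc n R ε → u (G p0 t w z) ≤ c) : V p0 R u ε z ≤ c :=
  iSup₂_le fun s hs => h s.1 s.2 hs

lemma V_top {n : ℕ} {Ω : Set (Cn n)} {p0 : Cn n} {R : ℝ} (hΩ : StarBall Ω p0 R)
    {u : Cn n → EReal} (hu : IsPSHOn Ω u) {ε : ℝ} (hε1 : ε ≤ 1) {z : Cn n}
    (hz : z ∈ Ω) : V p0 R u ε z ≠ ⊤ := by
  obtain ⟨M, hM⟩ := psh_bdd hu (K := (fun s : ℝ × Cn n => G p0 s.1 s.2 z) '' Sc n R ε)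
    ((Sc_compact n R ε hΩ.1).image (by unfold G; fun_prop)) (by
      rintro _ ⟨⟨t, w⟩, ⟨h1, h2, h3⟩, rfl⟩
      exact hΩ.2.2.2 z hz t h1 (h2.trans hε1) w h3)
  refine ne_of_lt (lt_of_le_of_lt (V_le fun t w hs => hM _ ⟨(t, w), hs, rfl⟩) (EReal.coe_lt_top M))

lemma V_bot {n : ℕ} {Ω : Set (Cn n)} {p0 : Cn n} {R : ℝ} (hΩ : StarBall Ω p0 R)
    {u : Cn n → EReal} (hu : IsPSHOn Ω u) {ε : ℝ} (hε : 0 < ε) (hε1 : ε ≤ 1) {z : Cn n}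
    (hz : z ∈ Ω) : V p0 R u ε z ≠ ⊥ := by
  have hR := hΩ.1
  have hsc : ∀ w : Cn n, ‖w‖ < ε / 2 * R → (ε / 2, w) ∈ Sc n R ε := fun w hw =>
    ⟨by simp only; positivity, by simp only; linarith, hw.le⟩
  have hG : ∀ w ∈ ball (z + (ε / 2) • (p0 - z)) (ε / 2 * R),
      w = G p0 (ε / 2) (w - (z + (ε / 2) • (p0 - z))) z := fun w _ => by unfold G; module
  obtain ⟨w, hw, hwb⟩ := psh_not_bot hu hΩ.2.1 hΩ.isPreconnected.isPreconnected
    (W := ball (z + (ε / 2) • (p0 - z)) (ε / 2 * R)) isOpen_ball (by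
      intro w hw
      rw [hG w hw]
      rw [mem_ball, dist_eq_norm] at hw
      exact hΩ.2.2.2 z hz _ (by positivity) (by linarith) _ hw.le)
    ⟨_, mem_ball_self (by positivity)⟩
  intro hbot
  apply hwb
  rw [← le_bot_iff, ← hbot, hG w hw]
  rw [mem_ball, dist_eq_norm] at hw
  exact le_V _ _ _ _ _ _ _ (hsc _ hw)

def Vr {n : ℕ} (p0 : Cn n) (R : ℝ) (u : Cn n → EReal) (ε : ℝ) (z : Cn n) : ℝ := (V p0 R u ε z).toReal

lemma Vr_coe {n : ℕ} {Ω : Set (Cn n)} {p0 : Cn n} {R : ℝ} (hΩ : StarBall Ω p0 R)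
    {u : Cn n → EReal} (hu : IsPSHOn Ω u) {ε : ℝ} (hε : 0 < ε) (hε1 : ε ≤ 1) {z : Cn n}
    (hz : z ∈ Ω) : (Vr p0 R u ε z : EReal) = V p0 R u ε z :=
  EReal.coe_toReal (V_top hΩ hu hε1 hz) (V_bot hΩ hu hε hε1 hz)

lemma Vr_continuousOn {n : ℕ} {Ω : Set (Cn n)} {p0 : Cn n} {R : ℝ} (hΩ : StarBall Ω p0 R)
    {u : Cn n → EReal} (hu : IsPSHOn Ω u) {ε : ℝ} (hε : 0 < ε) (hε1 : ε ≤ 1) :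
    ContinuousOn (Vr p0 R u ε) Ω := by
  intro z0 hz0
  apply ContinuousAt.continuousWithinAt
  have hev : ∀ᶠ z in 𝓝 z0, z ∈ Ω := hΩ.2.1.mem_nhds hz0
  rw [ContinuousAt, tendsto_order]
  constructor
  · intro c hc
    have : ∃ t w, 0 < t ∧ t < ε ∧ ‖w‖ < t * R ∧ (c : EReal) < u (G p0 t w z0) := by
      by_contra! hcon
      have h1 := psh_open_cone hΩ hu hε hε1 hz0 c hcon
      have h2 : V p0 R u ε z0 ≤ c := V_le fun t w hs => h1 (t, w) hs
      rw [← Vr_coe hΩ hu hε hε1 hz0, EReal.coe_le_coe_iff] at h2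
      linarith
    obtain ⟨t, w, ht0, htε, hw, hu1⟩ := this
    have hn : ∀ᶠ z in 𝓝 z0, ‖w + (1 - t) • (z0 - z)‖ < t * R := by
      have : ContinuousAt (fun z => ‖w + (1 - t) • (z0 - z)‖) z0 := by fun_prop
      exact this.eventually_lt continuousAt_const (by simpa using hw)
    filter_upwards [hev, hn] with z hz hnz
    have hG : G p0 t w z0 = G p0 t (w + (1 - t) • (z0 - z)) z := by unfold G; module
    rw [← EReal.coe_lt_coe_iff, Vr_coe hΩ hu hε hε1 hz]
    refine lt_of_lt_of_le hu1 ?_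
    rw [hG]
    exact le_V _ _ _ _ _ _ _ ⟨ht0.le, htε.le, hnz.le⟩
  · intro c hc
    obtain ⟨c', hc1, hc2⟩ := exists_between hc
    have h1 : ∀ᶠ z in 𝓝 z0, ∀ s ∈ Sc n R ε, u (G p0 s.1 s.2 z) < (c' : EReal) := by
      apply (Sc_compact n R ε hΩ.1).eventually_forall_of_forall_eventually
      rintro ⟨t, w⟩ hs
      have hlt : u (G p0 t w z0) < (c' : EReal) := by
        have : u (G p0 t w z0) ≤ V p0 R u ε z0 :=
          le_V _ _ _ _ _ _ _ hs
        rw [← Vr_coe hΩ hu hε hε1 hz0] at this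
        exact lt_of_le_of_lt this (by exact_mod_cast hc1)
      have h2 := psh_usc_ev hu hΩ.2.1 (hΩ.2.2.2 z0 hz0 t hs.1 (hs.2.1.trans hε1) w hs.2.2) hlt
      have hcont : Continuous (fun x : Cn n × (ℝ × Cn n) => G p0 x.2.1 x.2.2 x.1) := by
        unfold G; fun_prop
      have h3 := (hcont.tendsto (z0, (t, w))).eventually h2
      filter_upwards [h3] with x hx using hx.1
    filter_upwards [hev, h1] with z hz hz1
    refine lt_of_le_of_lt ?_ hc2
    rw [← EReal.coe_le_coe_iff, Vr_coe hΩ hu hε hε1 hz]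
    exact V_le fun t w hs => (hz1 (t, w) hs).le

lemma Vr_RPSH {n : ℕ} {Ω : Set (Cn n)} {p0 : Cn n} {R : ℝ} (hΩ : StarBall Ω p0 R)
    {u : Cn n → EReal} (hu : IsPSHOn Ω u) {ε : ℝ} (hε : 0 < ε) (hε1 : ε ≤ 1) :
    RPSH Ω (Vr p0 R u ε) := by
  have hc := Vr_continuousOn hΩ hu hε hε1
  refine ⟨hc, fun a b hab => ?_⟩
  have hcirc := cont_circ hc hab
  obtain ⟨m0, hm0⟩ := (isCompact_Icc (a := (0:ℝ)) (b := 2 * π)).bddBelow_image hcirc.continuousOn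
  obtain ⟨m, hm⟩ := exists_nat_ge (-m0)
  have haΩ : a ∈ Ω := by simpa using hab 0 (by simp)
  rw [← EReal.coe_le_coe_iff, Vr_coe hΩ hu hε hε1 haΩ]
  refine V_le fun t w hs => ?_
  refine psh_le_mean hu (b := (1 - t) • b) ?_ _ (hcirc.intervalIntegrable _ _) m ?_ ?_
  · intro l hl
    rw [← G_circ]
    exact hΩ.2.2.2 _ (hab l hl) t hs.1 (hs.2.1.trans hε1) w hs.2.2
  · intro θ hθ
    have := hm0 ⟨θ, hθ, rfl⟩
    simp only at this
    linarith
  · intro θ _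
    rw [← G_circ, Vr_coe hΩ hu hε hε1 (circ_mem hab θ)]
    exact le_V _ _ _ _ _ _ _ hs

lemma Vr_mono {n : ℕ} {Ω : Set (Cn n)} {p0 : Cn n} {R : ℝ} (hΩ : StarBall Ω p0 R)
    {u : Cn n → EReal} (hu : IsPSHOn Ω u) {ε ε' : ℝ} (hε : 0 < ε) (hεε : ε ≤ ε') (hε1 : ε' ≤ 1)
    {z : Cn n} (hz : z ∈ Ω) : Vr p0 R u ε z ≤ Vr p0 R u ε' z := by
  rw [← EReal.coe_le_coe_iff, Vr_coe hΩ hu hε (hεε.trans hε1) hz, Vr_coe hΩ hu (hε.trans_le hεε) hε1 hz]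
  refine V_le fun t w hs => ?_
  exact le_V _ _ _ _ _ _ _ ⟨hs.1, hs.2.1.trans hεε, hs.2.2⟩

lemma Vr_ge {n : ℕ} {Ω : Set (Cn n)} {p0 : Cn n} {R : ℝ} (hΩ : StarBall Ω p0 R)
    {u : Cn n → EReal} (hu : IsPSHOn Ω u) {ε : ℝ} (hε : 0 < ε) (hε1 : ε ≤ 1)
    {z : Cn n} (hz : z ∈ Ω) : u z ≤ Vr p0 R u ε z := by
  rw [Vr_coe hΩ hu hε hε1 hz]
  have := le_V p0 R u ε z 0 0 ⟨le_rfl, hε.le, by simp⟩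
  simpa [G] using this

lemma Vr_lim {n : ℕ} {Ω : Set (Cn n)} {p0 : Cn n} {R : ℝ} (hΩ : StarBall Ω p0 R)
    {u : Cn n → EReal} (hu : IsPSHOn Ω u)
    {z : Cn n} (hz : z ∈ Ω) (c : ℝ) (hc : u z < c) :
    ∃ δ > 0, ∀ ε, 0 < ε → ε ≤ δ → ε ≤ 1 → Vr p0 R u ε z ≤ c := by
  have h2 := psh_usc_ev hu hΩ.2.1 hz hc
  have hcont : Continuous (fun x : ℝ × Cn n => G p0 x.1 x.2 z) := by
    unfold G; fun_prop
  have h3 : Tendsto (fun x : ℝ × Cn n => G p0 x.1 x.2 z) (𝓝 (0, 0)) (𝓝 z) := by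
    simpa [G] using hcont.tendsto (0, 0)
  obtain ⟨r, hr, hr2⟩ := Metric.eventually_nhds_iff.1 (h3.eventually h2)
  have hR := hΩ.1
  refine ⟨r / (2 * (1 + R)), by positivity, fun ε hε hεδ hε1 => ?_⟩
  rw [← EReal.coe_le_coe_iff, Vr_coe hΩ hu hε hε1 hz]
  refine V_le ?_
  rintro t w ⟨h4, h5, h6⟩
  simp only at h4 h5 h6
  refine (hr2 (y := (t, w)) ?_).1.le
  rw [le_div_iff₀ (by positivity)] at hεδ
  rw [Prod.dist_eq, max_lt_iff]
  simp only [dist_zero_right, Real.norm_eq_abs, abs_of_nonneg h4]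
  constructor <;> nlinarith

section smoothing

variable {n : ℕ}

/-- the smoothed function -/
def Tav (p0 : Cn n) (t : ℝ) (χ : ContDiffBump (0 : Cn n)) (v : Cn n → ℝ) (z : Cn n) : ℝ :=
  ∫ w, χ.normed volume w * v (G p0 t (-w) z)

lemma chi_zero (χ : ContDiffBump (0 : Cn n)) {w : Cn n} (hw : χ.rOut ≤ ‖w‖) :
    χ.normed volume w = 0 := by
  have : w ∉ Function.support (χ.normed volume) := by
    rw [χ.support_normed_eq, mem_ball_zero_iff]
    exact not_lt.2 hw
  simpa using this

lemma Fcont {X : Type*} [TopologicalSpace X] {Ω : Set (Cn n)} {p0 : Cn n} {R : ℝ}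
    (hΩ : StarBall Ω p0 R) {v : Cn n → ℝ} (hv : ContinuousOn v Ω) {t : ℝ} (ht0 : 0 < t) (ht1 : t ≤ 1)
    (χ : ContDiffBump (0 : Cn n)) (hχ : χ.rOut = t * R / 2) (ζ : X → Cn n) (hζ : Continuous ζ)
    (hζΩ : ∀ x, ζ x ∈ Ω) :
    Continuous (fun y : X × Cn n => χ.normed volume y.2 * v (G p0 t (-y.2) (ζ y.1))) := by
  have hR := hΩ.1
  rw [continuous_iff_continuousAt]
  rintro ⟨x, w⟩
  by_cases hw : ‖w‖ ≤ t * R / 2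
  · have hG : G p0 t (-w) (ζ x) ∈ Ω := hΩ.2.2.2 _ (hζΩ x) t ht0.le ht1 _ (by
      rw [norm_neg]; have : 0 < t * R := by positivity
      linarith)
    have h1 : ContinuousAt v (G p0 t (-w) (ζ x)) := hv.continuousAt (hΩ.2.1.mem_nhds hG)
    have h2 : Continuous (fun y : X × Cn n => G p0 t (-y.2) (ζ y.1)) := by
      unfold G; fun_prop
    have h3 : ContinuousAt (fun y : X × Cn n => v (G p0 t (-y.2) (ζ y.1))) (x, w) :=
      ContinuousAt.comp (f := fun y : X × Cn n => G p0 t (-y.2) (ζ y.1)) (g := v) h1 h2.continuousAt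
    have h4 : Continuous (fun y : X × Cn n => χ.normed volume y.2) :=
      χ.continuous_normed.comp continuous_snd
    exact h4.continuousAt.mul h3
  · push Not at hw
    have hev : ∀ᶠ y : X × Cn n in 𝓝 (x, w), χ.rOut < ‖y.2‖ := by
      have : ContinuousAt (fun y : X × Cn n => ‖y.2‖) (x, w) := by fun_prop
      exact continuousAt_const.eventually_lt this (by simpa [hχ] using hw)
    refine (continuousAt_const (y := (0:ℝ))).congr ?_
    filter_upwards [hev] with y hy
    rw [chi_zero χ hy.le, zero_mul]

lemma Fint1 {Ω : Set (Cn n)} {p0 : Cn n} {R : ℝ}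
    (hΩ : StarBall Ω p0 R) {v : Cn n → ℝ} (hv : ContinuousOn v Ω) {t : ℝ} (ht0 : 0 < t) (ht1 : t ≤ 1)
    (χ : ContDiffBump (0 : Cn n)) (hχ : χ.rOut = t * R / 2) {z : Cn n} (hz : z ∈ Ω) :
    Integrable (fun w : Cn n => χ.normed volume w * v (G p0 t (-w) z)) := by
  have h1 := Fcont hΩ hv ht0 ht1 χ hχ (fun _ : Unit => z) continuous_const (fun _ => hz)
  have h2 : Continuous (fun w : Cn n => χ.normed volume w * v (G p0 t (-w) z)) :=
    Continuous.comp (f := fun w : Cn n => ((), w)) h1 (continuous_const.prodMk continuous_id)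
  exact h2.integrable_of_hasCompactSupport (χ.hasCompactSupport_normed.mul_right)

lemma Tav_smooth {Ω : Set (Cn n)} {p0 : Cn n} {R : ℝ}
    (hΩ : StarBall Ω p0 R) {v : Cn n → ℝ} (hv : ContinuousOn v Ω) {t : ℝ} (ht0 : 0 < t) (ht1 : t ≤ 1)
    (χ : ContDiffBump (0 : Cn n)) (hχ : χ.rOut = t * R / 2) :
    ContDiffOn ℝ (⊤ : ℕ∞) (Tav p0 t χ v) Ω := by
  intro z0 hz0
  apply ContDiffAt.contDiffWithinAt
  have hR := hΩ.1
  set c : Cn n → Cn n := fun z => z + t • (p0 - z) with hc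
  have hcs : ContDiff ℝ (⊤ : ℕ∞) c := by
    rw [hc]; fun_prop
  set B := closedBall (c z0) (t * R) with hB
  have hBΩ : B ⊆ Ω := by
    intro x hx
    rw [hB, mem_closedBall, dist_eq_norm] at hx
    have := hΩ.2.2.2 z0 hz0 t ht0.le ht1 (x - c z0) hx
    convert this using 1
    simp only [G, hc]
    abel
  set g : Cn n → ℝ := B.indicator v with hg
  have hgint : Integrable g := by
    rw [hg, integrable_indicator_iff isClosed_closedBall.measurableSet]
    exact (hv.mono hBΩ).integrableOn_compact (isCompact_closedBall _ _)
  have hconv : ContDiff ℝ (⊤ : ℕ∞)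
      (convolution (χ.normed volume) g (ContinuousLinearMap.lsmul ℝ ℝ) volume) :=
    HasCompactSupport.contDiff_convolution_left _ χ.hasCompactSupport_normed χ.contDiff_normed
      hgint.locallyIntegrable
  have hcomp := (hconv.comp hcs).contDiffAt (x := z0)
  refine hcomp.congr_of_eventuallyEq ?_
  have hev : ∀ᶠ z in 𝓝 z0, dist (c z) (c z0) < t * R / 2 := by
    have : ContinuousAt c z0 := hcs.continuous.continuousAt
    exact this.eventually (ball_mem_nhds _ (by positivity))
  filter_upwards [hev] with z hz
  simp only [Tav, Function.comp, convolution]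
  congr 1
  ext w
  by_cases hw : χ.rOut ≤ ‖w‖
  · rw [chi_zero χ hw]; simp
  · push Not at hw
    have hmem : c z - w ∈ B := by
      rw [hB, mem_closedBall]
      have h1 : dist (c z - w) (c z) = ‖w‖ := by
        rw [dist_eq_norm]; simp
      have := dist_triangle (c z - w) (c z) (c z0)
      linarith
    rw [hg, Set.indicator_of_mem hmem]
    simp only [ContinuousLinearMap.lsmul_apply, smul_eq_mul, G, hc]
    rw [← sub_eq_add_neg (z + t • (p0 - z)) w]

lemma Tav_sub {Ω : Set (Cn n)} {p0 : Cn n} {R : ℝ}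
    (hΩ : StarBall Ω p0 R) {v : Cn n → ℝ} (hv : RPSH Ω v) {t : ℝ} (ht0 : 0 < t) (ht1 : t ≤ 1)
    (χ : ContDiffBump (0 : Cn n)) (hχ : χ.rOut = t * R / 2) :
    RPSH Ω (Tav p0 t χ v) := by
  have hR := hΩ.1
  refine ⟨(Tav_smooth hΩ hv.1 ht0 ht1 χ hχ).continuousOn, fun a b hab => ?_⟩
  have haΩ : a ∈ Ω := by simpa using hab 0 (by simp)
  set ζ : ℝ → Cn n := fun θ => a + Complex.exp ((θ : ℂ) * Complex.I) • b with hζ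
  have hF := Fcont hΩ hv.1 ht0 ht1 χ hχ ζ (circ_cont a b) (circ_mem hab)
  set F : ℝ × Cn n → ℝ := fun y => χ.normed volume y.2 * v (G p0 t (-y.2) (ζ y.1)) with hFdef
  have hpi : (0:ℝ) ≤ 2 * π := by positivity
  have hFint : Integrable F ((volume.restrict (Set.Ioc 0 (2 * π))).prod volume) := by
    have h1 : IntegrableOn F (Set.Icc 0 (2 * π) ×ˢ closedBall 0 χ.rOut) (volume.prod volume) :=
      hF.continuousOn.integrableOn_compact (isCompact_Icc.prod (isCompact_closedBall _ _))
    have h2 : IntegrableOn F (Set.Ioc 0 (2 * π) ×ˢ Set.univ) (volume.prod volume) := by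
      refine h1.of_forall_sdiff_eq_zero (measurableSet_Ioc.prod MeasurableSet.univ) ?_
      rintro ⟨θ, w⟩ ⟨⟨hθ, _⟩, hn⟩
      have : χ.rOut ≤ ‖w‖ := by
        by_contra! hlt
        exact hn ⟨Set.Ioc_subset_Icc_self hθ, by simpa using hlt.le⟩
      simp only [hFdef]
      rw [chi_zero χ this, zero_mul]
    rwa [IntegrableOn, ← Measure.prod_restrict, Measure.restrict_univ] at h2
  have hswap : (∫ θ in (0:ℝ)..(2 * π), Tav p0 t χ v (ζ θ)) =
      ∫ w, ∫ θ in Set.Ioc 0 (2 * π), F (θ, w) := by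
    rw [intervalIntegral.integral_of_le hpi]
    exact integral_integral_swap (f := fun θ w => F (θ, w)) hFint
  rw [hswap, ← integral_const_mul]
  unfold Tav
  refine integral_mono (Fint1 hΩ hv.1 ht0 ht1 χ hχ haΩ) (hFint.integral_prod_right.const_mul _) ?_
  intro w
  simp only
  by_cases hw : χ.rOut ≤ ‖w‖
  · simp only [hFdef, chi_zero χ hw]; simp
  · push Not at hw
    have h1 := hv.2 (G p0 t (-w) a) ((1 - t) • b) (by
      intro l hl
      rw [← G_circ]
      refine hΩ.2.2.2 _ (hab l hl) t ht0.le ht1 _ ?_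
      rw [norm_neg]
      have : 0 < t * R := by positivity
      linarith)
    have h2 := mul_le_mul_of_nonneg_left h1 (χ.nonneg_normed (μ := volume) w)
    refine h2.trans (le_of_eq ?_)
    rw [intervalIntegral.integral_of_le hpi, mul_left_comm, ← integral_const_mul]
    simp only [hFdef, hζ, G_circ]

lemma Tav_close {Ω : Set (Cn n)} {p0 : Cn n} {R : ℝ}
    (hΩ : StarBall Ω p0 R) {v : Cn n → ℝ} (hv : ContinuousOn v Ω) {t : ℝ} (ht0 : 0 < t) (ht1 : t ≤ 1)
    (χ : ContDiffBump (0 : Cn n)) (hχ : χ.rOut = t * R / 2) {z : Cn n} (hz : z ∈ Ω) {η : ℝ}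
    (h : ∀ w, ‖w‖ < t * R / 2 → |v (G p0 t w z) - v z| ≤ η) : |Tav p0 t χ v z - v z| ≤ η := by
  have hi := Fint1 hΩ hv ht0 ht1 χ hχ hz
  have hχi : Integrable (χ.normed (volume : Measure (Cn n))) := χ.integrable_normed
  have e1 : Tav p0 t χ v z - v z =
      ∫ w, (χ.normed volume w * v (G p0 t (-w) z) - χ.normed volume w * v z) := by
    rw [integral_sub hi (hχi.mul_const _), integral_mul_const, χ.integral_normed, one_mul, Tav]
  rw [e1, ← Real.norm_eq_abs]
  have e2 : η = ∫ w, χ.normed (volume : Measure (Cn n)) w * η := by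
    rw [integral_mul_const, χ.integral_normed, one_mul]
  rw [e2]
  refine norm_integral_le_of_norm_le (hχi.mul_const _) (Eventually.of_forall fun w => ?_)
  by_cases hw : χ.rOut ≤ ‖w‖
  · rw [chi_zero χ hw]; simp
  · push Not at hw
    rw [← mul_sub, norm_mul, Real.norm_eq_abs, Real.norm_eq_abs,
      abs_of_nonneg (χ.nonneg_normed (μ := volume) w)]
    exact mul_le_mul_of_nonneg_left (h (-w) (by rw [norm_neg]; linarith))
      (χ.nonneg_normed (μ := volume) w)

lemma exists_smooth {Ω : Set (Cn n)} {p0 : Cn n} {R : ℝ}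
    (hΩ : StarBall Ω p0 R) {v : Cn n → ℝ} (hv : RPSH Ω v) {K : Set (Cn n)} (hK : IsCompact K)
    (hKΩ : K ⊆ Ω) {η : ℝ} (hη : 0 < η) :
    ∃ T : Cn n → ℝ, ContDiffOn ℝ (⊤ : ℕ∞) T Ω ∧ RPSH Ω T ∧ ∀ z ∈ K, |T z - v z| ≤ η := by
  have hR := hΩ.1
  have hev : ∀ᶠ s : ℝ × Cn n in 𝓝 (0, 0), ∀ z ∈ K, |v (G p0 s.1 s.2 z) - v z| < η := by
    apply hK.eventually_forall_of_forall_eventually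
    intro z hz
    have hvz : ContinuousAt v z := hv.1.continuousAt (hΩ.2.1.mem_nhds (hKΩ hz))
    have hGz : G p0 (0:ℝ) 0 z = z := by simp [G]
    have h1 : ContinuousAt (fun x : (ℝ × Cn n) × Cn n => v (G p0 x.1.1 x.1.2 x.2)) ((0, 0), z) :=
      ContinuousAt.comp (f := fun x : (ℝ × Cn n) × Cn n => G p0 x.1.1 x.1.2 x.2) (g := v)
        (by simpa only [hGz] using hvz) (G_cont p0).continuousAt
    have h2 : ContinuousAt (fun x : (ℝ × Cn n) × Cn n => v x.2) ((0, 0), z) :=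
      ContinuousAt.comp (f := fun x : (ℝ × Cn n) × Cn n => x.2) (g := v) hvz
        continuous_snd.continuousAt
    have h3 := (h1.sub h2).abs
    exact h3.eventually_lt continuousAt_const (by simpa [hGz] using hη)
  obtain ⟨δ, hδ, hδ2⟩ := Metric.eventually_nhds_iff.1 hev
  set t := min 1 (δ / (2 * (1 + R))) with ht
  have ht0 : 0 < t := lt_min one_pos (by positivity)
  have ht1 : t ≤ 1 := min_le_left _ _
  have ht2 : t * (2 * (1 + R)) ≤ δ := by
    rw [← le_div_iff₀ (by positivity)]
    exact min_le_right _ _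
  have htR : 0 < t * R := by positivity
  let χ : ContDiffBump (0 : Cn n) := ⟨t * R / 4, t * R / 2, by positivity, by linarith⟩
  refine ⟨Tav p0 t χ v, Tav_smooth hΩ hv.1 ht0 ht1 χ rfl, Tav_sub hΩ hv ht0 ht1 χ rfl, ?_⟩
  intro z hz
  refine Tav_close hΩ hv.1 ht0 ht1 χ rfl (hKΩ hz) fun w hw => ?_
  refine (hδ2 (y := (t, w)) ?_ z hz).le
  rw [Prod.dist_eq, max_lt_iff]
  simp only [dist_zero_right, Real.norm_eq_abs, abs_of_pos ht0]
  constructor <;> nlinarith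

end smoothing

/-- A smooth convex function vanishing on the negative axis. -/
def g0 (x : ℝ) : ℝ := ∫ y in (0:ℝ)..x, Real.smoothTransition y

lemma g0_deriv (x : ℝ) : HasDerivAt g0 (Real.smoothTransition x) x :=
  intervalIntegral.integral_hasDerivAt_right
    (Real.smoothTransition.continuous.intervalIntegrable _ _)
    Real.smoothTransition.continuous.stronglyMeasurable.stronglyMeasurableAtFilter
    Real.smoothTransition.continuous.continuousAt

lemma g0_smooth : ContDiff ℝ (⊤ : ℕ∞) g0 := by
  rw [contDiff_infty_iff_deriv]
  refine ⟨fun x => (g0_deriv x).differentiableAt, ?_⟩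
  have : deriv g0 = Real.smoothTransition := funext fun x => (g0_deriv x).deriv
  rw [this]
  exact Real.smoothTransition.contDiff

lemma g0_tangent (x y : ℝ) : g0 x + Real.smoothTransition x * (y - x) ≤ g0 y := by
  have hi : ∀ a b, IntervalIntegrable Real.smoothTransition volume a b := fun a b =>
    Real.smoothTransition.continuous.intervalIntegrable _ _
  have h : g0 y - g0 x = ∫ t in x..y, Real.smoothTransition t :=
    intervalIntegral.integral_interval_sub_left (hi _ _) (hi _ _)
  rcases le_total x y with hxy | hxy
  · have := intervalIntegral.integral_mono_on hxy (f := fun _ => Real.smoothTransition x)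
      (intervalIntegrable_const) (hi x y) (fun t ht => Real.smoothTransition.monotone ht.1)
    simp at this
    linarith
  · have := intervalIntegral.integral_mono_on hxy (g := fun _ => Real.smoothTransition x)
      (hi y x) (intervalIntegrable_const) (fun t ht => Real.smoothTransition.monotone ht.2)
    rw [intervalIntegral.integral_symm] at h
    simp at this
    linarith

lemma g0_zero {x : ℝ} (hx : x ≤ 0) : g0 x = 0 := by
  have h1 := g0_tangent x 0
  have h2 := g0_tangent 0 x
  rw [Real.smoothTransition.zero_of_nonpos hx] at h1
  have : g0 0 = 0 := by simp [g0]
  simp [this] at h1 h2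
  linarith

lemma g0_ge (x : ℝ) : x - 1 ≤ g0 x := by
  have h1 := g0_tangent 1 x
  have h2 := g0_tangent 0 1
  have : g0 0 = 0 := by simp [g0]
  simp [this] at h1 h2
  linarith

/-- Regularised maximum. -/
def smax (δ a b : ℝ) : ℝ := a + δ * g0 ((b - a) / δ + 1)

lemma smax_eq {δ a b : ℝ} (hδ : 0 < δ) (h : b ≤ a - δ) : smax δ a b = a := by
  have : (b - a) / δ + 1 ≤ 0 := by
    have : (b - a) / δ ≤ -1 := by rw [div_le_iff₀ hδ]; linarith
    linarith
  rw [smax, g0_zero this]; ring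

lemma smax_ge {δ a b : ℝ} (hδ : 0 < δ) : b ≤ smax δ a b := by
  have h := mul_le_mul_of_nonneg_left (g0_ge ((b - a) / δ + 1)) hδ.le
  have : δ * ((b - a) / δ + 1 - 1) = b - a := by field_simp; ring
  unfold smax
  linarith

lemma smax_tangent {δ : ℝ} (hδ : 0 < δ) (a0 b0 : ℝ) : ∃ q : ℝ, 0 ≤ q ∧ q ≤ 1 ∧ ∀ a b,
    smax δ a0 b0 + (1 - q) * (a - a0) + q * (b - b0) ≤ smax δ a b := by
  refine ⟨Real.smoothTransition ((b0 - a0) / δ + 1), Real.smoothTransition.nonneg _,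
    Real.smoothTransition.le_one _, fun a b => ?_⟩
  have h := mul_le_mul_of_nonneg_left (g0_tangent ((b0 - a0) / δ + 1) ((b - a) / δ + 1)) hδ.le
  set q := Real.smoothTransition ((b0 - a0) / δ + 1)
  have : δ * (g0 ((b0 - a0) / δ + 1) + q * ((b - a) / δ + 1 - ((b0 - a0) / δ + 1))) =
    δ * g0 ((b0 - a0) / δ + 1) + q * ((b - a) - (b0 - a0)) := by field_simp; ring
  rw [this] at h
  unfold smax
  linarith

lemma smax_smooth (δ : ℝ) {n : ℕ} {Ω : Set (Cn n)} {f g : Cn n → ℝ}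
    (hf : ContDiffOn ℝ (⊤ : ℕ∞) f Ω) (hg : ContDiffOn ℝ (⊤ : ℕ∞) g Ω) :
    ContDiffOn ℝ (⊤ : ℕ∞) (fun z => smax δ (f z) (g z)) Ω := by
  unfold smax
  refine hf.add (contDiffOn_const.mul (g0_smooth.comp_contDiffOn ?_))
  exact ((hg.sub hf).div_const _).add contDiffOn_const

lemma smax_RPSH {δ : ℝ} (hδ : 0 < δ) {n : ℕ} {Ω : Set (Cn n)} {f g : Cn n → ℝ}
    (hf : RPSH Ω f) (hg : RPSH Ω g) : RPSH Ω (fun z => smax δ (f z) (g z)) := by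
  have hc : ContinuousOn (fun z => smax δ (f z) (g z)) Ω := by
    unfold smax
    exact hf.1.add (continuousOn_const.mul (g0_smooth.continuous.comp_continuousOn
      (((hg.1.sub hf.1).div_const _).add continuousOn_const)))
  refine ⟨hc, fun a b hab => ?_⟩
  obtain ⟨q, hq0, hq1, hq⟩ := smax_tangent hδ (f a) (g a)
  have hfi := (cont_circ hf.1 hab).intervalIntegrable (μ := volume) 0 (2 * π)
  have hgi := (cont_circ hg.1 hab).intervalIntegrable (μ := volume) 0 (2 * π)
  have hsi := (cont_circ hc hab).intervalIntegrable (μ := volume) 0 (2 * π)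
  have h1 := hf.2 a b hab
  have h2 := hg.2 a b hab
  have hpi : (0:ℝ) < 2 * π := by positivity
  have hm := intervalIntegral.integral_mono_on (f := fun θ : ℝ => (smax δ (f a) (g a)
      - (1 - q) * f a - q * g a) + ((1 - q) * f (a + Complex.exp ((θ : ℂ) * Complex.I) • b)
      + q * g (a + Complex.exp ((θ : ℂ) * Complex.I) • b))) hpi.le
      (intervalIntegrable_const.add ((hfi.const_mul _).add (hgi.const_mul _))) hsi
      (fun θ _ => by
        have := hq (f (a + Complex.exp ((θ : ℂ) * Complex.I) • b))
          (g (a + Complex.exp ((θ : ℂ) * Complex.I) • b))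
        linarith)
  rw [intervalIntegral.integral_add intervalIntegrable_const
    ((hfi.const_mul _).add (hgi.const_mul _)),
    intervalIntegral.integral_add (hfi.const_mul _) (hgi.const_mul _),
    intervalIntegral.integral_const_mul, intervalIntegral.integral_const_mul,
    intervalIntegral.integral_const] at hm
  simp only [sub_zero, smul_eq_mul] at hm
  have h3 := mul_le_mul_of_nonneg_left hm (inv_nonneg.2 hpi.le)
  refine le_trans ?_ h3
  set I := ∫ θ in (0:ℝ)..(2 * π), f (a + Complex.exp ((θ : ℂ) * Complex.I) • b)
  set J := ∫ θ in (0:ℝ)..(2 * π), g (a + Complex.exp ((θ : ℂ) * Complex.I) • b)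
  have e : (2 * π)⁻¹ * (2 * π * (smax δ (f a) (g a) - (1 - q) * f a - q * g a)
      + ((1 - q) * I + q * J)) = smax δ (f a) (g a) + (1 - q) * ((2 * π)⁻¹ * I - f a)
      + q * ((2 * π)⁻¹ * J - g a) := by
    field_simp; ring
  rw [e]
  have := mul_nonneg (sub_nonneg.2 hq1) (sub_nonneg.2 h1)
  have := mul_nonneg hq0 (sub_nonneg.2 h2)
  linarith

lemma RPSH.add_const {n : ℕ} {Ω : Set (Cn n)} {f : Cn n → ℝ}
    (hf : RPSH Ω f) (c : ℝ) : RPSH Ω (fun z => f z + c) := by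
  refine ⟨hf.1.add continuousOn_const, fun a b hab => ?_⟩
  have hfi := (cont_circ hf.1 hab).intervalIntegrable (μ := volume) 0 (2 * π)
  rw [intervalIntegral.integral_add hfi intervalIntegrable_const, intervalIntegral.integral_const]
  have h1 := hf.2 a b hab
  have hpi : (0:ℝ) < 2 * π := by positivity
  simp only [sub_zero, smul_eq_mul]
  rw [mul_add, inv_mul_cancel_left₀ hpi.ne']
  linarith

lemma exhaustion {n : ℕ} {Ω : Set (Cn n)} (hΩ : IsOpen Ω) : ∃ K : ℕ → Set (Cn n),
    Monotone K ∧ (∀ i, IsCompact (K i)) ∧ (∀ i, K i ⊆ Ω) ∧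
    ∀ C, IsCompact C → C ⊆ Ω → ∃ i, C ⊆ K i := by
  have : LocallyCompactSpace Ω := hΩ.locallyCompactSpace
  let E := CompactExhaustion.choice Ω
  refine ⟨fun i => Subtype.val '' E i, fun i j h => Set.image_mono (E.subset h),
    fun i => (E.isCompact i).image continuous_subtype_val, fun i => ?_, fun C hC hCΩ => ?_⟩
  · rintro _ ⟨x, _, rfl⟩; exact x.2
  · have hC2 : IsCompact ((Subtype.val : Ω → Cn n) ⁻¹' C) := by
      rw [Subtype.isCompact_iff, Subtype.image_preimage_coe, Set.inter_eq_self_of_subset_right hCΩ]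
      exact hC
    obtain ⟨i, hi⟩ := E.exists_superset_of_isCompact hC2
    exact ⟨i, fun x hx => ⟨⟨x, hCΩ hx⟩, hi hx, rfl⟩⟩

/-- Iterated regularised maxima. -/
def Wg {n : ℕ} (δ : ℕ → ℝ) (T : ℕ → Cn n → ℝ) : ℕ → ℕ → Cn n → ℝ
  | 0, m => T m
  | (k+1), m => fun z => smax (δ m) (T m z) (Wg δ T k (m+1) z)

lemma glue {n : ℕ} {Ω : Set (Cn n)} (hΩ : IsOpen Ω) {K : ℕ → Set (Cn n)} (hKm : Monotone K)
    (hKex : ∀ C, IsCompact C → C ⊆ Ω → ∃ i, C ⊆ K i) {δ : ℕ → ℝ} (hδ : ∀ m, 0 < δ m)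
    {T : ℕ → Cn n → ℝ} (hTs : ∀ m, ContDiffOn ℝ (⊤ : ℕ∞) (T m) Ω) (hTp : ∀ m, RPSH Ω (T m))
    (hT : ∀ m, ∀ z ∈ K m, T (m+1) z ≤ T m z - δ m) :
    ∃ v : ℕ → Cn n → ℝ, (∀ m, ContDiffOn ℝ (⊤ : ℕ∞) (v m) Ω) ∧ (∀ m, RPSH Ω (v m)) ∧
      (∀ m, ∀ z ∈ Ω, v (m+1) z ≤ v m z) ∧ (∀ m, ∀ z ∈ K m, z ∈ Ω → v m z = T m z) := by
  classical
  set W := Wg δ T with hW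
  have hWs : ∀ k m, ContDiffOn ℝ (⊤ : ℕ∞) (W k m) Ω := by
    intro k
    induction k with
    | zero => exact hTs
    | succ k ih => intro m; exact smax_smooth _ (hTs m) (ih (m+1))
  have hWp : ∀ k m, RPSH Ω (W k m) := by
    intro k
    induction k with
    | zero => exact hTp
    | succ k ih => intro m; exact smax_RPSH (hδ m) (hTp m) (ih (m+1))
  have hst : ∀ k m, ∀ z ∈ K (m+k), W (k+1) m z = W k m z := by
    intro k
    induction k with
    | zero => intro m z hz; exact smax_eq (hδ m) (hT m z hz)
    | succ k ih =>
      intro m z hz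
      change smax (δ m) (T m z) (W (k+1) (m+1) z) = smax (δ m) (T m z) (W k (m+1) z)
      rw [ih (m+1) z (by rwa [add_assoc, add_comm 1 k])]
  have hst2 : ∀ i j m z, z ∈ K (m + i) → i ≤ j → W j m z = W i m z := by
    intro i j m z hz hij
    induction j, hij using Nat.le_induction with
    | base => rfl
    | succ j hj ih => rw [hst j m z (hKm (by omega) hz), ih]
  have hex : ∀ z ∈ Ω, ∃ i, z ∈ K i := fun z hz => by
    obtain ⟨i, hi⟩ := hKex {z} isCompact_singleton (by simpa using hz)
    exact ⟨i, hi rfl⟩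
  let v : ℕ → Cn n → ℝ := fun m z => if h : ∃ i, z ∈ K i then W (Nat.find h) m z else 0
  have hv : ∀ i m z, z ∈ K i → v m z = W i m z := by
    intro i m z hz
    have h : ∃ i, z ∈ K i := ⟨i, hz⟩
    simp only [v, dif_pos h]
    exact (hst2 _ _ m z (hKm (by omega) (Nat.find_spec h)) (Nat.find_min' h hz)).symm
  have hnb : ∀ z ∈ Ω, ∃ i, K i ∈ 𝓝 z := by
    intro z hz
    obtain ⟨C, hC, hCz, hCΩ⟩ := exists_compact_subset hΩ hz
    obtain ⟨i, hi⟩ := hKex C hC hCΩ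
    exact ⟨i, mem_of_superset (mem_interior_iff_mem_nhds.1 hCz) hi⟩
  have hvs : ∀ m, ContDiffOn ℝ (⊤ : ℕ∞) (v m) Ω := by
    intro m z hz
    obtain ⟨i, hi⟩ := hnb z hz
    refine ContDiffAt.contDiffWithinAt ?_
    refine (((hWs i m).contDiffAt (hΩ.mem_nhds hz))).congr_of_eventuallyEq ?_
    filter_upwards [hi] with y hy using hv i m y hy
  refine ⟨v, hvs, ?_, ?_, ?_⟩
  · intro m
    refine ⟨(hvs m).continuousOn, fun a b hab => ?_⟩
    obtain ⟨i, hi⟩ := hKex _ (disc_compact a b) (by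
      rintro _ ⟨l, hl, rfl⟩
      exact hab l (by simpa using hl))
    have hmem : ∀ l : ℂ, ‖l‖ ≤ 1 → a + l • b ∈ K i := fun l hl => hi ⟨l, by simpa using hl, rfl⟩
    have ha : a ∈ K i := by simpa using hmem 0 (by simp)
    have := (hWp i m).2 a b hab
    rw [hv i m a ha]
    refine this.trans (le_of_eq ?_)
    congr 2
    funext θ
    rw [hv i m _ (circ_mem hmem θ)]
  · intro m z hz
    obtain ⟨i, hi⟩ := hex z hz
    rw [hv i (m+1) z hi, hv (i+1) m z (hKm (Nat.le_succ i) hi)]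
    exact smax_ge (hδ m)
  · intro m z hz hzΩ
    rw [hv m m z hz]
    exact hst2 0 m m z hz (Nat.zero_le _)

theorem StarBall.isSDomain {n : ℕ} {Ω : Set (Cn n)} {p0 : Cn n} {R : ℝ} (hΩ : StarBall Ω p0 R) :
    IsSDomain Ω := by
  refine ⟨hΩ.2.1, hΩ.isPreconnected, fun u hu => ?_⟩
  obtain ⟨K, hKm, hKc, hKΩ, hKex⟩ := exhaustion hΩ.2.1
  let ε : ℕ → ℝ := fun m => 1 / ((m:ℝ) + 1)
  have hε : ∀ m, 0 < ε m := fun m => by positivity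
  have hε1 : ∀ m, ε m ≤ 1 := fun m => by
    simp only [ε]; rw [div_le_one (by positivity)]; linarith [(Nat.cast_nonneg m : (0:ℝ) ≤ m)]
  have hεm : ∀ m, ε (m+1) ≤ ε m := fun m => one_div_le_one_div_of_le (by positivity) (by push_cast; linarith)
  let e : ℕ → ℝ := fun m => (1/2)^m
  have he : ∀ m, 0 < e m := fun m => by positivity
  have hes : ∀ m, e (m+1) = e m / 2 := fun m => by simp only [e, pow_succ]; ring
  have hT0 : ∀ m, ∃ T : Cn n → ℝ, ContDiffOn ℝ (⊤ : ℕ∞) T Ω ∧ RPSH Ω T ∧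
      ∀ z ∈ K m, |T z - Vr p0 R u (ε m) z| ≤ e m / 2 := fun m =>
    exists_smooth hΩ (Vr_RPSH hΩ hu (hε m) (hε1 m)) (hKc m) (hKΩ m) (half_pos (he m))
  choose T0 h1 h2 h3 using hT0
  obtain ⟨v, hv1, hv2, hv3, hv4⟩ := glue hΩ.2.1 hKm hKex (δ := fun m => e m / 2)
    (fun m => half_pos (he m)) (T := fun m z => T0 m z + 5/2 * e m)
    (fun m => (h1 m).add contDiffOn_const) (fun m => (h2 m).add_const _) (by
      intro m z hz
      have a1 := abs_le.1 (h3 m z hz)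
      have a2 := abs_le.1 (h3 (m+1) z (hKm (Nat.le_succ m) hz))
      have a3 := Vr_mono hΩ hu (hε (m+1)) (hεm m) (hε1 m) (hKΩ m hz)
      have := hes m
      linarith)
  refine ⟨v, hv1, fun k => (hv2 k).isPSHOn, hv3, fun z hz => ?_⟩
  obtain ⟨i, hi⟩ := hKex {z} isCompact_singleton (by simpa using hz)
  have hzi : z ∈ K i := hi rfl
  have hb : ∀ m, i ≤ m → Vr p0 R u (ε m) z ≤ v m z ∧ v m z ≤ Vr p0 R u (ε m) z + 3 * e m := by
    intro m hm
    rw [hv4 m z (hKm hm hzi) hz]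
    have a1 := abs_le.1 (h3 m z (hKm hm hzi))
    have := he m
    constructor <;> linarith
  rw [tendsto_order]
  constructor
  · intro a ha
    filter_upwards [eventually_ge_atTop i] with m hm
    refine ha.trans_le ((Vr_ge hΩ hu (hε m) (hε1 m) hz).trans ?_)
    exact EReal.coe_le_coe_iff.2 (hb m hm).1
  · intro a ha
    obtain ⟨c, hc1, hc2⟩ := EReal.lt_iff_exists_real_btwn.1 ha
    obtain ⟨d, hd1, hd2⟩ := EReal.lt_iff_exists_real_btwn.1 hc2
    have hcd : c < d := by exact_mod_cast hd1
    obtain ⟨δ, hδ, hδ2⟩ := Vr_lim hΩ hu hz c hc1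
    have t1 : ∀ᶠ m in atTop, ε m < δ :=
      (tendsto_one_div_add_atTop_nhds_zero_nat (𝕜 := ℝ)).eventually_lt_const hδ
    have t2 : ∀ᶠ m in atTop, e m < (d - c) / 3 :=
      (tendsto_pow_atTop_nhds_zero_of_lt_one (r := (1/2 : ℝ)) (by norm_num) (by norm_num)).eventually_lt_const
        (by linarith)
    filter_upwards [eventually_ge_atTop i, t1, t2] with m hm m1 m2
    refine lt_trans ?_ hd2
    rw [EReal.coe_lt_coe_iff]
    have := hδ2 (ε m) (hε m) m1.le (hε1 m)
    linarith [(hb m hm).2]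

section model

variable {X : Type*} [NormedAddCommGroup X] [InnerProductSpace ℝ X]

lemma fst_le (x : WithLp 2 (X × ℝ)) : ‖x.fst‖ ≤ ‖x‖ := WithLp.norm_fst_le _ x
lemma snd_le (x : WithLp 2 (X × ℝ)) : |x.snd| ≤ ‖x‖ := WithLp.norm_snd_le _ x

/-- The boundary of an open set, star-shaped with respect to a ball, is locally a graph. -/
lemma model_graph {S : Set (WithLp 2 (X × ℝ))} (hS : IsOpen S) {R l : ℝ} (hR : 0 < R)
    (hl : 0 < l)
    (hstar : ∀ z ∈ S, ∀ t : ℝ, 0 ≤ t → t ≤ 1 → ∀ w, ‖w‖ ≤ t * R → z + t • (0 - z) + w ∈ S)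
    {p : WithLp 2 (X × ℝ)} (hp1 : p.fst = 0) (hp2 : p.snd = l) (hp : p ∈ closure S) :
    ∃ (F : X → ℝ) (L : NNReal) (V : Set (WithLp 2 (X × ℝ))),
      LipschitzWith L F ∧ IsOpen V ∧ p ∈ V ∧ ∀ q ∈ V, (q ∈ S ↔ q.snd < F q.fst) := by
  set η := min (l / 3) (R / 3) with hη
  have hη0 : 0 < η := lt_min (by linarith) (by linarith)
  have hη1 : η ≤ l / 3 := min_le_left _ _
  have hη2 : η ≤ R / 3 := min_le_right _ _
  let L : NNReal := ⟨4 * l / R, by positivity⟩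
  have hL : (L : ℝ) = 4 * l / R := rfl
  have hL0 : (0:ℝ) < L := by rw [hL]; positivity
  have hLR : (L : ℝ) * R = 4 * l := by rw [hL]; field_simp
  let I := {s : WithLp 2 (X × ℝ) // s ∈ S ∧ s ∈ ball p η}
  have hI : Nonempty I := by
    obtain ⟨s, hs, hs2⟩ := Metric.mem_closure_iff.1 hp η hη0
    exact ⟨⟨s, hs, by rwa [mem_ball, dist_comm]⟩⟩
  have hball : ∀ s ∈ ball p η, ‖s.fst‖ < η ∧ l - η < s.snd ∧ s.snd < l + η := by
    intro s hs
    rw [mem_ball, dist_eq_norm] at hs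
    have h1 := fst_le (s - p)
    have h2 := snd_le (s - p)
    rw [WithLp.sub_fst, hp1, sub_zero] at h1
    rw [WithLp.sub_snd, hp2, abs_le] at h2
    refine ⟨by linarith, by linarith, by linarith⟩
  let F : X → ℝ := fun x => ⨆ s : I, (s.1.snd - L * ‖x - s.1.fst‖)
  have hbdd : ∀ x, BddAbove (Set.range fun s : I => (s.1.snd - L * ‖x - s.1.fst‖)) := by
    intro x
    refine ⟨l + η, ?_⟩
    rintro _ ⟨s, rfl⟩
    have := (hball s.1 s.2.2).2.2
    have : 0 ≤ (L : ℝ) * ‖x - s.1.fst‖ := by positivity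
    simp only
    linarith
  refine ⟨F, L, ball p η, ?_, isOpen_ball, mem_ball_self hη0, ?_⟩
  · refine LipschitzWith.of_le_add_mul L fun x y => ciSup_le fun s => ?_
    have h1 := le_ciSup (hbdd y) s
    have h2 : ‖y - s.1.fst‖ ≤ dist x y + ‖x - s.1.fst‖ := by
      rw [dist_comm, dist_eq_norm]
      exact norm_sub_le_norm_sub_add_norm_sub _ _ _
    have h3 := mul_le_mul_of_nonneg_left h2 hL0.le
    change _ ≤ (⨆ s : I, (s.1.snd - L * ‖y - s.1.fst‖)) + _
    linarith
  · intro q hq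
    constructor
    · intro hqS
      have hcont : Continuous (fun c : ℝ => q + c • (WithLp.toLp 2 ((0 : X), (1 : ℝ)))) := by fun_prop
      have hev : ∀ᶠ c in 𝓝 (0:ℝ), q + c • (WithLp.toLp 2 ((0 : X), (1 : ℝ))) ∈ S ∩ ball p η := by
        apply hcont.continuousAt.eventually_mem
        refine (hS.inter isOpen_ball).mem_nhds ?_
        simpa using ⟨hqS, hq⟩
      have hev2 : ∀ᶠ c in 𝓝[>] (0:ℝ), q + c • (WithLp.toLp 2 ((0 : X), (1 : ℝ))) ∈ S ∩ ball p η :=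
        hev.filter_mono nhdsWithin_le_nhds
      obtain ⟨c, hc, hc0⟩ := (hev2.and self_mem_nhdsWithin).exists
      have h1 := le_ciSup (hbdd q.fst) ⟨_, hc⟩
      have hc0' : (0:ℝ) < c := hc0
      simp at h1
      change _ < (⨆ s : I, (s.1.snd - L * ‖q.fst - s.1.fst‖))
      linarith
    · intro hlt
      obtain ⟨⟨z, hzS, hzb⟩, hz⟩ := exists_lt_of_lt_ciSup hlt
      simp only at hz
      obtain ⟨z1, z2, z3⟩ := hball z hzb
      obtain ⟨q1, q2, q3⟩ := hball q hq
      have hb : 0 < z.snd := by linarith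
      have hy : 0 < q.snd := by linarith
      have hn : 0 ≤ (L : ℝ) * ‖q.fst - z.fst‖ := by positivity
      set τ := (z.snd - q.snd) / z.snd with hτ
      have hτb : τ * z.snd = z.snd - q.snd := by rw [hτ]; field_simp
      have hτ0 : 0 < τ := div_pos (by linarith) hb
      have hτ1 : τ ≤ 1 := by rw [hτ, div_le_one hb]; linarith
      -- the displacement
      have hw2 : (q - z + τ • z).snd = 0 := by
        simp only [WithLp.add_snd, WithLp.sub_snd, WithLp.smul_snd, smul_eq_mul]
        linarith
      have hw1 : ‖(q - z + τ • z).fst‖ ≤ τ * R := by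
        simp only [WithLp.add_fst, WithLp.sub_fst, WithLp.smul_fst]
        refine (norm_add_le _ _).trans ?_
        rw [norm_smul, Real.norm_eq_abs, abs_of_pos hτ0]
        have a1 : (L:ℝ) * ‖q.fst - z.fst‖ ≤ τ * (4 * l / 3) := by
          have : τ * z.snd ≤ τ * (4 * l / 3) := mul_le_mul_of_nonneg_left (by linarith) hτ0.le
          linarith
        have a2 : τ * (4 * l / 3) = L * (τ * (R / 3)) := by
          have : (L:ℝ) * (τ * (R / 3)) = τ * (L * R) / 3 := by ring
          rw [this, hLR]; ring
        rw [a2] at a1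
        have a3 := le_of_mul_le_mul_left a1 hL0
        have a4 : τ * ‖z.fst‖ ≤ τ * (R / 3) := mul_le_mul_of_nonneg_left (by linarith) hτ0.le
        nlinarith
      have hw : ‖q - z + τ • z‖ ≤ τ * R := by
        refine le_trans (le_of_eq ?_) hw1
        have := WithLp.prod_norm_sq_eq_of_L2 (q - z + τ • z)
        rw [hw2] at this
        simp only [norm_zero, ne_eq, OfNat.ofNat_ne_zero, not_false_eq_true, zero_pow, add_zero] at this
        exact (sq_eq_sq₀ (norm_nonneg _) (norm_nonneg _)).1 this
      have := hstar z hzS τ hτ0.le hτ1 _ hw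
      convert this using 1
      module

/-- A domain below a Lipschitz graph, intersected with a small box, is star-shaped with
respect to a ball. -/
lemma model_star {S V : Set (WithLp 2 (X × ℝ))} {F : X → ℝ} {L : NNReal}
    (hF : LipschitzWith L F) (hV : IsOpen V) {c : WithLp 2 (X × ℝ)} (hcV : c ∈ V)
    (hgr : ∀ q ∈ V, (q ∈ S ↔ q.snd < F q.fst)) (hc : c ∈ closure S) :
    ∃ (B : Set (WithLp 2 (X × ℝ))) (p : WithLp 2 (X × ℝ)) (R : ℝ), 0 < R ∧ IsOpen B ∧ c ∈ B ∧
      p ∈ S ∩ B ∧ ∀ z ∈ S ∩ B, ∀ t : ℝ, 0 ≤ t → t ≤ 1 → ∀ w, ‖w‖ ≤ t * R →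
        z + t • (p - z) + w ∈ S ∩ B := by
  obtain ⟨δ, hδ, hδV⟩ := Metric.isOpen_iff.1 hV c hcV
  have hLn : (0:ℝ) ≤ L := L.2
  have hFl : ∀ x y, F x - L * ‖x - y‖ ≤ F y := by
    intro x y
    have := hF.le_add_mul x y
    rw [dist_eq_norm] at this
    linarith
  have hFc : c.snd ≤ F c.fst := by
    have hcl : IsClosed {q : WithLp 2 (X × ℝ) | q.snd ≤ F q.fst} :=
      isClosed_le (WithLp.continuous_snd 2 X ℝ) (hF.continuous.comp (WithLp.continuous_fst 2 X ℝ))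
    have h1 : c ∈ closure (V ∩ S) := hV.inter_closure ⟨hcV, hc⟩
    exact hcl.closure_subset_iff.2 (fun q hq => ((hgr q hq.1).1 hq.2).le) h1
  set r := δ / (1 + 8 * (L + 1)) with hr
  have hr0 : 0 < r := by positivity
  set H := 8 * (L + 1) * r with hH
  have hrH : r + H = δ := by rw [hH, hr]; field_simp
  have hH8 : 8 * r ≤ H := by rw [hH]; nlinarith
  have hHe : H = 8 * (L * r) + 8 * r := by rw [hH]; ring
  have hLr : 0 ≤ (L:ℝ) * r := by positivity
  let B : Set (WithLp 2 (X × ℝ)) := {q | ‖q.fst - c.fst‖ < r ∧ |q.snd - c.snd| < H}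
  have hfc : Continuous (fun q : WithLp 2 (X × ℝ) => q.fst) := WithLp.continuous_fst 2 X ℝ
  have hsc : Continuous (fun q : WithLp 2 (X × ℝ) => q.snd) := WithLp.continuous_snd 2 X ℝ
  have hB : IsOpen B :=
    (isOpen_lt (hfc.sub continuous_const).norm continuous_const).inter
      (isOpen_lt (hsc.sub continuous_const).abs continuous_const)
  have hBV : B ⊆ V := by
    intro q hq
    apply hδV
    rw [mem_ball, dist_eq_norm]
    have h1 := WithLp.prod_norm_sq_eq_of_L2 (q - c)
    rw [WithLp.sub_fst, WithLp.sub_snd, Real.norm_eq_abs] at h1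
    have h2 : ‖q - c‖ ≤ ‖q.fst - c.fst‖ + |q.snd - c.snd| := by
      apply le_of_sq_le_sq _ (by positivity)
      rw [h1]
      nlinarith [norm_nonneg (q.fst - c.fst), abs_nonneg (q.snd - c.snd)]
    linarith [hq.1, hq.2]
  let p : WithLp 2 (X × ℝ) := WithLp.toLp 2 (c.fst, c.snd - H / 2)
  have hp1 : p.fst = c.fst := rfl
  have hp2 : p.snd = c.snd - H / 2 := rfl
  have hpB : p ∈ B := by
    refine ⟨?_, ?_⟩
    · rw [hp1]; simpa using hr0
    · rw [hp2, abs_lt]; constructor <;> linarith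
  refine ⟨B, p, r / 2, by positivity, hB, ⟨by simpa using hr0, by simp; linarith⟩,
    ⟨(hgr p (hBV hpB)).2 (by rw [hp1, hp2]; linarith), hpB⟩, ?_⟩
  rintro z ⟨hzS, hzB⟩ t ht0 ht1 w hw
  rcases ht0.eq_or_lt with rfl | ht
  · have : w = 0 := by simpa using hw
    subst this
    simpa using ⟨hzS, hzB⟩
  have hzF := (hgr z (hBV hzB)).1 hzS
  obtain ⟨a, ha⟩ : ∃ a, a = p + t⁻¹ • w := ⟨_, rfl⟩
  have hap : ‖a - p‖ ≤ r / 2 := by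
    rw [ha, add_sub_cancel_left, norm_smul, norm_inv, Real.norm_eq_abs, abs_of_pos ht,
      inv_mul_le_iff₀ ht]
    exact hw
  have hz' : z + t • (p - z) + w = z + t • (a - z) := by
    have e : t • (a - z) = t • (p - z) + w := by
      rw [ha, add_sub_right_comm, smul_add, smul_inv_smul₀ ht.ne']
    rw [e, add_assoc]
  rw [hz']
  have a1 : ‖a.fst - c.fst‖ ≤ r / 2 := by
    have := fst_le (a - p)
    rw [WithLp.sub_fst, hp1] at this
    linarith
  have a2 : |a.snd - (c.snd - H / 2)| ≤ r / 2 := by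
    have := snd_le (a - p)
    rw [WithLp.sub_snd, hp2] at this
    linarith
  rw [abs_le] at a2
  obtain ⟨z1, z2⟩ := hzB
  rw [abs_lt] at z2
  set q := z + t • (a - z) with hq
  have q1 : q.fst = z.fst + t • (a.fst - z.fst) := rfl
  have q2 : q.snd = z.snd + t * (a.snd - z.snd) := rfl
  have q1c : ‖q.fst - c.fst‖ < r := by
    have e : q.fst - c.fst = (1 - t) • (z.fst - c.fst) + t • (a.fst - c.fst) := by
      rw [q1]; module
    rw [e]
    refine (norm_add_le _ _).trans_lt ?_
    rw [norm_smul, norm_smul, Real.norm_eq_abs, Real.norm_eq_abs, abs_of_pos ht,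
      abs_of_nonneg (sub_nonneg.2 ht1)]
    have b1 := mul_le_mul_of_nonneg_left z1.le (sub_nonneg.2 ht1)
    have b2 := mul_le_mul_of_nonneg_left a1 ht.le
    nlinarith
  have hqB : q ∈ B := by
    refine ⟨q1c, ?_⟩
    rw [q2, abs_lt]
    constructor <;> nlinarith
  refine ⟨(hgr q (hBV hqB)).2 ?_, hqB⟩
  by_cases hcase : L * ‖z.fst - a.fst‖ ≤ z.snd - a.snd
  · have h1 := hFl z.fst q.fst
    have h2 : ‖z.fst - q.fst‖ = t * ‖z.fst - a.fst‖ := by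
      have : z.fst - q.fst = t • (z.fst - a.fst) := by rw [q1]; module
      rw [this, norm_smul, Real.norm_eq_abs, abs_of_pos ht]
    rw [h2] at h1
    have h3 := mul_le_mul_of_nonneg_left hcase ht.le
    rw [q2]
    nlinarith
  · push Not at hcase
    have h1 := hFl c.fst q.fst
    rw [norm_sub_rev] at h1
    have h2 : L * ‖q.fst - c.fst‖ ≤ L * r := mul_le_mul_of_nonneg_left q1c.le hLn
    have h3 : ‖z.fst - a.fst‖ ≤ 2 * r := by
      have := norm_sub_le_norm_sub_add_norm_sub z.fst c.fst a.fst
      rw [norm_sub_rev c.fst] at this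
      linarith
    have h4 : L * ‖z.fst - a.fst‖ ≤ L * (2 * r) := mul_le_mul_of_nonneg_left h3 hLn
    have h5 : q.snd ≤ a.snd + 2 * (L * r) := by
      rw [q2]
      have : (1 - t) * (z.snd - a.snd) ≤ (1 - t) * (2 * (L * r)) :=
        mul_le_mul_of_nonneg_left (by linarith) (sub_nonneg.2 ht1)
      nlinarith
    linarith

end model

lemma exists_rotation {n : ℕ} (e : Cn n) (he : ‖e‖ = 1) :
    ∃ Λ : Cn n ≃ₗᵢ[ℝ] WithLp 2 (EuclideanSpace ℝ (Fin (2*n-1)) × ℝ),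
      Λ e = WithLp.toLp 2 (0, 1) := by
  have hn : 0 < n := by
    rcases Nat.eq_zero_or_pos n with rfl | h
    · have : e = 0 := Subsingleton.elim _ _
      simp [this] at he
    · exact h
  have h1 : Module.finrank ℝ (Cn n) = 2 * n := by
    rw [finrank_real_of_complex, finrank_euclideanSpace_fin]
  have h2 : Module.finrank ℝ (WithLp 2 (EuclideanSpace ℝ (Fin (2*n-1)) × ℝ)) = 2 * n := by
    rw [LinearEquiv.finrank_eq (WithLp.linearEquiv 2 ℝ (EuclideanSpace ℝ (Fin (2*n-1)) × ℝ)),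
      Module.finrank_prod, finrank_euclideanSpace_fin, Module.finrank_self]
    omega
  let Λ0 : Cn n ≃ₗᵢ[ℝ] WithLp 2 (EuclideanSpace ℝ (Fin (2*n-1)) × ℝ) :=
    (stdOrthonormalBasis ℝ (Cn n)).equiv (stdOrthonormalBasis ℝ _)
      (finCongr (h1.trans h2.symm))
  let f : WithLp 2 (EuclideanSpace ℝ (Fin (2*n-1)) × ℝ) := WithLp.toLp 2 (0, 1)
  have hf : ‖f‖ = 1 := by simp [f]
  refine ⟨Λ0.trans (Submodule.reflection (Submodule.span ℝ {Λ0 e - f})ᗮ), ?_⟩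
  rw [LinearIsometryEquiv.trans_apply]
  exact Submodule.reflection_sub (by rw [Λ0.norm_map, he, hf])

theorem StarBall.lipschitz {n : ℕ} {Ω : Set (Cn n)} {p0 : Cn n} {R : ℝ} (hΩ : StarBall Ω p0 R) :
    HasLipschitzBoundary Ω := by
  intro p hp
  have hpΩ : p ∉ Ω := by
    rw [hΩ.2.1.frontier_eq] at hp; exact hp.2
  have hpc : p ∈ closure Ω := frontier_subset_closure hp
  have hne : p - p0 ≠ 0 := by
    intro h
    rw [sub_eq_zero] at h
    exact hpΩ (h ▸ hΩ.2.2.1)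
  have hl : 0 < ‖p - p0‖ := norm_pos_iff.2 hne
  obtain ⟨Λ, hΛ⟩ := exists_rotation (‖p - p0‖⁻¹ • (p - p0))
    (by rw [norm_smul, norm_inv, norm_norm, inv_mul_cancel₀ hl.ne'])
  let φ : Cn n ≃ᵢ WithLp 2 (EuclideanSpace ℝ (Fin (2*n-1)) × ℝ) :=
    (IsometryEquiv.subRight p0).trans Λ.toIsometryEquiv
  have hφ : ∀ z, φ z = Λ (z - p0) := fun z => rfl
  have hφp : φ p = ‖p - p0‖ • WithLp.toLp 2 ((0 : EuclideanSpace ℝ (Fin (2*n-1))), (1:ℝ)) := by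
    rw [← hΛ, map_smul, smul_inv_smul₀ hl.ne', hφ]
  obtain ⟨F, L, V, hF, hV, hpV, hg⟩ := model_graph (S := φ.symm ⁻¹' Ω)
    (hΩ.2.1.preimage φ.symm.continuous) hΩ.1 hl (by
      intro z hz t ht0 ht1 w hw
      have := hΩ.2.2.2 _ hz t ht0 ht1 (Λ.symm w) (by rwa [Λ.symm.norm_map])
      have e : φ.symm (z + t • (0 - z) + w) = G p0 t (Λ.symm w) (φ.symm z) := by
        apply φ.injective
        rw [φ.apply_symm_apply, hφ]
        obtain ⟨y, rfl⟩ := φ.surjective z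
        rw [φ.symm_apply_apply, hφ, G, zero_sub, ← map_neg, ← map_smul]
        conv_lhs => rw [← Λ.apply_symm_apply w]
        rw [← map_add, ← map_add]
        congr 1
        module
      change φ.symm _ ∈ Ω
      rw [e]
      exact this) (p := φ p)
    (by rw [hφp]; simp) (by rw [hφp]; simp)
    (by
      have : φ.symm ⁻¹' closure Ω = closure (φ.symm ⁻¹' Ω) :=
        φ.symm.toHomeomorph.preimage_closure Ω
      rw [← this]
      simpa using hpc)
  exact ⟨φ, F, L, V, hF, hV, hpV, fun q hq => hg q hq⟩

theorem local_starBall {n : ℕ} {D : Set (Cn n)} (hD : IsOpen D) (hL : HasLipschitzBoundary D)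
    {P : Cn n} (hP : P ∈ frontier D) :
    ∃ (U : Set (Cn n)) (p0 : Cn n) (R : ℝ), IsOpen U ∧ P ∈ U ∧ StarBall (D ∩ U) p0 R := by
  obtain ⟨φ, F, L, V, hF, hV, hPV, hg⟩ := hL P hP
  have hPc : φ P ∈ closure (φ.symm ⁻¹' D) := by
    have : φ.symm ⁻¹' closure D = closure (φ.symm ⁻¹' D) :=
      φ.symm.toHomeomorph.preimage_closure D
    rw [← this]
    simpa using frontier_subset_closure hP
  obtain ⟨B, p, R, hR, hB, hcB, hp, hst⟩ := model_star (S := φ.symm ⁻¹' D) hF hV hPV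
    (fun q hq => hg q hq) hPc
  refine ⟨φ ⁻¹' B, φ.symm p, R, hB.preimage φ.continuous, hcB, hR,
    hD.inter (hB.preimage φ.continuous), ⟨hp.1, by simpa using hp.2⟩, ?_⟩
  intro z hz t ht0 ht1 w hw
  let A := φ.toRealAffineIsometryEquiv
  have hA : ∀ x, A x = φ x := fun x => by rw [IsometryEquiv.coeFn_toRealAffineIsometryEquiv]
  have hsub : ∀ x y, φ x - φ y = A.linearIsometryEquiv (x - y) := fun x y => by
    rw [← hA, ← hA]; exact (A.map_vsub x y).symm
  have e : φ (G (φ.symm p) t w z) = φ z + t • (p - φ z) + A.linearIsometryEquiv w := by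
    have h1 : φ (G (φ.symm p) t w z) - φ z = t • (p - φ z) + A.linearIsometryEquiv w := by
      rw [hsub, G]
      conv_rhs => rw [← φ.apply_symm_apply p]
      rw [hsub, ← map_smul, ← map_add]
      congr 1
      abel
    rw [sub_eq_iff_eq_add] at h1
    rw [h1]; abel
  have := hst (φ z) ⟨by simpa using hz.1, hz.2⟩ t ht0 ht1 (A.linearIsometryEquiv w)
    (by rwa [LinearIsometryEquiv.norm_map])
  rw [← e] at this
  exact ⟨by simpa using this.1, this.2⟩

/-- **Theorem 1.** If `D ⊆ ℂⁿ` is a domain with Lipschitz boundary, then every boundary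
point `P` has an open neighbourhood `U` such that `D ∩ U` is an `𝒮`-domain with Lipschitz
boundary. -/
theorem sdomain_local_at_lipschitz_boundary {n : ℕ}
    (D : Set (EuclideanSpace ℂ (Fin n))) (hD_open : IsOpen D) (hD_conn : IsConnected D)
    (hD_lip : HasLipschitzBoundary D) :
    ∀ P ∈ frontier D, ∃ U : Set (EuclideanSpace ℂ (Fin n)),
      IsOpen U ∧ P ∈ U ∧ IsSDomain (D ∩ U) ∧ HasLipschitzBoundary (D ∩ U) := by
  intro P hP
  obtain ⟨U, p0, R, hU, hPU, hS⟩ := local_starBall hD_open hD_lip hP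
  exact ⟨U, hU, hPU, hS.isSDomain, hS.lipschitz⟩
end
end

section
/- Let $D \subseteq \mathbb{C}^n$ be a domain with Lipschitz boundary. Then for every boundary point $P \in \partial D$ there is an open neighbourhood $U$ of $P$ such that every plurisubharmonic function $u$ on $D \cap U$ is the pointwise limit of a decreasing sequence of continuous plurisubharmonic functions on $D \cap U$. -/
open MeasureTheory Real Filter Topology Metric

noncomputable section

theorem psh_eventually_lt {n : ℕ} {Ω : Set (EuclideanSpace ℂ (Fin n))}
    {u : EuclideanSpace ℂ (Fin n) → EReal} (hΩ : IsOpen Ω) (hu : IsPSHOn Ω u)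
    {z : EuclideanSpace ℂ (Fin n)} (hz : z ∈ Ω) {c : EReal} (hc : u z < c) :
    ∀ᶠ y in 𝓝 z, u y < c := by
  have h := hu.1 z hz c hc
  rwa [hΩ.nhdsWithin_eq hz] at h

/-- Integrability of the truncations along a continuous curve. -/
theorem psh_trunc_integrable {n : ℕ} {Ω : Set (EuclideanSpace ℂ (Fin n))}
    {u : EuclideanSpace ℂ (Fin n) → EReal} (hu : IsPSHOn Ω u)
    (γ : ℝ → EuclideanSpace ℂ (Fin n)) (hγ : Continuous γ) (hγΩ : ∀ θ, γ θ ∈ Ω)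
    (m : ℕ) (N : ℝ) (a b : ℝ) (hab : a ≤ b) (hN : ∀ θ ∈ Set.Icc a b, u (γ θ) ≤ (N : EReal)) :
    IntervalIntegrable (fun θ => (u (γ θ) ⊔ ((-(m : ℝ) : ℝ) : EReal)).toReal) volume a b := by
  have h1 : UpperSemicontinuousOn (u ∘ γ) Set.univ :=
    hu.1.comp hγ.continuousOn (fun θ _ => hγΩ θ)
  have h2 : Measurable (u ∘ γ) := (upperSemicontinuousOn_univ_iff.mp h1).measurable
  have h3 : Measurable (fun θ => (u (γ θ) ⊔ ((-(m : ℝ) : ℝ) : EReal)).toReal) :=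
    (h2.sup_const _).ereal_toReal
  rw [intervalIntegrable_iff_integrableOn_Icc_of_le hab]
  refine Measure.integrableOn_of_bounded (M := |N| + m) (by simp) h3.aestronglyMeasurable ?_
  refine (ae_restrict_iff' measurableSet_Icc).mpr (ae_of_all _ fun θ hθ => ?_)
  have hle : u (γ θ) ⊔ ((-(m : ℝ) : ℝ) : EReal) ≤ ((|N| : ℝ) : EReal) := by
    refine sup_le ((hN θ hθ).trans (by exact_mod_cast le_abs_self N)) ?_
    exact_mod_cast (by have := abs_nonneg N; have : (0:ℝ) ≤ m := by positivity
                       linarith : -(m:ℝ) ≤ |N|)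
  have hge : ((-(m : ℝ) : ℝ) : EReal) ≤ u (γ θ) ⊔ ((-(m : ℝ) : ℝ) : EReal) := le_sup_right
  have e1 := EReal.toReal_le_toReal hle (ne_bot_of_le_ne_bot (EReal.coe_ne_bot _) hge)
    (EReal.coe_ne_top _)
  have e2 := EReal.toReal_le_toReal hge (EReal.coe_ne_bot _)
    (ne_top_of_le_ne_top (EReal.coe_ne_top _) hle)
  rw [EReal.toReal_coe] at e1 e2
  rw [Real.norm_eq_abs, abs_le]
  have := abs_nonneg N
  have : (0:ℝ) ≤ m := by positivity
  constructor <;> linarith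

theorem trunc_toReal_le {x : EReal} {m : ℕ} {A : ℝ} (hx : x ≤ (A : EReal)) (hm : -(m:ℝ) ≤ A) :
    (x ⊔ ((-(m : ℝ) : ℝ) : EReal)).toReal ≤ A := by
  have hle : x ⊔ ((-(m : ℝ) : ℝ) : EReal) ≤ (A : EReal) := sup_le hx (by exact_mod_cast hm)
  have e1 := EReal.toReal_le_toReal hle
    (ne_bot_of_le_ne_bot (EReal.coe_ne_bot _) le_sup_right) (EReal.coe_ne_top _)
  rwa [EReal.toReal_coe] at e1

theorem continuous_circle {n : ℕ} (a b : EuclideanSpace ℂ (Fin n)) :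
    Continuous (fun θ : ℝ => a + Complex.exp ((θ : ℂ) * Complex.I) • b) := by fun_prop

/-- Two-level bound of the circle mean. -/
theorem psh_le_of_arc {n : ℕ} {Ω : Set (EuclideanSpace ℂ (Fin n))}
    {u : EuclideanSpace ℂ (Fin n) → EReal} (hu : IsPSHOn Ω u)
    (a b : EuclideanSpace ℂ (Fin n)) (hab : ∀ l : ℂ, ‖l‖ ≤ 1 → a + l • b ∈ Ω)
    (α A N : ℝ) (hα : 0 ≤ α) (hα' : α ≤ 2 * π)
    (hA : ∀ θ ∈ Set.Icc 0 α, u (a + Complex.exp ((θ : ℂ) * Complex.I) • b) ≤ (A : EReal))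
    (hN : ∀ θ : ℝ, u (a + Complex.exp ((θ : ℂ) * Complex.I) • b) ≤ (N : EReal)) :
    u a ≤ (((2 * π)⁻¹ * (α * A + (2 * π - α) * N) : ℝ) : EReal) := by
  obtain ⟨m, hm⟩ := exists_nat_ge (max (-A) (-N))
  have hmA : -(m:ℝ) ≤ A := by have := le_max_left (-A) (-N); linarith
  have hmN : -(m:ℝ) ≤ N := by have := le_max_right (-A) (-N); linarith
  have hΩ : ∀ θ : ℝ, a + Complex.exp ((θ : ℂ) * Complex.I) • b ∈ Ω :=
    fun θ => hab _ (by rw [Complex.norm_exp_ofReal_mul_I])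
  have i1 := psh_trunc_integrable hu _ (continuous_circle a b) hΩ m N 0 α hα (fun θ _ => hN θ)
  have i2 := psh_trunc_integrable hu _ (continuous_circle a b) hΩ m N α (2*π) hα' (fun θ _ => hN θ)
  refine (hu.2.2.2 a b hab).trans ((iInf_le _ m).trans ?_)
  rw [EReal.coe_le_coe_iff]
  refine mul_le_mul_of_nonneg_left ?_ (by positivity)
  rw [← intervalIntegral.integral_add_adjacent_intervals i1 i2]
  have j1 := intervalIntegral.integral_mono_on hα i1 (_root_.intervalIntegrable_const (c := A))
    (fun θ hθ => trunc_toReal_le (hA θ hθ) hmA)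
  have j2 := intervalIntegral.integral_mono_on hα' i2 (_root_.intervalIntegrable_const (c := N))
    (fun θ hθ => trunc_toReal_le (hN θ) hmN)
  simp only [intervalIntegral.integral_const, smul_eq_mul, sub_zero] at j1 j2
  linarith

/-- The arc of the circle near angle zero stays in an open set. -/
theorem exists_arc {n : ℕ} (a e : EuclideanSpace ℂ (Fin n))
    {C : Set (EuclideanSpace ℂ (Fin n))} (hC : IsOpen C) (he : e ∈ C) :
    ∃ α : ℝ, 0 < α ∧ α ≤ 2 * π ∧ ∀ θ ∈ Set.Icc 0 α,
      a + Complex.exp ((θ : ℂ) * Complex.I) • (e - a) ∈ C := by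
  have h := (continuous_circle a (e - a)).continuousAt (x := 0)
  have h0 : a + Complex.exp (((0:ℝ) : ℂ) * Complex.I) • (e - a) = e := by simp
  have h1 : ∀ᶠ θ : ℝ in 𝓝 0, a + Complex.exp ((θ : ℂ) * Complex.I) • (e - a) ∈ C :=
    h.eventually (by beta_reduce; rw [h0]; exact hC.mem_nhds he)
  obtain ⟨δ, hδ, hb⟩ := Metric.eventually_nhds_iff.mp h1
  refine ⟨min (δ / 2) (2 * π), by positivity, min_le_right _ _, fun θ hθ => hb ?_⟩
  have := hθ.2.trans (min_le_left _ _)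
  rw [Real.dist_eq, sub_zero, abs_of_nonneg hθ.1]
  linarith

/-- An open convex set is not thin at points of its closure. -/
theorem psh_le_of_convex {n : ℕ} {Ω : Set (EuclideanSpace ℂ (Fin n))}
    {u : EuclideanSpace ℂ (Fin n) → EReal} (hΩ : IsOpen Ω) (hu : IsPSHOn Ω u)
    {C : Set (EuclideanSpace ℂ (Fin n))} (hC : IsOpen C) (hconv : Convex ℝ C)
    {q : EuclideanSpace ℂ (Fin n)} (hq : q ∈ Ω) (hqC : q ∈ closure C)
    {M : EReal} (hM : ∀ y ∈ C, u y ≤ M) : u q ≤ M := by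
  by_contra! hlt
  obtain ⟨A, hMA, hAq⟩ := EReal.lt_iff_exists_real_btwn.mp hlt
  obtain ⟨x, hx⟩ : ∃ x : ℝ, u q = x :=
    ⟨(u q).toReal, (EReal.coe_toReal (hu.2.1 q hq) (ne_bot_of_gt hAq)).symm⟩
  rw [hx, EReal.coe_lt_coe_iff] at hAq
  obtain ⟨e, he⟩ : C.Nonempty := closure_nonempty_iff.mp ⟨q, hqC⟩
  obtain ⟨α, hα, hα', harc⟩ := exists_arc q e hC he
  set β := (2 * π)⁻¹ * α with hβ
  have hβ0 : 0 < β := by positivity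
  set c := x + β * (x - A) / 2 with hc
  have hxc : u q < (c : EReal) := by
    rw [hx, EReal.coe_lt_coe_iff]
    have : 0 < β * (x - A) := mul_pos hβ0 (by linarith)
    linarith
  have hev := (psh_eventually_lt hΩ hu hq hxc).and (hΩ.mem_nhds hq)
  obtain ⟨r, hr, hball⟩ := Metric.eventually_nhds_iff.mp hev
  set t := min (1/2) (r / (2 * (‖e - q‖ + 1))) with ht
  have ht0 : 0 < t := by positivity
  have ht1 : t < 1 := lt_of_le_of_lt (min_le_left _ _) (by norm_num)
  have htr : t * ‖e - q‖ < r := by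
    have h1 : t ≤ r / (2 * (‖e - q‖ + 1)) := min_le_right _ _
    rw [le_div_iff₀ (by positivity)] at h1
    nlinarith [norm_nonneg (e - q)]
  have hdisc : ∀ l : ℂ, ‖l‖ ≤ 1 → dist (q + l • (t • (e - q))) q < r := by
    intro l hl
    rw [dist_eq_norm, add_sub_cancel_left, norm_smul, norm_smul, Real.norm_eq_abs,
      abs_of_pos ht0]
    calc ‖l‖ * (t * ‖e - q‖) ≤ 1 * (t * ‖e - q‖) :=
          mul_le_mul_of_nonneg_right hl (by positivity)
      _ < r := by rw [one_mul]; exact htr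
  have key := psh_le_of_arc hu q (t • (e - q)) (fun l hl => (hball (hdisc l hl)).2) α A c
    hα.le hα' ?_ (fun θ => (hball (hdisc _ (by rw [Complex.norm_exp_ofReal_mul_I]))).1.le)
  · rw [hx, EReal.coe_le_coe_iff] at key
    have hπ : (2 * π)⁻¹ * (2 * π) = 1 := inv_mul_cancel₀ (by positivity)
    have e1 : (2 * π)⁻¹ * (α * A + (2 * π - α) * c) = β * A + (1 - β) * c := by
      rw [hβ, ← hπ]; ring
    rw [e1, hc] at key
    have : 0 < β * (x - A) := mul_pos hβ0 (by linarith)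
    nlinarith
  · intro θ hθ
    refine (hM _ ?_).trans hMA.le
    have h1 := harc θ hθ
    have h2 := hconv.openSegment_closure_interior_subset_interior hqC
      (by rw [hC.interior_eq]; exact h1)
    rw [hC.interior_eq] at h2
    refine h2 ⟨1 - t, t, by linarith, ht0, by ring, ?_⟩
    rw [smul_comm _ t, smul_add, sub_smul, one_smul]
    abel

/-- A psh function on a connected open set is not `-∞` on a nonempty open subset. -/
theorem psh_ne_bot_on_open {n : ℕ} {Ω : Set (EuclideanSpace ℂ (Fin n))}
    {u : EuclideanSpace ℂ (Fin n) → EReal} (hΩ : IsOpen Ω) (hconn : IsPreconnected Ω)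
    (hu : IsPSHOn Ω u)
    {C : Set (EuclideanSpace ℂ (Fin n))} (hC : IsOpen C) (hne : C.Nonempty) (hCΩ : C ⊆ Ω) :
    ∃ y ∈ C, u y ≠ ⊥ := by
  by_contra! hbot
  obtain ⟨y0, hy0⟩ := hne
  set W := interior {y | u y = ⊥} with hW
  have hsub : Ω ⊆ W := by
    refine hconn.subset_of_closure_inter_subset isOpen_interior
      ⟨y0, hCΩ hy0, interior_maximal hbot hC hy0⟩ ?_
    rintro q ⟨hqW, hqΩ⟩
    obtain ⟨c, hc, -⟩ := EReal.lt_iff_exists_real_btwn.mp (lt_top_iff_ne_top.mpr (hu.2.1 q hqΩ))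
    have hev := (psh_eventually_lt hΩ hu hqΩ hc).and (hΩ.mem_nhds hqΩ)
    obtain ⟨r, hr, hball⟩ := Metric.eventually_nhds_iff.mp hev
    obtain ⟨e, heW, hqe⟩ := Metric.mem_closure_iff.mp hqW (r / 4) (by positivity)
    refine mem_interior.mpr ⟨Metric.ball q (r/4), ?_, isOpen_ball, mem_ball_self (by positivity)⟩
    intro p hp
    rw [Metric.mem_ball] at hp
    have hpe : ‖e - p‖ < r / 2 := by
      rw [← dist_eq_norm]
      have := dist_triangle e q p
      rw [dist_comm e q, dist_comm q p] at this
      linarith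
    have hdisc : ∀ l : ℂ, ‖l‖ ≤ 1 → dist (p + l • (e - p)) q < r := by
      intro l hl
      have h1 : dist (p + l • (e - p)) p ≤ 1 * ‖e - p‖ := by
        rw [dist_eq_norm, add_sub_cancel_left, norm_smul]
        exact mul_le_mul_of_nonneg_right hl (norm_nonneg _)
      have := dist_triangle (p + l • (e - p)) p q
      linarith
    obtain ⟨α, hα, hα', harc⟩ := exists_arc p e isOpen_interior heW
    have key : ∀ A : ℝ, u p ≤ (((2 * π)⁻¹ * (α * A + (2 * π - α) * c) : ℝ) : EReal) := fun A =>
      psh_le_of_arc hu p (e - p) (fun l hl => (hball (hdisc l hl)).2) α A c hα.le hα'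
        (fun θ hθ => by
          have h := interior_subset (harc θ hθ)
          exact (le_of_eq h).trans bot_le)
        (fun θ => (hball (hdisc _ (by rw [Complex.norm_exp_ofReal_mul_I]))).1.le)
    change u p = ⊥
    rw [EReal.eq_bot_iff_forall_lt]
    intro y
    refine (key (((2 * π) * (y - 1) - (2 * π - α) * c) / α)).trans_lt ?_
    rw [EReal.coe_lt_coe_iff, mul_div_cancel₀ _ hα.ne', sub_add_cancel,
      inv_mul_cancel_left₀ (by positivity)]
    linarith
  obtain ⟨w, hw, hw'⟩ := hu.2.2.1 y0 (hCΩ hy0)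
  have h := interior_subset (hsub (connectedComponentIn_subset _ _ hw))
  exact hw' h

set_option linter.unusedVariables false

/-- The truncated open cone with vertex `z` over the ball `ball w ρ`. -/
def starCone {n : ℕ} (w : EuclideanSpace ℂ (Fin n)) (ρ ε : ℝ) (z : EuclideanSpace ℂ (Fin n)) :
    Set (EuclideanSpace ℂ (Fin n)) :=
  {y | ∃ s ∈ Set.Ioo 0 ε, s⁻¹ • (y - (1 - s) • z) ∈ ball w ρ}

theorem mem_starCone {n : ℕ} {w : EuclideanSpace ℂ (Fin n)} {ρ ε : ℝ}
    {z y : EuclideanSpace ℂ (Fin n)} :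
    y ∈ starCone w ρ ε z ↔ ∃ s ∈ Set.Ioo 0 ε, ∃ x ∈ ball w ρ, y = (1 - s) • z + s • x := by
  constructor
  · rintro ⟨s, hs, h⟩
    exact ⟨s, hs, _, h, by rw [smul_inv_smul₀ hs.1.ne']; abel⟩
  · rintro ⟨s, hs, x, hx, rfl⟩
    exact ⟨s, hs, by rwa [add_sub_cancel_left, inv_smul_smul₀ hs.1.ne']⟩

theorem isOpen_starCone {n : ℕ} (w : EuclideanSpace ℂ (Fin n)) (ρ ε : ℝ)
    (z : EuclideanSpace ℂ (Fin n)) : IsOpen (starCone w ρ ε z) := by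
  have : starCone w ρ ε z = ⋃ s ∈ Set.Ioo 0 ε,
      (fun y => s⁻¹ • (y - (1 - s) • z)) ⁻¹' ball w ρ := by
    ext y; simp [starCone]
  rw [this]
  exact isOpen_biUnion fun s _ => isOpen_ball.preimage (by fun_prop)

theorem convex_starCone {n : ℕ} (w : EuclideanSpace ℂ (Fin n)) (ρ ε : ℝ)
    (z : EuclideanSpace ℂ (Fin n)) : Convex ℝ (starCone w ρ ε z) := by
  intro y1 h1 y2 h2 a b ha hb hab
  obtain ⟨s, hs, x, hx, rfl⟩ := mem_starCone.mp h1
  obtain ⟨t, ht, y, hy, rfl⟩ := mem_starCone.mp h2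
  have hr := (convex_Ioo (0:ℝ) ε) hs ht ha hb hab
  simp only [smul_eq_mul] at hr
  set r := a * s + b * t with hrdef
  have hr0 : r ≠ 0 := hr.1.ne'
  refine mem_starCone.mpr ⟨r, hr, (a * s / r) • x + (b * t / r) • y, ?_, ?_⟩
  · exact (convex_ball w ρ) hx hy (div_nonneg (mul_nonneg ha hs.1.le) hr.1.le)
      (div_nonneg (mul_nonneg hb ht.1.le) hr.1.le) (by rw [← add_div, div_self hr0])
  · have e1 : r • ((a * s / r) • x + (b * t / r) • y) = (a * s) • x + (b * t) • y := by
      rw [smul_add, smul_smul, smul_smul, mul_div_cancel₀ _ hr0, mul_div_cancel₀ _ hr0]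
    rw [e1]
    have : (1 - r) = a * (1 - s) + b * (1 - t) := by rw [hrdef]; linear_combination -hab
    rw [this]
    module

theorem mem_closure_starCone {n : ℕ} {w : EuclideanSpace ℂ (Fin n)} {ρ ε : ℝ} (hρ : 0 < ρ)
    (hε : 0 < ε) (z : EuclideanSpace ℂ (Fin n)) {s : ℝ} (hs : s ∈ Set.Icc 0 ε)
    {x : EuclideanSpace ℂ (Fin n)} (hx : x ∈ closedBall w ρ) :
    (1 - s) • z + s • x ∈ closure (starCone w ρ ε z) := by
  have h : (s, x) ∈ closure (Set.Ioo 0 ε ×ˢ ball w ρ) := by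
    rw [closure_prod_eq, closure_Ioo hε.ne, closure_ball w hρ.ne']
    exact ⟨hs, hx⟩
  have hc : Continuous (fun p : ℝ × EuclideanSpace ℂ (Fin n) => (1 - p.1) • z + p.1 • p.2) := by
    fun_prop
  have hm : Set.MapsTo (fun p : ℝ × EuclideanSpace ℂ (Fin n) => (1 - p.1) • z + p.1 • p.2)
      (Set.Ioo 0 ε ×ˢ ball w ρ) (starCone w ρ ε z) :=
    fun p hp => mem_starCone.mpr ⟨p.1, hp.1, p.2, hp.2, rfl⟩
  have := map_mem_closure hc h hm
  exact this

/-- The sup of `u` over the cone. -/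
def coneSup {n : ℕ} (u : EuclideanSpace ℂ (Fin n) → EReal) (w : EuclideanSpace ℂ (Fin n))
    (ρ ε : ℝ) (z : EuclideanSpace ℂ (Fin n)) : EReal :=
  ⨆ y ∈ starCone w ρ ε z, u y

section star

variable {n : ℕ} {Ω : Set (EuclideanSpace ℂ (Fin n))} {u : EuclideanSpace ℂ (Fin n) → EReal}
  {w : EuclideanSpace ℂ (Fin n)} {ρ ε : ℝ}

theorem starCone_subset
    (hstar : ∀ z ∈ Ω, ∀ x ∈ closedBall w ρ, ∀ s ∈ Set.Icc (0:ℝ) 1, (1 - s) • z + s • x ∈ Ω)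
    (hε1 : ε ≤ 1) {z : EuclideanSpace ℂ (Fin n)} (hz : z ∈ Ω) : starCone w ρ ε z ⊆ Ω := by
  intro y hy
  obtain ⟨s, hs, x, hx, rfl⟩ := mem_starCone.mp hy
  exact hstar z hz x (ball_subset_closedBall hx) s ⟨hs.1.le, hs.2.le.trans hε1⟩

theorem le_coneSup (hΩ : IsOpen Ω) (hu : IsPSHOn Ω u) (hρ : 0 < ρ) (hε : 0 < ε)
    {z : EuclideanSpace ℂ (Fin n)} (hz : z ∈ Ω) : u z ≤ coneSup u w ρ ε z := by
  refine psh_le_of_convex hΩ hu (isOpen_starCone w ρ ε z) (convex_starCone w ρ ε z) hz ?_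
    (fun y hy => le_biSup u hy)
  have := mem_closure_starCone (w := w) hρ hε z (s := 0) ⟨le_rfl, hε.le⟩
    (mem_closedBall_self hρ.le)
  simpa using this

/-- If the cone sup is below `c`, then `u` is below `c` on nearby closed cones. -/
theorem coneSup_eventually_le (hΩ : IsOpen Ω) (hu : IsPSHOn Ω u) (hρ : 0 < ρ)
    (hε : 0 < ε) (hε1 : ε ≤ 1)
    (hstar : ∀ z ∈ Ω, ∀ x ∈ closedBall w ρ, ∀ s ∈ Set.Icc (0:ℝ) 1, (1 - s) • z + s • x ∈ Ω)
    {z : EuclideanSpace ℂ (Fin n)} (hz : z ∈ Ω) {c : EReal}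
    (hc : ∀ s ∈ Set.Icc 0 ε, ∀ x ∈ closedBall w ρ, u ((1 - s) • z + s • x) < c) :
    ∀ᶠ z' in 𝓝 z, coneSup u w ρ ε z' ≤ c := by
  have hK : IsCompact (Set.Icc 0 ε ×ˢ closedBall w ρ) :=
    isCompact_Icc.prod (isCompact_closedBall w ρ)
  have := hK.eventually_forall_of_forall_eventually (x₀ := z)
    (P := fun z' p => u ((1 - p.1) • z' + p.1 • p.2) < c) ?_
  · filter_upwards [this] with z' hz'
    refine iSup₂_le fun y hy => ?_
    obtain ⟨s, hs, x, hx, rfl⟩ := mem_starCone.mp hy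
    exact (hz' (s, x) ⟨⟨hs.1.le, hs.2.le⟩, ball_subset_closedBall hx⟩).le
  · rintro ⟨s, x⟩ ⟨hs, hx⟩
    have hmem := hstar z hz x hx s ⟨hs.1, hs.2.trans hε1⟩
    have hev := psh_eventually_lt hΩ hu hmem (hc s hs x hx)
    have hcont : ContinuousAt (fun q : EuclideanSpace ℂ (Fin n) × (ℝ × EuclideanSpace ℂ (Fin n))
      => (1 - q.2.1) • q.1 + q.2.1 • q.2.2) (z, (s, x)) := by fun_prop
    exact hcont.eventually hev

theorem coneSup_ne_top (hΩ : IsOpen Ω) (hu : IsPSHOn Ω u) (hρ : 0 < ρ)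
    (hε : 0 < ε) (hε1 : ε ≤ 1)
    (hstar : ∀ z ∈ Ω, ∀ x ∈ closedBall w ρ, ∀ s ∈ Set.Icc (0:ℝ) 1, (1 - s) • z + s • x ∈ Ω)
    {z : EuclideanSpace ℂ (Fin n)} (hz : z ∈ Ω) : coneSup u w ρ ε z ≠ ⊤ := by
  have hK : IsCompact ((fun p : ℝ × EuclideanSpace ℂ (Fin n) => (1 - p.1) • z + p.1 • p.2) ''
      (Set.Icc 0 ε ×ˢ closedBall w ρ)) :=
    (isCompact_Icc.prod (isCompact_closedBall w ρ)).image (by fun_prop)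
  have hKΩ : (fun p : ℝ × EuclideanSpace ℂ (Fin n) => (1 - p.1) • z + p.1 • p.2) ''
      (Set.Icc 0 ε ×ˢ closedBall w ρ) ⊆ Ω := by
    rintro _ ⟨⟨s, x⟩, ⟨hs, hx⟩, rfl⟩
    exact hstar z hz x hx s ⟨hs.1, hs.2.trans hε1⟩
  have hne : ((fun p : ℝ × EuclideanSpace ℂ (Fin n) => (1 - p.1) • z + p.1 • p.2) ''
      (Set.Icc 0 ε ×ˢ closedBall w ρ)).Nonempty :=
    ⟨_, ⟨(0, w), ⟨⟨le_rfl, hε.le⟩, mem_closedBall_self hρ.le⟩, rfl⟩⟩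
  obtain ⟨y, hy, hmax⟩ := (hu.1.mono hKΩ).exists_isMaxOn hne hK
  refine ne_top_of_le_ne_top (hu.2.1 y (hKΩ hy)) (iSup₂_le fun y' hy' => ?_)
  obtain ⟨s, hs, x, hx, rfl⟩ := mem_starCone.mp hy'
  exact hmax ⟨(s, x), ⟨⟨hs.1.le, hs.2.le⟩, ball_subset_closedBall hx⟩, rfl⟩

theorem coneSup_ne_bot (hΩ : IsOpen Ω) (hu : IsPSHOn Ω u) (hρ : 0 < ρ)
    (hε : 0 < ε) (hε1 : ε ≤ 1)
    (hstar : ∀ z ∈ Ω, ∀ x ∈ closedBall w ρ, ∀ s ∈ Set.Icc (0:ℝ) 1, (1 - s) • z + s • x ∈ Ω)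
    {z : EuclideanSpace ℂ (Fin n)} (hz : z ∈ Ω) : coneSup u w ρ ε z ≠ ⊥ := by
  have hw : w ∈ Ω := by
    simpa using hstar z hz w (mem_closedBall_self hρ.le) 1 ⟨zero_le_one, le_rfl⟩
  have hsc : StarConvex ℝ w Ω := by
    intro y hy a b ha hb hab
    have := hstar y hy w (mem_closedBall_self hρ.le) a ⟨ha, by linarith⟩
    rwa [show 1 - a = b by linarith, add_comm] at this
  have hconn : IsPreconnected Ω := (hsc.isPathConnected hw).isConnected.isPreconnected
  obtain ⟨y, hy, hne⟩ := psh_ne_bot_on_open hΩ hconn hu (isOpen_starCone w ρ ε z)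
    ⟨_, mem_starCone.mpr ⟨ε / 2, ⟨by positivity, by linarith⟩, w, mem_ball_self hρ, rfl⟩⟩
    (starCone_subset hstar hε1 hz)
  exact ne_bot_of_le_ne_bot hne (le_biSup u hy)

theorem coneSup_continuousAt (hΩ : IsOpen Ω) (hu : IsPSHOn Ω u) (hρ : 0 < ρ)
    (hε : 0 < ε) (hε1 : ε ≤ 1)
    (hstar : ∀ z ∈ Ω, ∀ x ∈ closedBall w ρ, ∀ s ∈ Set.Icc (0:ℝ) 1, (1 - s) • z + s • x ∈ Ω)
    {z : EuclideanSpace ℂ (Fin n)} (hz : z ∈ Ω) : ContinuousAt (coneSup u w ρ ε) z := by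
  refine tendsto_order.mpr ⟨fun c hc => ?_, fun c hc => ?_⟩
  · obtain ⟨y, hy, hcy⟩ := lt_biSup_iff.mp hc
    obtain ⟨s, hs, hmem⟩ := hy
    have hcont : ContinuousAt (fun z' : EuclideanSpace ℂ (Fin n) => s⁻¹ • (y - (1 - s) • z')) z := by
      fun_prop
    filter_upwards [hcont.eventually (isOpen_ball.mem_nhds hmem)] with z' hz'
    exact hcy.trans_le (le_biSup u (⟨s, hs, hz'⟩ : y ∈ starCone w ρ ε z'))
  · obtain ⟨c', hc', hcc'⟩ := exists_between hc
    have := coneSup_eventually_le hΩ hu hρ hε hε1 hstar hz (c := c') (fun s hs x hx => by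
      refine lt_of_le_of_lt ?_ hc'
      exact psh_le_of_convex hΩ hu (isOpen_starCone w ρ ε z) (convex_starCone w ρ ε z)
        (hstar z hz x hx s ⟨hs.1, hs.2.trans hε1⟩) (mem_closure_starCone hρ hε z hs hx)
        (fun y hy => le_biSup u hy))
    filter_upwards [this] with z' hz'
    exact hz'.trans_lt hcc'

theorem coneSup_isPSH (hΩ : IsOpen Ω) (hu : IsPSHOn Ω u) (hρ : 0 < ρ)
    (hε : 0 < ε) (hε1 : ε ≤ 1)
    (hstar : ∀ z ∈ Ω, ∀ x ∈ closedBall w ρ, ∀ s ∈ Set.Icc (0:ℝ) 1, (1 - s) • z + s • x ∈ Ω) :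
    IsPSHOn Ω (fun z => (((coneSup u w ρ ε z).toReal : ℝ) : EReal)) := by
  have hcoe : ∀ z ∈ Ω, (((coneSup u w ρ ε z).toReal : ℝ) : EReal) = coneSup u w ρ ε z :=
    fun z hz => EReal.coe_toReal (coneSup_ne_top hΩ hu hρ hε hε1 hstar hz)
      (coneSup_ne_bot hΩ hu hρ hε hε1 hstar hz)
  have hcont : ContinuousOn (fun z => (coneSup u w ρ ε z).toReal) Ω := fun z hz =>
    ((EReal.tendsto_toReal (coneSup_ne_top hΩ hu hρ hε hε1 hstar hz)
      (coneSup_ne_bot hΩ hu hρ hε hε1 hstar hz)).comp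
      (coneSup_continuousAt hΩ hu hρ hε hε1 hstar hz)).mono_left nhdsWithin_le_nhds
  refine ⟨?_, fun z _ => EReal.coe_ne_top _, fun z hz => ⟨z, mem_connectedComponentIn hz,
    EReal.coe_ne_bot _⟩, fun a b hab => ?_⟩
  · exact (continuous_coe_real_ereal.comp_continuousOn hcont).upperSemicontinuousOn
  · have ha : a ∈ Ω := by simpa using hab 0 (by simp)
    beta_reduce
    rw [hcoe a ha]
    refine iSup₂_le fun y hy => ?_
    obtain ⟨s, hs, x, hx, rfl⟩ := mem_starCone.mp hy
    have hs1 : s ∈ Set.Icc (0:ℝ) 1 := ⟨hs.1.le, hs.2.le.trans hε1⟩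
    have heq : ∀ l : ℂ, (1 - s) • a + s • x + l • ((1 - s) • b)
        = (1 - s) • (a + l • b) + s • x := by
      intro l
      rw [smul_add, smul_comm (1 - s) l b]; abel
    have hdisc : ∀ l : ℂ, ‖l‖ ≤ 1 → (1 - s) • a + s • x + l • ((1 - s) • b) ∈ Ω := by
      intro l hl
      rw [heq]
      exact hstar _ (hab l hl) x (ball_subset_closedBall hx) s hs1
    have hcirc : ∀ θ : ℝ, a + Complex.exp ((θ : ℂ) * Complex.I) • b ∈ Ω :=
      fun θ => hab _ (by rw [Complex.norm_exp_ofReal_mul_I])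
    have hvc : Continuous (fun θ : ℝ =>
        (coneSup u w ρ ε (a + Complex.exp ((θ : ℂ) * Complex.I) • b)).toReal) :=
      hcont.comp_continuous (continuous_circle a b) hcirc
    have hle : ∀ θ : ℝ, u ((1 - s) • a + s • x + Complex.exp ((θ : ℂ) * Complex.I) • ((1 - s) • b))
        ≤ (((coneSup u w ρ ε (a + Complex.exp ((θ : ℂ) * Complex.I) • b)).toReal : ℝ) : EReal) := by
      intro θ
      rw [hcoe _ (hcirc θ), heq]
      exact le_biSup u (mem_starCone.mpr ⟨s, hs, x, hx, rfl⟩)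
    obtain ⟨N, hN⟩ := (isCompact_Icc (a := (0:ℝ)) (b := 2 * π)).bddAbove_image hvc.continuousOn
    have hN' : ∀ θ ∈ Set.Icc (0:ℝ) (2 * π),
        (coneSup u w ρ ε (a + Complex.exp ((θ : ℂ) * Complex.I) • b)).toReal ≤ N :=
      fun θ hθ => hN ⟨θ, hθ, rfl⟩
    refine (hu.2.2.2 _ _ hdisc).trans (iInf_mono fun m => ?_)
    rw [EReal.coe_le_coe_iff]
    refine mul_le_mul_of_nonneg_left ?_ (by positivity)
    have hmax : ∀ r : ℝ, ((r : EReal) ⊔ ((-(m : ℝ) : ℝ) : EReal)).toReal = max r (-(m:ℝ)) := by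
      intro r
      rw [← EReal.coe_strictMono.monotone.map_max, EReal.toReal_coe]
    simp only [hmax]
    refine intervalIntegral.integral_mono_on (by positivity) ?_
      ((hvc.max continuous_const).intervalIntegrable _ _) (fun θ hθ => ?_)
    · exact psh_trunc_integrable hu _ (continuous_circle _ _)
        (fun θ => hdisc _ (by rw [Complex.norm_exp_ofReal_mul_I])) m N 0 (2 * π) (by positivity)
        (fun θ hθ => (hle θ).trans (by exact_mod_cast hN' θ hθ))
    · exact trunc_toReal_le ((hle θ).trans (by exact_mod_cast le_max_left _ _)) (le_max_right _ _)

/-- Approximation on domains starshaped with respect to a ball. -/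
theorem psh_approx_of_star (hΩ : IsOpen Ω) (hu : IsPSHOn Ω u) (hρ : 0 < ρ)
    (hstar : ∀ z ∈ Ω, ∀ x ∈ closedBall w ρ, ∀ s ∈ Set.Icc (0:ℝ) 1, (1 - s) • z + s • x ∈ Ω) :
    ∃ v : ℕ → EuclideanSpace ℂ (Fin n) → ℝ,
      (∀ k, ContinuousOn (v k) Ω) ∧
      (∀ k, IsPSHOn Ω (fun z => ((v k z : ℝ) : EReal))) ∧
      (∀ k, ∀ z ∈ Ω, v (k+1) z ≤ v k z) ∧
      (∀ z ∈ Ω, Tendsto (fun k => ((v k z : ℝ) : EReal)) atTop (nhds (u z))) := by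
  have he0 : ∀ k : ℕ, (0:ℝ) < 1 / ((k:ℝ) + 1) := fun k => by positivity
  have he1 : ∀ k : ℕ, 1 / ((k:ℝ) + 1) ≤ 1 := fun k => by
    rw [div_le_one (by positivity)]
    have : (0:ℝ) ≤ k := by positivity
    linarith
  have hcoe : ∀ (k : ℕ), ∀ z ∈ Ω, (((coneSup u w ρ (1 / ((k:ℝ) + 1)) z).toReal : ℝ) : EReal)
      = coneSup u w ρ (1 / ((k:ℝ) + 1)) z :=
    fun k z hz => EReal.coe_toReal (coneSup_ne_top hΩ hu hρ (he0 k) (he1 k) hstar hz)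
      (coneSup_ne_bot hΩ hu hρ (he0 k) (he1 k) hstar hz)
  refine ⟨fun k z => (coneSup u w ρ (1 / ((k:ℝ) + 1)) z).toReal, fun k z hz => ?_,
    fun k => coneSup_isPSH hΩ hu hρ (he0 k) (he1 k) hstar, fun k z hz => ?_, fun z hz => ?_⟩
  · exact ((EReal.tendsto_toReal (coneSup_ne_top hΩ hu hρ (he0 k) (he1 k) hstar hz)
      (coneSup_ne_bot hΩ hu hρ (he0 k) (he1 k) hstar hz)).comp
      (coneSup_continuousAt hΩ hu hρ (he0 k) (he1 k) hstar hz)).mono_left nhdsWithin_le_nhds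
  · rw [← EReal.coe_le_coe_iff, hcoe _ z hz, hcoe _ z hz]
    refine biSup_mono fun y hy => ?_
    obtain ⟨s, hs, h⟩ := hy
    refine ⟨s, ⟨hs.1, hs.2.trans_le ?_⟩, h⟩
    push_cast
    exact one_div_le_one_div_of_le (by positivity) (by linarith)
  · simp only [hcoe _ z hz]
    refine tendsto_order.mpr ⟨fun c hc => .of_forall fun k =>
      hc.trans_le (le_coneSup hΩ hu hρ (he0 k) hz), fun c hc => ?_⟩
    obtain ⟨c', hc', hcc'⟩ := exists_between hc
    have h1 := (isCompact_closedBall w ρ).eventually_forall_of_forall_eventually (x₀ := (0:ℝ))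
      (P := fun s x => u ((1 - s) • z + s • x) < c') (fun x hx => by
        have hcont : ContinuousAt (fun q : ℝ × EuclideanSpace ℂ (Fin n)
          => (1 - q.1) • z + q.1 • q.2) ((0:ℝ), x) := by fun_prop
        have h0 : ∀ᶠ y in 𝓝 ((1 - (0:ℝ)) • z + (0:ℝ) • x), u y < c' := by
          simpa using psh_eventually_lt hΩ hu hz hc'
        exact hcont.eventually h0)
    obtain ⟨δ, hδ, hb⟩ := Metric.eventually_nhds_iff.mp h1
    have h2 := (tendsto_order.mp (tendsto_one_div_add_atTop_nhds_zero_nat (𝕜 := ℝ))).2 δ hδ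
    filter_upwards [h2] with k hk
    refine lt_of_le_of_lt (iSup₂_le fun y hy => ?_) hcc'
    obtain ⟨s, hs, x, hx, rfl⟩ := mem_starCone.mp hy
    refine (hb ?_ x (ball_subset_closedBall hx)).le
    rw [Real.dist_eq, sub_zero, abs_of_pos hs.1]
    exact hs.2.trans hk

end star

/-- **Theorem 2.** If `D ⊆ ℂⁿ` is a domain with Lipschitz boundary, then every boundary
point `P` has an open neighbourhood `U` such that every plurisubharmonic function on
`D ∩ U` is the pointwise limit of a decreasing sequence of continuous plurisubharmonic
functions on `D ∩ U`. -/
theorem continuous_psh_approx_local_at_lipschitz_boundary {n : ℕ}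
    (D : Set (EuclideanSpace ℂ (Fin n))) (hD_open : IsOpen D) (hD_conn : IsConnected D)
    (hD_lip : HasLipschitzBoundary D) :
    ∀ P ∈ frontier D, ∃ U : Set (EuclideanSpace ℂ (Fin n)),
      IsOpen U ∧ P ∈ U ∧
      ∀ u : EuclideanSpace ℂ (Fin n) → EReal, IsPSHOn (D ∩ U) u →
        ∃ v : ℕ → EuclideanSpace ℂ (Fin n) → ℝ,
          (∀ k, ContinuousOn (v k) (D ∩ U)) ∧
          (∀ k, IsPSHOn (D ∩ U) (fun z => ((v k z : ℝ) : EReal))) ∧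
          (∀ k, ∀ z ∈ D ∩ U, v (k+1) z ≤ v k z) ∧
          (∀ z ∈ D ∩ U, Tendsto (fun k => ((v k z : ℝ) : EReal)) atTop (nhds (u z))) := by
  intro P hP
  obtain ⟨φ, F, L, V, hF, hV, hPV, hDV⟩ := hD_lip P hP
  obtain ⟨f, hf⟩ : ∃ f : EuclideanSpace ℂ (Fin n) → EuclideanSpace ℝ (Fin (2*n-1)),
      ∀ z, f z = (WithLp.equiv 2 (EuclideanSpace ℝ (Fin (2*n-1)) × ℝ) (φ z)).1 := ⟨_, fun _ => rfl⟩
  obtain ⟨g, hg⟩ : ∃ g : EuclideanSpace ℂ (Fin n) → ℝ,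
      ∀ z, g z = (WithLp.equiv 2 (EuclideanSpace ℝ (Fin (2*n-1)) × ℝ) (φ z)).2 := ⟨_, fun _ => rfl⟩
  have hfc : Continuous f := by
    rw [show f = _ from funext hf]
    exact continuous_fst.comp ((WithLp.prod_continuous_ofLp 2 _ _).comp φ.continuous)
  have hgc : Continuous g := by
    rw [show g = _ from funext hg]
    exact continuous_snd.comp ((WithLp.prod_continuous_ofLp 2 _ _).comp φ.continuous)
  have haff : ∀ (z x : EuclideanSpace ℂ (Fin n)) (s : ℝ),
      φ ((1 - s) • z + s • x) = (1 - s) • φ z + s • φ x := by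
    intro z x s
    have := Convex.combo_affine_apply (x := z) (y := x) (a := 1 - s) (b := s)
      (f := φ.toRealAffineIsometryEquiv.toAffineEquiv.toAffineMap) (by ring)
    simpa using this
  have hfa : ∀ (z x : EuclideanSpace ℂ (Fin n)) (s : ℝ),
      f ((1 - s) • z + s • x) = (1 - s) • f z + s • f x := by
    intro z x s
    rw [hf, hf, hf, haff]; rfl
  have hga : ∀ (z x : EuclideanSpace ℂ (Fin n)) (s : ℝ),
      g ((1 - s) • z + s • x) = (1 - s) * g z + s * g x := by
    intro z x s
    rw [hg, hg, hg, haff]; rfl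
  have hD' : ∀ z, φ z ∈ V → (z ∈ D ↔ g z < F (f z)) := by
    intro z hz
    have := hDV (φ z) hz
    rwa [φ.symm_apply_apply, ← hf, ← hg] at this
  have hgP : g P = F (f P) := by
    have hPD : P ∉ D := by
      have := hP.2
      rwa [hD_open.interior_eq] at this
    have h1 : F (f P) ≤ g P := by
      have := (hD' P hPV).not.mp hPD
      exact not_lt.mp this
    refine le_antisymm ?_ h1
    by_contra! hlt
    have hev : ∀ᶠ z in 𝓝 P, F (f z) < g z ∧ φ z ∈ V :=
      ((hF.continuous.comp hfc).continuousAt.eventually_lt hgc.continuousAt hlt).and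
        (φ.continuous.continuousAt.eventually (hV.mem_nhds hPV))
    obtain ⟨z, ⟨hz1, hz2⟩, hzD⟩ := mem_closure_iff_nhds.mp hP.1 _ hev
    exact absurd ((hD' z hz2).mp hzD) (not_lt.mpr hz1.le)
  -- a product neighbourhood inside the chart
  obtain ⟨δ, hδ, hδV⟩ : ∃ δ : ℝ, 0 < δ ∧
      ∀ z, dist (f z) (f P) < δ → |g z - g P| < δ → φ z ∈ V := by
    have ho : IsOpen ((WithLp.toLp 2 :
        EuclideanSpace ℝ (Fin (2*n-1)) × ℝ → WithLp 2 _) ⁻¹' V) :=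
      hV.preimage (WithLp.prod_continuous_toLp 2 _ _)
    have hm : (f P, g P) ∈ ((WithLp.toLp 2 :
        EuclideanSpace ℝ (Fin (2*n-1)) × ℝ → WithLp 2 _) ⁻¹' V) := by
      rw [hf, hg]; exact hPV
    obtain ⟨δ, hδ, hb⟩ := Metric.isOpen_iff.mp ho _ hm
    refine ⟨δ, hδ, fun z h1 h2 => ?_⟩
    have hz : (f z, g z) ∈ ball (f P, g P) δ := by
      rw [Metric.mem_ball, Prod.dist_eq]
      exact max_lt h1 (by rwa [Real.dist_eq])
    have := hb hz
    rw [hf, hg] at this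
    exact this
  obtain ⟨r, hr0, hrδ, hrL⟩ : ∃ r : ℝ, 0 < r ∧ r ≤ δ ∧ 8 * (L * r) ≤ δ := by
    have hL : (0:ℝ) ≤ L := L.2
    refine ⟨δ / (8 * (L + 1)), by positivity, ?_, ?_⟩
    · rw [div_le_iff₀ (by positivity)]
      nlinarith
    · rw [← mul_assoc, mul_div_assoc', div_le_iff₀ (by positivity)]
      nlinarith
  have hLr : 0 ≤ L * r := mul_nonneg L.2 hr0.le
  set U : Set (EuclideanSpace ℂ (Fin n)) := {z | dist (f z) (f P) < r ∧ |g z - g P| < δ} with hU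
  have hUo : IsOpen U :=
    (isOpen_lt (hfc.dist continuous_const) continuous_const).inter
      (isOpen_lt ((hgc.sub continuous_const).abs) continuous_const)
  refine ⟨U, hUo, ⟨by rwa [dist_self], by rwa [sub_self, abs_zero]⟩, fun u hu => ?_⟩
  set w := φ.symm (WithLp.toLp 2 (f P, g P - δ / 2)) with hw
  have hfw : f w = f P := by rw [hf w, hw, φ.apply_symm_apply]; rfl
  have hgw : g w = g P - δ / 2 := by rw [hg w, hw, φ.apply_symm_apply]; rfl
  have hWo : IsOpen {x | dist (f x) (f P) < r ∧ g P - δ < g x ∧ g x < g P - 3 * (L * r)} :=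
    (isOpen_lt (hfc.dist continuous_const) continuous_const).inter
      ((isOpen_lt continuous_const hgc).inter (isOpen_lt hgc continuous_const))
  have hwW : w ∈ {x | dist (f x) (f P) < r ∧ g P - δ < g x ∧ g x < g P - 3 * (L * r)} := by
    refine ⟨by rwa [hfw, dist_self], ?_, ?_⟩ <;> rw [hgw] <;> linarith
  obtain ⟨ρ, hρ, hρW⟩ := Metric.nhds_basis_closedBall.mem_iff.mp (hWo.mem_nhds hwW)
  refine psh_approx_of_star (w := w) (hD_open.inter hUo) hu hρ ?_
  rintro z ⟨hzD, hzf, hzg⟩ x hx s ⟨hs0, hs1⟩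
  obtain ⟨hxf, hxg1, hxg2⟩ := hρW hx
  rw [abs_lt] at hzg
  have hpf : dist (f ((1 - s) • z + s • x)) (f P) < r := by
    rw [hfa]
    exact (convex_ball (f P) r) hzf hxf (by linarith) hs0 (by ring)
  have hpg : g ((1 - s) • z + s • x) ∈ Set.Ioo (g P - δ) (g P + δ) := by
    rw [hga]
    exact (convex_Ioo (g P - δ) (g P + δ)) (x := g z) (y := g x)
      ⟨by linarith, by linarith⟩ ⟨by linarith, by linarith⟩ (by linarith) hs0 (by ring)
  have hpU : (1 - s) • z + s • x ∈ U :=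
    ⟨hpf, abs_lt.mpr ⟨by linarith [hpg.1], by linarith [hpg.2]⟩⟩
  refine ⟨(hD' _ (hδV _ (hpf.trans_le hrδ) hpU.2)).mpr ?_, hpU⟩
  have hzF : g z < F (f z) :=
    (hD' z (hδV z (hzf.trans_le hrδ) (abs_lt.mpr hzg))).mp hzD
  have hl1 := hF.dist_le_mul (f ((1 - s) • z + s • x)) (f P)
  rw [Real.dist_eq, abs_le] at hl1
  have hl1' : (L:ℝ) * dist (f ((1 - s) • z + s • x)) (f P) ≤ L * r :=
    mul_le_mul_of_nonneg_left hpf.le L.2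
  by_cases hcase : g ((1 - s) • z + s • x) < g P - L * r
  · linarith [hl1.1]
  · rw [not_lt] at hcase
    have hgz : g P - L * r ≤ g z := by
      rw [hga] at hcase
      by_contra! hlt
      have := (convex_Iio (g P - L * r)) (x := g z) (y := g x) hlt
        (by rw [Set.mem_Iio]; linarith) (a := 1 - s) (b := s) (by linarith) hs0 (by ring)
      rw [Set.mem_Iio, smul_eq_mul, smul_eq_mul] at this
      linarith
    have hl2 := hF.dist_le_mul (f ((1 - s) • z + s • x)) (f z)
    rw [Real.dist_eq, abs_le] at hl2
    have hd : dist (f ((1 - s) • z + s • x)) (f z) ≤ s * (2 * r) := by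
      rw [hfa, dist_eq_norm, show (1 - s) • f z + s • f x - f z = s • (f x - f z) by module,
        norm_smul, Real.norm_eq_abs, abs_of_nonneg hs0]
      refine mul_le_mul_of_nonneg_left ?_ hs0
      rw [← dist_eq_norm]
      linarith [dist_triangle_right (f x) (f z) (f P)]
    have hl2' : (L:ℝ) * dist (f ((1 - s) • z + s • x)) (f z) ≤ L * (s * (2 * r)) :=
      mul_le_mul_of_nonneg_left hd L.2
    have hgp : g ((1 - s) • z + s • x) = g z + s * (g x - g z) := by rw [hga]; ring
    have hmul : s * (g x - g z) ≤ s * (-(2 * (L * r))) :=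
      mul_le_mul_of_nonneg_left (by linarith) hs0
    have : (L:ℝ) * (s * (2 * r)) = s * (2 * (L * r)) := by ring
    linarith [hl2.1]
end
end

section
/- For every $n \ge 2$ there exist a bounded domain $\Omega \subseteq \mathbb{C}^n$ with $0 \in \partial\Omega$ and a plurisubharmonic function $u$ on $\Omega$ such that for every neighbourhood $U$ of $0$ there is no sequence of smooth plurisubharmonic functions on $\Omega \cap U$ decreasing pointwise to the restriction $u|_{\Omega \cap U}$. -/
open MeasureTheory Real Filter Topology Metric

noncomputable section

lemma psh_fejer (g : ℂ → ℝ) (hg : ContinuousOn g (sphere 0 1)) (ε : ℝ) (hε : 0 < ε) :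
    ∃ h : ℂ → ℝ, Continuous h ∧ (∀ c r, circleAverage h c r = h c) ∧
      ∀ x ∈ sphere (0 : ℂ) 1, |g x - h x| < ε := by
  have : Fact (0 < 2 * π) := ⟨two_pi_pos⟩
  let G : C(AddCircle (2 * π), ℂ) :=
    ⟨fun x => ((g (AddCircle.toCircle x : ℂ) : ℝ) : ℂ), by
      refine Complex.continuous_ofReal.comp ?_
      refine hg.comp_continuous (continuous_subtype_val.comp AddCircle.continuous_toCircle) ?_
      intro x
      rw [mem_sphere_zero_iff_norm]
      exact Circle.norm_coe _⟩
  have key : ∀ p ∈ Submodule.span ℂ (Set.range (@fourier (2 * π))),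
      ∃ h : ℂ → ℂ, Continuous h ∧ (∀ c r, circleAverage h c r = h c) ∧
        ∀ x : AddCircle (2 * π), h (AddCircle.toCircle x : ℂ) = p x := by
    intro p hp
    induction hp using Submodule.span_induction with
    | mem x hx =>
      obtain ⟨n, rfl⟩ := hx
      have pos : ∀ m : ℕ, ∀ c r, circleAverage (fun z : ℂ => z ^ m) c r = c ^ m := by
        intro m c r
        refine DiffContOnCl.circleAverage ?_
        exact (differentiable_id.pow m).diffContOnCl
      obtain ⟨m, rfl | rfl⟩ := n.eq_nat_or_neg
      · refine ⟨fun z => z ^ m, by fun_prop, pos m, ?_⟩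
        intro x
        simp [fourier_apply, AddCircle.toCircle_nsmul]
      · refine ⟨fun z => (starRingEnd ℂ) (z ^ m), by fun_prop, ?_, ?_⟩
        · intro c r
          have h2 := Complex.conjCLE.toContinuousLinearMap.circleAverage_comp_comm
            (f := fun z : ℂ => z ^ m) (c := c) (R := r)
            (Continuous.continuousOn (by fun_prop)).circleIntegrable'
          rw [pos m] at h2
          exact h2
        · intro x
          rw [fourier_neg]
          simp [fourier_apply, AddCircle.toCircle_nsmul]
    | zero => exact ⟨fun _ => 0, by fun_prop, fun c r => circleAverage_const _ _ _, by simp⟩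
    | add p q _ _ ihp ihq =>
      obtain ⟨a, a1, a2, a3⟩ := ihp
      obtain ⟨b, b1, b2, b3⟩ := ihq
      refine ⟨fun z => a z + b z, by fun_prop, ?_, ?_⟩
      · intro c r
        rw [circleAverage_fun_add a1.continuousOn.circleIntegrable' b1.continuousOn.circleIntegrable',
          a2, b2]
      · intro x; simp [a3, b3]
    | smul t p _ ihp =>
      obtain ⟨a, a1, a2, a3⟩ := ihp
      refine ⟨fun z => t • a z, by fun_prop, ?_, ?_⟩
      · intro c r
        rw [circleAverage_fun_smul, a2]
      · intro x; simp [a3]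
  have hG : G ∈ (Submodule.span ℂ (Set.range (@fourier (2 * π)))).topologicalClosure := by
    rw [span_fourier_closure_eq_top]; trivial
  rw [← SetLike.mem_coe, Submodule.topologicalClosure_coe, Metric.mem_closure_iff] at hG
  obtain ⟨p, hp, hpG⟩ := hG ε hε
  obtain ⟨h, h1, h2, h3⟩ := key p hp
  refine ⟨fun z => (h z).re, by fun_prop, ?_, ?_⟩
  · intro c r
    have h4 := Complex.reCLM.circleAverage_comp_comm (f := h) (c := c) (R := r)
      h1.continuousOn.circleIntegrable'
    rw [h2] at h4
    exact h4
  · intro x hx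
    let y : Circle := ⟨x, by simpa [Submonoid.unitSphere] using hx⟩
    obtain ⟨t, ht⟩ := AddCircle.homeomorphCircle'.surjective y
    have ht2 : (AddCircle.toCircle t : ℂ) = x := by
      have : AddCircle.homeomorphCircle' t = AddCircle.toCircle t := by
        induction t using QuotientAddGroup.induction_on with
        | H z =>
          rw [AddCircle.homeomorphCircle'_apply_mk, AddCircle.toCircle_apply_mk]
          congr 1
          field_simp
      rw [← this, ht]
    have h5 : dist (G t) (p t) < ε := lt_of_le_of_lt (ContinuousMap.dist_apply_le_dist t) hpG
    rw [← h3, ht2] at h5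
    have : G t = ((g x : ℝ) : ℂ) := by rw [← ht2]; rfl
    rw [this, Complex.dist_eq] at h5
    refine lt_of_le_of_lt ?_ h5
    have := Complex.abs_re_le_norm ((g x : ℂ) - h x)
    simpa using this

lemma psh_local_global (f : ℂ → ℝ) (hf : ContinuousOn f (closedBall 0 1))
    (hloc : ∀ c ∈ ball (0 : ℂ) 1, ∀ᶠ r in 𝓝[>] (0 : ℝ), f c ≤ circleAverage f c r) :
    f 0 ≤ circleAverage f 0 1 := by
  refine le_of_forall_pos_le_add ?_
  intro ε' hε'
  obtain ⟨ε, hε, rfl⟩ : ∃ ε : ℝ, 0 < ε ∧ ε' = 3 * ε := ⟨ε' / 3, by positivity, by ring⟩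
  have hfs : ContinuousOn f (sphere 0 1) := hf.mono sphere_subset_closedBall
  obtain ⟨h, h1, h2, h3⟩ := psh_fejer f hfs ε hε
  -- perturbed difference
  have sq : ∀ (c : ℂ) (r : ℝ), circleAverage (fun z : ℂ => ‖z‖ ^ 2) c r = ‖c‖ ^ 2 + r ^ 2 := by
    intro c r
    have e : ∀ z ∈ sphere c |r|, ‖z‖ ^ 2 = (‖c‖ ^ 2 + r ^ 2) +
        2 * ((starRingEnd ℂ c) * (z - c)).re := by
      intro z hz
      have hz' : ‖z - c‖ ^ 2 = r ^ 2 := by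
        rw [mem_sphere_iff_norm] at hz; rw [hz, sq_abs]
      rw [← hz', ← Complex.normSq_eq_norm_sq, ← Complex.normSq_eq_norm_sq,
        ← Complex.normSq_eq_norm_sq]
      simp [Complex.normSq_apply]; ring
    rw [circleAverage_congr_sphere (f₂ := fun z => (‖c‖ ^ 2 + r ^ 2) +
        2 * ((starRingEnd ℂ c) * (z - c)).re) e]
    rw [circleAverage_fun_add (Continuous.continuousOn (by fun_prop)).circleIntegrable'
      (Continuous.continuousOn (by fun_prop)).circleIntegrable', circleAverage_const]
    have h4 := Complex.reCLM.circleAverage_comp_comm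
      (f := fun z => 2 * ((starRingEnd ℂ c) * (z - c))) (c := c) (R := r)
      (Continuous.continuousOn (by fun_prop)).circleIntegrable'
    rw [DiffContOnCl.circleAverage (Differentiable.diffContOnCl (by fun_prop))] at h4
    have h5 : (Complex.reCLM ∘ fun z => 2 * ((starRingEnd ℂ c) * (z - c))) =
      fun z => 2 * ((starRingEnd ℂ c) * (z - c)).re := by
      funext z; simp
    rw [h5] at h4
    rw [h4]; simp
  set F : ℂ → ℝ := fun z => (f z - h z) + ε * ‖z‖ ^ 2 with hF
  have hFc : ContinuousOn F (closedBall 0 1) := by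
    have : Continuous (fun z : ℂ => ε * ‖z‖ ^ 2) := by fun_prop
    exact (hf.sub h1.continuousOn).add this.continuousOn
  obtain ⟨x, hx, hmax⟩ := (isCompact_closedBall (0 : ℂ) 1).exists_isMaxOn
    ⟨0, by simp⟩ hFc
  have hxs : x ∈ sphere (0 : ℂ) 1 := by
    by_contra hcon
    have hxb : x ∈ ball (0 : ℂ) 1 := by
      simp only [mem_closedBall, mem_sphere, mem_ball] at *
      exact lt_of_le_of_ne hx hcon
    obtain ⟨δ, hδ, hδs⟩ := Metric.isOpen_iff.1 isOpen_ball x hxb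
    have e1 : ∀ᶠ r in 𝓝[>] (0 : ℝ), r < δ :=
      (eventually_lt_nhds hδ).filter_mono nhdsWithin_le_nhds
    have e2 : ∀ᶠ r in 𝓝[>] (0 : ℝ), 0 < r := eventually_mem_nhdsWithin
    obtain ⟨r, hr1, hr2, hr3⟩ := ((hloc x hxb).and (e1.and e2)).exists
    have hsub : sphere x |r| ⊆ closedBall 0 1 := by
      intro y hy
      apply ball_subset_closedBall
      apply hδs
      rw [abs_of_pos hr3] at hy
      rw [mem_ball, mem_sphere.1 hy]; exact hr2
    have i1 : CircleIntegrable f x r := (hf.mono hsub).circleIntegrable'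
    have i2 : CircleIntegrable h x r := h1.continuousOn.circleIntegrable'
    have i3 : CircleIntegrable (fun z : ℂ => ε * ‖z‖ ^ 2) x r :=
      (Continuous.continuousOn (by fun_prop)).circleIntegrable'
    have i4 : CircleIntegrable F x r := (hFc.mono hsub).circleIntegrable'
    have a1 : circleAverage F x r = circleAverage f x r - h x + ε * (‖x‖ ^ 2 + r ^ 2) := by
      have i5 : CircleIntegrable (fun z => f z - h z) x r := i1.sub i2
      rw [hF, circleAverage_fun_add i5 i3, circleAverage_fun_sub i1 i2, h2]
      have := circleAverage_fun_smul (a := ε) (f := fun z : ℂ => ‖z‖ ^ 2) (c := x) (R := r)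
      simp only [smul_eq_mul] at this
      rw [this, sq]
    have a2 : circleAverage F x r ≤ F x :=
      circleAverage_mono_on_of_le_circle i4 (fun y hy => hmax (hsub hy))
    have : F x = f x - h x + ε * ‖x‖ ^ 2 := rfl
    have : 0 < ε * r ^ 2 := by positivity
    linarith
  have hn : ‖x‖ = 1 := by simpa using hxs
  have b1 : F 0 ≤ F x := hmax (by simp)
  have b2 : F 0 = f 0 - h 0 := by simp [hF]
  have b3 : F x = f x - h x + ε := by simp [hF, hn]
  have b4 := (abs_lt.1 (h3 x hxs)).2
  have b5 : h 0 ≤ circleAverage f 0 1 + ε := by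
    rw [← h2 0 1, ← circleAverage_const ε 0 1, ← circleAverage_fun_add]
    · refine circleAverage_mono h1.continuousOn.circleIntegrable' ?_ ?_
      · exact ((hfs.mono (by simp)).add continuousOn_const).circleIntegrable'
      · intro y hy
        have := (abs_lt.1 (h3 y (by simpa using hy))).1
        linarith
    · exact (hfs.mono (by simp)).circleIntegrable'
    · exact continuousOn_const.circleIntegrable'
  linarith

def pEps (j : ℕ) : ℝ := (1 / 4) ^ (j + 2)
def pW (j : ℕ) : ℝ := (1 / 2) ^ (j + 1)
def pDel (j : ℕ) : ℝ := 2 * Real.exp (-(1 / pEps j))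
def pG (j : ℕ) (w : ℂ) : ℝ := pEps j * posLog ‖(w - pW j) / pDel j‖ - 1
def pS (N : ℕ) (w : ℂ) : ℝ := max (-1) (∑ j ∈ Finset.range N, pG j w)
def pV (N : ℕ) : Set ℂ := {w | ∃ j < N, ‖w - pW j‖ < pDel j}

lemma pEps_pos (j : ℕ) : 0 < pEps j := by unfold pEps; positivity
lemma pDel_pos (j : ℕ) : 0 < pDel j := by unfold pDel; positivity
lemma pW_pos (j : ℕ) : 0 < pW j := by unfold pW; positivity
lemma pW_le (j : ℕ) : pW j ≤ 1 / 2 := by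
  unfold pW
  rw [pow_succ]
  have : ((1:ℝ) / 2) ^ j ≤ 1 := pow_le_one₀ (by norm_num) (by norm_num)
  linarith

lemma pG_cont (j : ℕ) : Continuous (pG j) := by
  have := continuous_posLog
  unfold pG
  fun_prop

lemma pS_cont (N : ℕ) : Continuous (pS N) := by
  unfold pS
  have : ∀ j, Continuous (pG j) := pG_cont
  fun_prop

lemma pNorm (j : ℕ) (w : ℂ) : ‖(w - pW j) / pDel j‖ = ‖w - pW j‖ / pDel j := by
  rw [norm_div, Complex.norm_real, Real.norm_of_nonneg (pDel_pos j).le]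

lemma pG_nonpos (j : ℕ) (w : ℂ) (hw : ‖w‖ < 1) : pG j w ≤ 0 := by
  have h1 : ‖w - pW j‖ ≤ 2 := by
    calc ‖w - pW j‖ ≤ ‖w‖ + ‖(pW j : ℂ)‖ := norm_sub_le _ _
      _ ≤ 2 := by
        rw [Complex.norm_real, Real.norm_of_nonneg (pW_pos j).le]
        linarith [pW_le j]
  have h2 : ‖(w - pW j) / pDel j‖ ≤ Real.exp (1 / pEps j) := by
    rw [pNorm, div_le_iff₀ (pDel_pos j)]
    unfold pDel
    rw [mul_left_comm, ← Real.exp_add]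
    simpa using h1
  have h3 := posLog_le_posLog (norm_nonneg _) h2
  rw [posLog_eq_log (x := Real.exp (1 / pEps j)) (by
    rw [abs_of_pos (Real.exp_pos _)]
    exact Real.one_le_exp (by have := pEps_pos j; positivity)), Real.log_exp] at h3
  unfold pG
  have h4 := mul_le_mul_of_nonneg_left h3 (pEps_pos j).le
  rw [mul_one_div_cancel (pEps_pos j).ne'] at h4
  linarith

lemma pG_eq (j : ℕ) (w : ℂ) (hw : ‖w - pW j‖ < pDel j) : pG j w = -1 := by
  have : posLog ‖(w - pW j) / pDel j‖ = 0 := by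
    rw [posLog_eq_zero_iff, pNorm, abs_of_nonneg (by have := pDel_pos j; positivity),
      div_le_one (pDel_pos j)]
    exact hw.le
  unfold pG
  rw [this]; simp

lemma pS_ge (N : ℕ) (w : ℂ) : -1 ≤ pS N w := le_max_left _ _

lemma pS_anti (w : ℂ) (hw : ‖w‖ < 1) : Antitone (fun N => pS N w) := by
  apply antitone_nat_of_succ_le
  intro N
  unfold pS
  apply max_le_max le_rfl
  rw [Finset.sum_range_succ]
  linarith [pG_nonpos N w hw]

lemma pS_le (N : ℕ) (w : ℂ) (hw : ‖w‖ < 1) : pS N w ≤ 0 := by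
  have := pS_anti w hw (Nat.zero_le N)
  refine this.trans ?_
  simp [pS]

lemma pS_eq (N : ℕ) (w : ℂ) (hw : ‖w‖ < 1) (hV : w ∈ pV N) : pS N w = -1 := by
  obtain ⟨j, hj, hwj⟩ := hV
  unfold pS
  apply max_eq_left
  rw [← Finset.add_sum_erase _ _ (Finset.mem_range.2 hj), pG_eq j w hwj]
  have : ∑ i ∈ (Finset.range N).erase j, pG i w ≤ 0 :=
    Finset.sum_nonpos (fun i _ => pG_nonpos i w hw)
  linarith

lemma pG_zero (j : ℕ) : -(1 / 2) ^ (j + 2) ≤ pG j 0 := by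
  have h1 : Real.log (pW j / pDel j) ≤ posLog ‖((0 : ℂ) - pW j) / pDel j‖ := by
    rw [pNorm, zero_sub, norm_neg, Complex.norm_real, Real.norm_of_nonneg (pW_pos j).le]
    exact le_max_right _ _
  have h2 : Real.log (pW j / pDel j) = -((j + 2) * Real.log 2) + 1 / pEps j := by
    rw [Real.log_div (pW_pos j).ne' (pDel_pos j).ne']
    unfold pDel pW
    rw [Real.log_mul (by norm_num) (Real.exp_pos _).ne', Real.log_exp, Real.log_pow,
      Real.log_div (by norm_num) (by norm_num), Real.log_one]
    push_cast; ring
  have h3 : Real.log 2 ≤ 1 := by linarith [Real.log_le_sub_one_of_pos (show (0:ℝ) < 2 by norm_num)]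
  have h4 : ((j : ℝ) + 2) ≤ 2 ^ (j + 2) := by
    have := (Nat.lt_two_pow_self (n := j + 2)).le
    exact_mod_cast this
  have h5 : ((j : ℝ) + 2) * Real.log 2 ≤ 2 ^ (j + 2) := by
    nlinarith [Nat.cast_nonneg (α := ℝ) j]
  have h6 := mul_le_mul_of_nonneg_left h1 (pEps_pos j).le
  have h7 := mul_le_mul_of_nonneg_left h5 (pEps_pos j).le
  have h8 : pEps j * 2 ^ (j + 2) = (1 / 2) ^ (j + 2) := by
    unfold pEps; rw [← mul_pow]; norm_num
  rw [h2, mul_add, mul_one_div_cancel (pEps_pos j).ne'] at h6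
  unfold pG
  linarith

lemma pS_zero (N : ℕ) : -(1 / 2) ≤ pS N 0 := by
  refine le_trans ?_ (le_max_right _ _)
  have : ∀ N : ℕ, -(1 / 2) + (1 / 2) ^ (N + 1) ≤ ∑ j ∈ Finset.range N, pG j 0 := by
    intro N
    induction N with
    | zero => simp
    | succ k ih =>
      rw [Finset.sum_range_succ]
      have := pG_zero k
      have e : ((1:ℝ) / 2) ^ (k + 1) = 2 * (1 / 2) ^ (k + 2) := by rw [pow_succ _ (k+1)]; ring
      rw [show k + 1 + 1 = k + 2 from rfl]
      linarith
  have h := this N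
  have : (0:ℝ) < (1 / 2) ^ (N + 1) := by positivity
  linarith

lemma pV_open (N : ℕ) : IsOpen (pV N) := by
  have : pV N = ⋃ j, ⋃ (_ : j < N), ball (pW j : ℂ) (pDel j) := by
    ext w; simp [pV, dist_eq_norm]
  rw [this]
  exact isOpen_iUnion fun j => isOpen_iUnion fun _ => isOpen_ball

lemma pV_mono {N M : ℕ} (h : N ≤ M) : pV N ⊆ pV M := by
  rintro w ⟨j, hj, hw⟩
  exact ⟨j, hj.trans_le h, hw⟩

lemma posLog_submean (α β c : ℂ) :
    ∀ᶠ r in 𝓝[>] (0 : ℝ), posLog ‖α + β * c‖ ≤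
      circleAverage (fun l => posLog ‖α + β * l‖) c r := by
  by_cases h : ‖α + β * c‖ ≤ 1
  · have : posLog ‖α + β * c‖ = 0 := by rw [posLog_eq_zero_iff]; simpa using h
    rw [this]
    exact Eventually.of_forall fun r => circleAverage_nonneg_of_nonneg fun x _ => posLog_nonneg
  · push Not at h
    have hne : α + β * c ≠ 0 := by
      intro h0; rw [h0] at h; simp at h; linarith
    have ho : IsOpen {l : ℂ | α + β * l ≠ 0} :=
      isOpen_ne_fun (by fun_prop) (by fun_prop)
    obtain ⟨δ, hδ, hs⟩ := Metric.isOpen_iff.1 ho c hne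
    have e1 : ∀ᶠ r in 𝓝[>] (0 : ℝ), r < δ :=
      (eventually_lt_nhds hδ).filter_mono nhdsWithin_le_nhds
    have e2 : ∀ᶠ r in 𝓝[>] (0 : ℝ), 0 < r := eventually_mem_nhdsWithin
    filter_upwards [e1, e2] with r hr1 hr2
    have hsub : closedBall c |r| ⊆ {l : ℂ | α + β * l ≠ 0} := by
      rw [abs_of_pos hr2]
      exact (closedBall_subset_ball hr1).trans hs
    have hh : InnerProductSpace.HarmonicOnNhd (fun l => Real.log ‖α + β * l‖) (closedBall c |r|) := by
      intro x hx
      exact AnalyticAt.harmonicAt_log_norm (by fun_prop) (hsub hx)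
    have havg := hh.circleAverage_eq
    rw [posLog_eq_log (by rw [abs_of_nonneg (norm_nonneg _)]; exact h.le), ← havg]
    refine circleAverage_mono ?_ ?_ ?_
    · refine ContinuousOn.circleIntegrable' ?_
      refine ContinuousOn.log (Continuous.continuousOn (by fun_prop)) ?_
      intro x hx
      exact norm_ne_zero_iff.2 (hsub (sphere_subset_closedBall hx))
    · have := continuous_posLog
      exact (Continuous.continuousOn (by fun_prop)).circleIntegrable'
    · intro x _
      exact le_max_right _ _

lemma pS_submean (N : ℕ) (α β c : ℂ) :
    ∀ᶠ r in 𝓝[>] (0 : ℝ), pS N (α + β * c) ≤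
      circleAverage (fun l => pS N (α + β * l)) c r := by
  have h1 : ∀ᶠ r in 𝓝[>] (0 : ℝ), ∀ j ∈ Finset.range N,
      pG j (α + β * c) ≤ circleAverage (fun l => pG j (α + β * l)) c r := by
    rw [Finset.eventually_all]
    intro j _
    have h2 := posLog_submean ((α - pW j) / pDel j) (β / pDel j) c
    filter_upwards [h2] with r hr
    have e : ∀ l, pG j (α + β * l) =
        pEps j * posLog ‖(α - pW j) / pDel j + β / pDel j * l‖ - 1 := by
      intro l; unfold pG; congr 4; ring
    have := continuous_posLog
    have i1 : Continuous fun l : ℂ => pEps j * posLog ‖(α - pW j) / pDel j + β / pDel j * l‖ := by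
      fun_prop
    have s := circleAverage_fun_smul (a := pEps j)
      (f := fun l : ℂ => posLog ‖(α - pW j) / pDel j + β / pDel j * l‖) (c := c) (R := r)
    simp only [smul_eq_mul] at s
    simp only [e]
    rw [circleAverage_fun_sub i1.continuousOn.circleIntegrable'
      continuousOn_const.circleIntegrable', circleAverage_const, s]
    have := mul_le_mul_of_nonneg_left hr (pEps_pos j).le
    linarith
  filter_upwards [h1] with r hr
  have hc : ∀ j, Continuous (pG j) := pG_cont
  have hSc := pS_cont N
  have iS : CircleIntegrable (fun l => pS N (α + β * l)) c r :=
    (Continuous.continuousOn (by fun_prop)).circleIntegrable'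
  have ig : ∀ j, CircleIntegrable (fun l => pG j (α + β * l)) c r := fun j => by
    have := hc j
    exact (Continuous.continuousOn (by fun_prop)).circleIntegrable'
  refine max_le ?_ ?_
  · rw [← circleAverage_const (-1) c r]
    exact circleAverage_mono continuousOn_const.circleIntegrable' iS fun x _ => pS_ge _ _
  · calc ∑ j ∈ Finset.range N, pG j (α + β * c)
        ≤ ∑ j ∈ Finset.range N, circleAverage (fun l => pG j (α + β * l)) c r :=
          Finset.sum_le_sum hr
      _ = circleAverage (fun l => ∑ j ∈ Finset.range N, pG j (α + β * l)) c r := by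
          rw [circleAverage_fun_sum (fun j _ => ig j)]
      _ ≤ _ := by
        refine circleAverage_mono ?_ iS fun x _ => le_max_right _ _
        exact (Continuous.continuousOn (by fun_prop)).circleIntegrable'


def pD : Set ℂ := ⋃ k : ℕ, ball (pW k : ℂ) (pW k / 8)

lemma pD_open : IsOpen pD := isOpen_iUnion fun _ => isOpen_ball

def pF {n : ℕ} (i0 i1 : Fin n) (N : ℕ) (x : EuclideanSpace ℂ (Fin n)) : ℝ :=
  open Classical in if x i0 ∈ pD then pS N (x i1) else -1

def pU {n : ℕ} (i0 i1 : Fin n) (x : EuclideanSpace ℂ (Fin n)) : ℝ := ⨅ N, pF i0 i1 N x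

def pO {n : ℕ} (i0 i1 : Fin n) (N : ℕ) : Set (EuclideanSpace ℂ (Fin n)) :=
  {x | (∀ i, ‖x i‖ < 1) ∧ (x i0 ∉ frontier pD ∨ x i1 ∈ pV N)}

def pOm {n : ℕ} (i0 i1 : Fin n) : Set (EuclideanSpace ℂ (Fin n)) := ⋃ N, pO i0 i1 N

section
variable {n : ℕ} (i0 i1 : Fin n)

lemma pF_ge (N : ℕ) (x : EuclideanSpace ℂ (Fin n)) : -1 ≤ pF i0 i1 N x := by
  unfold pF; split_ifs
  · exact pS_ge _ _
  · exact le_rfl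

lemma pF_le (N : ℕ) (x : EuclideanSpace ℂ (Fin n)) (hx : ‖x i1‖ < 1) : pF i0 i1 N x ≤ 0 := by
  unfold pF; split_ifs
  · exact pS_le _ _ hx
  · norm_num

lemma pF_anti (x : EuclideanSpace ℂ (Fin n)) (hx : ‖x i1‖ < 1) :
    Antitone (fun N => pF i0 i1 N x) := by
  unfold pF; split_ifs
  · exact pS_anti _ hx
  · exact antitone_const

lemma pF_bdd (x : EuclideanSpace ℂ (Fin n)) : BddBelow (Set.range fun N => pF i0 i1 N x) :=
  ⟨-1, by rintro _ ⟨N, rfl⟩; exact pF_ge i0 i1 N x⟩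

lemma pU_le (N : ℕ) (x : EuclideanSpace ℂ (Fin n)) : pU i0 i1 x ≤ pF i0 i1 N x :=
  ciInf_le (pF_bdd i0 i1 x) N

lemma pU_tendsto (x : EuclideanSpace ℂ (Fin n)) (hx : ‖x i1‖ < 1) :
    Tendsto (fun N => pF i0 i1 N x) atTop (𝓝 (pU i0 i1 x)) :=
  tendsto_atTop_ciInf (pF_anti i0 i1 x hx) (pF_bdd i0 i1 x)

lemma pO_open (N : ℕ) : IsOpen (pO i0 i1 N) := by
  have c : ∀ i : Fin n, Continuous fun x : EuclideanSpace ℂ (Fin n) => x i := fun i => by fun_prop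
  refine IsOpen.inter ?_ (IsOpen.union ?_ ?_)
  · have : {x : EuclideanSpace ℂ (Fin n) | ∀ i, ‖x i‖ < 1} = ⋂ i, {x | ‖x i‖ < 1} := by
      ext; simp
    change IsOpen {x : EuclideanSpace ℂ (Fin n) | ∀ i, ‖x i‖ < 1}
    rw [this]
    exact isOpen_iInter_of_finite fun i => isOpen_lt (c i).norm continuous_const
  · exact isClosed_frontier.isOpen_compl.preimage (c i0)
  · exact (pV_open N).preimage (c i1)

lemma pO_mono {N M : ℕ} (h : N ≤ M) : pO i0 i1 N ⊆ pO i0 i1 M := by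
  rintro x ⟨h1, h2⟩
  exact ⟨h1, h2.imp_right fun h3 => pV_mono h h3⟩

lemma pOm_open : IsOpen (pOm i0 i1) := isOpen_iUnion fun N => pO_open i0 i1 N

lemma pF_cont (N : ℕ) : ContinuousOn (pF i0 i1 N) (pO i0 i1 N) := by
  have c : ∀ i : Fin n, Continuous fun x : EuclideanSpace ℂ (Fin n) => x i := fun i => by fun_prop
  intro x hx
  apply ContinuousAt.continuousWithinAt
  by_cases h1 : x i0 ∈ pD
  · have : pF i0 i1 N =ᶠ[𝓝 x] fun y => pS N (y i1) := by
      filter_upwards [(pD_open.preimage (c i0)).mem_nhds h1] with y hy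
      exact if_pos hy
    exact (((pS_cont N).comp (c i1)).continuousAt).congr this.symm
  · have : pF i0 i1 N =ᶠ[𝓝 x] fun y => -1 := by
      by_cases h2 : x i0 ∈ closure pD
      · have h3 : x i0 ∈ frontier pD := by
          rw [frontier, pD_open.interior_eq]; exact ⟨h2, h1⟩
        have h4 : x i1 ∈ pV N := hx.2.resolve_left (fun h => h h3)
        filter_upwards [((pV_open N).preimage (c i1)).mem_nhds h4,
          (isOpen_lt (c i1).norm continuous_const).mem_nhds (hx.1 i1)] with y hy1 hy2
        unfold pF; split_ifs
        · exact pS_eq N _ hy2 hy1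
        · rfl
      · filter_upwards [(isClosed_closure.isOpen_compl.preimage (c i0)).mem_nhds h2] with y hy
        exact if_neg fun h => hy (subset_closure h)
    exact continuousAt_const.congr this.symm

lemma pU_usc : UpperSemicontinuousOn (fun x => ((pU i0 i1 x : ℝ) : EReal)) (pOm i0 i1) := by
  intro x hx y hy
  obtain ⟨M, hM⟩ := Set.mem_iUnion.1 hx
  have ht : Tendsto (fun N => ((pF i0 i1 N x : ℝ) : EReal)) atTop (𝓝 ((pU i0 i1 x : ℝ) : EReal)) :=
    (continuous_coe_real_ereal.tendsto _).comp (pU_tendsto i0 i1 x (hM.1 i1))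
  obtain ⟨N, hN1, hN2⟩ := ((ht.eventually (gt_mem_nhds hy)).and (eventually_ge_atTop M)).exists
  have hxN : x ∈ pO i0 i1 N := pO_mono i0 i1 hN2 hM
  have hc : ContinuousAt (fun z => ((pF i0 i1 N z : ℝ) : EReal)) x :=
    continuous_coe_real_ereal.continuousAt.comp
      ((pF_cont i0 i1 N).continuousAt ((pO_open i0 i1 N).mem_nhds hxN))
  apply Filter.Eventually.filter_mono nhdsWithin_le_nhds
  filter_upwards [hc.eventually (gt_mem_nhds hN1)] with z hz
  exact lt_of_le_of_lt (EReal.coe_le_coe_iff.2 (pU_le i0 i1 N z)) hz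

lemma pF_mean (N : ℕ) (a b : EuclideanSpace ℂ (Fin n))
    (h : ∀ l : ℂ, ‖l‖ ≤ 1 → a + l • b ∈ pO i0 i1 N) :
    pF i0 i1 N a ≤ circleAverage (fun l => pF i0 i1 N (a + l • b)) 0 1 := by
  have h0 : pF i0 i1 N a = (fun l : ℂ => pF i0 i1 N (a + l • b)) 0 := by simp
  have hcont : Continuous fun l : ℂ => a + l • b := by fun_prop
  rw [h0]
  have hcc : ContinuousOn (fun l : ℂ => pF i0 i1 N (a + l • b)) (closedBall 0 1) :=
    (pF_cont i0 i1 N).comp hcont.continuousOn (fun l hl => h l (by simpa using hl))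
  refine psh_local_global _ hcc ?_
  intro c hc
  have e2 : ∀ᶠ r in 𝓝[>] (0 : ℝ), 0 < r := eventually_mem_nhdsWithin
  obtain ⟨δ1, hδ1, hs1⟩ := Metric.isOpen_iff.1 isOpen_ball c hc
  have e1 : ∀ᶠ r in 𝓝[>] (0 : ℝ), r < δ1 :=
    (eventually_lt_nhds hδ1).filter_mono nhdsWithin_le_nhds
  by_cases hin : (a + c • b) i0 ∈ pD
  · have ho : IsOpen {l : ℂ | (a + l • b) i0 ∈ pD} := pD_open.preimage (by fun_prop)
    obtain ⟨δ, hδ, hs⟩ := Metric.isOpen_iff.1 ho c hin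
    have e3 : ∀ᶠ r in 𝓝[>] (0 : ℝ), r < δ :=
      (eventually_lt_nhds hδ).filter_mono nhdsWithin_le_nhds
    filter_upwards [e2, e3, pS_submean N (a i1) (b i1) c] with r hr1 hr2 hr3
    have e : ∀ l : ℂ, (a + l • b) i1 = a i1 + b i1 * l := by intro l; simp [mul_comm]
    rw [circleAverage_congr_sphere (f₂ := fun l => pS N (a i1 + b i1 * l))]
    · have : pF i0 i1 N (a + c • b) = pS N (a i1 + b i1 * c) := by
        rw [← e]; exact if_pos hin
      rw [this]; exact hr3
    · intro l hl
      have hl2 : l ∈ ball c δ := by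
        rw [abs_of_pos hr1] at hl
        rw [mem_ball, mem_sphere.1 hl]; exact hr2
      have := hs hl2
      change pF i0 i1 N (a + l • b) = pS N (a i1 + b i1 * l)
      rw [← e]; exact if_pos this
  · filter_upwards [e1, e2] with r hr1 hr2
    have : pF i0 i1 N (a + c • b) = -1 := if_neg hin
    rw [this, ← circleAverage_const (-1 : ℝ) c r]
    refine circleAverage_mono continuousOn_const.circleIntegrable' ?_ fun x _ => pF_ge _ _ _ _
    refine (hcc.mono ?_).circleIntegrable'
    intro y hy
    apply ball_subset_closedBall
    apply hs1
    rw [abs_of_pos hr2] at hy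
    rw [mem_ball, mem_sphere.1 hy]; exact hr1

lemma pDisc (a b : EuclideanSpace ℂ (Fin n))
    (h : ∀ l : ℂ, ‖l‖ ≤ 1 → a + l • b ∈ pOm i0 i1) :
    ∃ M, ∀ N ≥ M, ∀ l : ℂ, ‖l‖ ≤ 1 → a + l • b ∈ pO i0 i1 N := by
  have hcont : Continuous fun l : ℂ => a + l • b := by fun_prop
  obtain ⟨M, hM⟩ := (isCompact_closedBall (0 : ℂ) 1).elim_directed_cover
    (fun N => (fun l : ℂ => a + l • b) ⁻¹' pO i0 i1 N)
    (fun N => (pO_open i0 i1 N).preimage hcont)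
    (by
      intro l hl
      have := h l (by simpa using hl)
      obtain ⟨N, hN⟩ := Set.mem_iUnion.1 this
      exact Set.mem_iUnion.2 ⟨N, hN⟩)
    (directed_of_isDirected_le fun N M hNM => Set.preimage_mono (pO_mono i0 i1 hNM))
  exact ⟨M, fun N hN l hl => pO_mono i0 i1 hN (hM (by simpa using hl))⟩

lemma pU_mean (a b : EuclideanSpace ℂ (Fin n))
    (h : ∀ l : ℂ, ‖l‖ ≤ 1 → a + l • b ∈ pOm i0 i1) :
    CircleIntegrable (fun l => pU i0 i1 (a + l • b)) 0 1 ∧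
    pU i0 i1 a ≤ circleAverage (fun l => pU i0 i1 (a + l • b)) 0 1 := by
  obtain ⟨M, hM⟩ := pDisc i0 i1 a b h
  have hn : ∀ θ : ℝ, ‖circleMap 0 1 θ‖ ≤ 1 := by intro θ; simp
  have hcont : Continuous fun l : ℂ => a + l • b := by fun_prop
  have hcN : ∀ N ≥ M, Continuous fun θ : ℝ => pF i0 i1 N (a + circleMap 0 1 θ • b) := by
    intro N hN
    refine (pF_cont i0 i1 N).comp_continuous (hcont.comp (continuous_circleMap 0 1)) ?_
    intro θ
    exact hM N hN _ (hn θ)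
  have hx1 : ∀ θ : ℝ, ‖(a + circleMap 0 1 θ • b) i1‖ < 1 := fun θ =>
    (hM M le_rfl _ (hn θ)).1 i1
  have hlim : ∀ θ : ℝ, Tendsto (fun N => pF i0 i1 N (a + circleMap 0 1 θ • b)) atTop
      (𝓝 (pU i0 i1 (a + circleMap 0 1 θ • b))) := fun θ => pU_tendsto i0 i1 _ (hx1 θ)
  have hmeas : Measurable fun θ : ℝ => pU i0 i1 (a + circleMap 0 1 θ • b) := by
    refine measurable_of_tendsto_metrizable
      (f := fun N θ => pF i0 i1 (N + M) (a + circleMap 0 1 θ • b)) ?_ ?_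
    · intro N; exact (hcN _ (Nat.le_add_left _ _)).measurable
    · rw [tendsto_pi_nhds]
      intro θ
      exact (hlim θ).comp (tendsto_add_atTop_nat M)
  have hlow : ∀ x, -1 ≤ pU i0 i1 x := fun x => le_ciInf fun N => pF_ge i0 i1 N x
  have hcint : CircleIntegrable (fun l => pU i0 i1 (a + l • b)) 0 1 := by
    unfold CircleIntegrable
    refine (intervalIntegrable_const (c := (1 : ℝ))).mono_fun hmeas.aestronglyMeasurable ?_
    refine Eventually.of_forall fun θ => ?_
    have h1 := hlow (a + circleMap 0 1 θ • b)
    have h2 := (pU_le i0 i1 0 (a + circleMap 0 1 θ • b)).trans (pF_le i0 i1 0 _ (hx1 θ))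
    simp only [norm_one]
    rw [Real.norm_eq_abs, abs_le]; constructor <;> linarith
  refine ⟨hcint, ?_⟩
  have hT : Tendsto (fun N => circleAverage (fun l => pF i0 i1 N (a + l • b)) 0 1) atTop
      (𝓝 (circleAverage (fun l => pU i0 i1 (a + l • b)) 0 1)) := by
    unfold circleAverage
    refine Tendsto.const_smul ?_ _
    refine intervalIntegral.tendsto_integral_filter_of_dominated_convergence (fun _ => (1 : ℝ))
      ?_ ?_ intervalIntegrable_const ?_
    · filter_upwards [eventually_ge_atTop M] with N hN
      exact (hcN N hN).aestronglyMeasurable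
    · refine Eventually.of_forall fun N => Eventually.of_forall fun θ _ => ?_
      have h1 := pF_ge i0 i1 N (a + circleMap 0 1 θ • b)
      have h2 := pF_le i0 i1 N _ (hx1 θ)
      rw [Real.norm_eq_abs, abs_le]; constructor <;> linarith
    · exact Eventually.of_forall fun θ _ => hlim θ
  refine ge_of_tendsto hT ?_
  filter_upwards [eventually_ge_atTop M] with N hN
  exact (pU_le i0 i1 N a).trans (pF_mean i0 i1 N a b (hM N hN))

lemma toReal_sup (x y : ℝ) : ((x : EReal) ⊔ (y : EReal)).toReal = max x y := by
  rw [← EReal.coe_strictMono.monotone.map_max, EReal.toReal_coe]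

lemma pU_psh : IsPSHOn (pOm i0 i1) (fun x => ((pU i0 i1 x : ℝ) : EReal)) := by
  refine ⟨pU_usc i0 i1, fun z _ => EReal.coe_ne_top _,
    fun z hz => ⟨z, mem_connectedComponentIn hz, EReal.coe_ne_bot _⟩, ?_⟩
  intro a b h
  obtain ⟨hi, hm⟩ := pU_mean i0 i1 a b h
  unfold circleMean
  refine le_iInf fun m => ?_
  rw [EReal.coe_le_coe_iff]
  refine hm.trans ?_
  have e : ∀ θ : ℝ, Complex.exp ((θ : ℂ) * Complex.I) = circleMap 0 1 θ := by
    intro θ; simp [circleMap]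
  simp only [toReal_sup, e]
  rw [circleAverage, smul_eq_mul]
  refine mul_le_mul_of_nonneg_left ?_ (inv_nonneg.2 two_pi_pos.le)
  refine intervalIntegral.integral_mono_on two_pi_pos.le hi ?_ fun θ _ => le_max_left _ _
  unfold CircleIntegrable at hi
  rw [intervalIntegrable_iff] at hi ⊢
  exact Integrable.sup hi (intervalIntegrable_iff.1 intervalIntegrable_const)

end

lemma pW_tendsto : Tendsto pW atTop (𝓝 0) := by
  unfold pW
  exact (tendsto_pow_atTop_nhds_zero_of_lt_one (by norm_num) (by norm_num)).comp
    (tendsto_add_atTop_nat 1)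

lemma pW_normC (j : ℕ) : ‖(pW j : ℂ)‖ = pW j := by
  rw [Complex.norm_real, Real.norm_of_nonneg (pW_pos j).le]

lemma pW_mem_D (k : ℕ) : (pW k : ℂ) ∈ pD :=
  Set.mem_iUnion.2 ⟨k, mem_ball_self (by have := pW_pos k; positivity)⟩

lemma not_frontier_of_mem {z : ℂ} (h : z ∈ pD) : z ∉ frontier pD := by
  rw [frontier, pD_open.interior_eq]; exact fun h2 => h2.2 h

lemma pW_half {j k : ℕ} (h : j < k) : pW k ≤ pW j / 2 := by
  unfold pW
  have : ((1:ℝ) / 2) ^ (k + 1) ≤ (1 / 2) ^ (j + 1 + 1) :=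
    pow_le_pow_of_le_one (by norm_num) (by norm_num) (by omega)
  rw [pow_succ _ (j + 1)] at this
  linarith

lemma pSphere (k : ℕ) (z : ℂ) (hz : ‖z - pW k‖ = pW k / 4) : z ∉ closure pD := by
  intro hcl
  rw [Metric.mem_closure_iff] at hcl
  obtain ⟨y, hy, hzy⟩ := hcl (pW k / 8) (by have := pW_pos k; positivity)
  obtain ⟨j, hj⟩ := Set.mem_iUnion.1 hy
  rw [mem_ball, dist_eq_norm] at hj
  rw [dist_eq_norm] at hzy
  have hk := pW_pos k
  have hjp := pW_pos j
  have t1 : ‖z - pW j‖ < pW k / 8 + pW j / 8 := by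
    have : z - pW j = (z - y) + (y - pW j) := by ring
    rw [this]
    exact lt_of_le_of_lt (norm_add_le _ _) (add_lt_add hzy hj)
  have t2 : |pW k - pW j| ≤ ‖z - pW k‖ + ‖z - pW j‖ := by
    have : ((pW k - pW j : ℝ) : ℂ) = -(z - pW k) + (z - pW j) := by push_cast; ring
    rw [← Real.norm_eq_abs, ← Complex.norm_real, this]
    refine (norm_add_le _ _).trans ?_
    rw [norm_neg]
  rw [hz] at t2
  have t3 := (abs_le.1 t2)
  rcases lt_trichotomy j k with h | h | h
  · have := pW_half h; linarith
  · subst h; rw [hz] at t1; linarith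
  · have := pW_half h; linarith

section
variable {n : ℕ} (i0 i1 : Fin n)

def pT (z w : ℂ) : EuclideanSpace ℂ (Fin n) :=
  EuclideanSpace.single i0 z + EuclideanSpace.single i1 w

lemma pT_00 : pT i0 i1 0 0 = 0 := by
  ext i
  simp [pT]

lemma pT_zero (h : i0 ≠ i1) (z w : ℂ) : pT i0 i1 z w i0 = z := by
  simp [pT, h]

lemma pT_one (h : i0 ≠ i1) (z w : ℂ) : pT i0 i1 z w i1 = w := by
  simp [pT, h.symm]

lemma pT_norm (h : i0 ≠ i1) (z w : ℂ) (hz : ‖z‖ < 1) (hw : ‖w‖ < 1) (i : Fin n) :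
    ‖pT i0 i1 z w i‖ < 1 := by
  by_cases h0 : i = i0
  · subst h0; rw [pT_zero _ _ h]; exact hz
  by_cases h1 : i = i1
  · subst h1; rw [pT_one _ _ h]; exact hw
  simp [pT, h0, h1]

lemma pT_cont : Continuous fun q : ℂ × ℂ => pT i0 i1 q.1 q.2 := by
  have e : ∀ i : Fin n, Continuous fun z : ℂ => EuclideanSpace.single i z := by
    intro i
    refine LinearMap.continuous_of_finiteDimensional
      (E := ℂ) (F' := EuclideanSpace ℂ (Fin n)) (𝕜 := ℂ)
      { toFun := fun z => EuclideanSpace.single i z, map_add' := ?_, map_smul' := ?_ }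
    · intro x y; ext j; by_cases hj : j = i <;> simp [hj]
    · intro x y; ext j; by_cases hj : j = i <;> simp [hj]
  exact ((e i0).comp continuous_fst).add ((e i1).comp continuous_snd)

lemma pW_mem_V (j : ℕ) : (pW j : ℂ) ∈ pV (j + 1) :=
  ⟨j, Nat.lt_succ_self j, by simpa using pDel_pos j⟩

lemma zero_not_V (N : ℕ) : (0 : ℂ) ∉ pV N := by
  intro h
  have h1 := pS_eq N 0 (by simp) h
  have h2 := pS_zero N
  linarith

lemma pJoin (x y : EuclideanSpace ℂ (Fin n)) (hx : ∀ i, ‖x i‖ < 1) (hy : ∀ i, ‖y i‖ < 1)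
    (h : (x i0 = y i0 ∧ x i0 ∉ frontier pD) ∨ (x i1 = y i1 ∧ ∃ N, x i1 ∈ pV N)) :
    JoinedIn (pOm i0 i1) x y := by
  refine JoinedIn.of_segment_subset ?_
  rintro z ⟨s, t, hs, ht, hst, rfl⟩
  have hn : ∀ i, ‖(s • x + t • y) i‖ < 1 := by
    intro i
    have hc : Convex ℝ (ball (0 : ℂ) 1) := convex_ball 0 1
    have := hc (show x i ∈ ball (0:ℂ) 1 by simpa using hx i)
      (show y i ∈ ball (0:ℂ) 1 by simpa using hy i) hs ht hst
    simpa using this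
  rcases h with ⟨h1, h2⟩ | ⟨h1, N, h2⟩
  · refine Set.mem_iUnion.2 ⟨0, hn, Or.inl ?_⟩
    have : (s • x + t • y) i0 = x i0 := by
      have : (s • x + t • y) i0 = s • x i0 + t • y i0 := by simp
      rw [this, ← h1, ← add_smul, hst, one_smul]
    rw [this]; exact h2
  · refine Set.mem_iUnion.2 ⟨N, hn, Or.inr ?_⟩
    have : (s • x + t • y) i1 = x i1 := by
      have : (s • x + t • y) i1 = s • x i1 + t • y i1 := by simp
      rw [this, ← h1, ← add_smul, hst, one_smul]
    rw [this]; exact h2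

lemma pOm_conn (h01 : i0 ≠ i1) : IsConnected (pOm i0 i1) := by
  refine IsPathConnected.isConnected ?_
  have hp : ‖(pW 0 : ℂ)‖ < 1 := by rw [pW_normC]; linarith [pW_le 0]
  refine ⟨pT i0 i1 (pW 0) (pW 0), ?_, ?_⟩
  · exact Set.mem_iUnion.2 ⟨0, pT_norm _ _ h01 _ _ hp hp,
      Or.inl (by rw [pT_zero _ _ h01]; exact not_frontier_of_mem (pW_mem_D 0))⟩
  · intro y hy
    obtain ⟨N, hy1, hy2⟩ := Set.mem_iUnion.1 hy
    rcases hy2 with h | h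
    · refine (pJoin i0 i1 _ (pT i0 i1 (y i0) (pW 0)) (pT_norm _ _ h01 _ _ hp hp)
        (pT_norm _ _ h01 _ _ (hy1 i0) hp) (Or.inr ⟨?_, 1, ?_⟩)).trans
        (pJoin i0 i1 _ _ (pT_norm _ _ h01 _ _ (hy1 i0) hp) hy1 (Or.inl ⟨?_, ?_⟩))
      · rw [pT_one _ _ h01, pT_one _ _ h01]
      · rw [pT_one _ _ h01]; exact pW_mem_V 0
      · rw [pT_zero _ _ h01]
      · rw [pT_zero _ _ h01]; exact h
    · refine (pJoin i0 i1 _ (pT i0 i1 (pW 0) (y i1)) (pT_norm _ _ h01 _ _ hp hp)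
        (pT_norm _ _ h01 _ _ hp (hy1 i1)) (Or.inl ⟨?_, ?_⟩)).trans
        (pJoin i0 i1 _ _ (pT_norm _ _ h01 _ _ hp (hy1 i1)) hy1 (Or.inr ⟨?_, N, ?_⟩))
      · rw [pT_zero _ _ h01, pT_zero _ _ h01]
      · rw [pT_zero _ _ h01]; exact not_frontier_of_mem (pW_mem_D 0)
      · rw [pT_one _ _ h01]
      · rw [pT_one _ _ h01]; exact h

lemma pOm_bdd : Bornology.IsBounded (pOm i0 i1) := by
  rw [isBounded_iff_forall_norm_le]
  refine ⟨∑ i : Fin n, 1, ?_⟩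
  intro x hx
  obtain ⟨N, hx1, _⟩ := Set.mem_iUnion.1 hx
  have e : x = ∑ i, EuclideanSpace.single i (x i) := by
    ext j; simp [Finset.sum_apply, Pi.single_apply]
  rw [e]
  refine (norm_sum_le _ _).trans ?_
  refine (Finset.sum_le_sum (g := fun _ => (1 : ℝ)) fun i _ => ?_).trans (by simp)
  simpa using (hx1 i).le

lemma pT_center_mem (h01 : i0 ≠ i1) (k : ℕ) : pT i0 i1 (pW k) 0 ∈ pOm i0 i1 := by
  refine Set.mem_iUnion.2 ⟨0, pT_norm _ _ h01 _ _ ?_ (by simp), Or.inl ?_⟩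
  · rw [pW_normC]; linarith [pW_le k]
  · rw [pT_zero _ _ h01]; exact not_frontier_of_mem (pW_mem_D k)

lemma pWC_tendsto : Tendsto (fun j => (pW j : ℂ)) atTop (𝓝 0) := by
  have := (Complex.continuous_ofReal.tendsto 0).comp pW_tendsto
  rw [Complex.ofReal_zero] at this
  exact this

lemma pT_tendsto_z : Tendsto (fun k => pT i0 i1 (pW k) 0) atTop (𝓝 (0 : EuclideanSpace ℂ (Fin n))) := by
  have hc : Continuous fun z : ℂ => pT i0 i1 z 0 :=
    (pT_cont i0 i1).comp (continuous_id.prodMk continuous_const)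
  have h : Tendsto (fun z : ℂ => pT i0 i1 z 0) (𝓝 0) (𝓝 (pT i0 i1 0 0)) := hc.tendsto 0
  have h3 := h.comp pWC_tendsto
  have e : 𝓝 (pT i0 i1 0 0) = 𝓝 (0 : EuclideanSpace ℂ (Fin n)) := congrArg 𝓝 (pT_00 i0 i1)
  rw [← e]
  exact h3

lemma pOm_zero (h01 : i0 ≠ i1) : (0 : EuclideanSpace ℂ (Fin n)) ∈ frontier (pOm i0 i1) := by
  rw [frontier, (pOm_open i0 i1).interior_eq]
  refine ⟨mem_closure_of_tendsto (pT_tendsto_z i0 i1)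
    (Eventually.of_forall (pT_center_mem i0 i1 h01)), ?_⟩
  intro h
  obtain ⟨N, _, h2⟩ := Set.mem_iUnion.1 h
  rcases h2 with h2 | h2
  · apply h2
    rw [frontier, pD_open.interior_eq]
    refine ⟨mem_closure_of_tendsto (f := fun k => (pW k : ℂ)) (b := atTop) ?_
      (Eventually.of_forall pW_mem_D), ?_⟩
    · exact pWC_tendsto
    · intro h3
      obtain ⟨j, hj⟩ := Set.mem_iUnion.1 h3
      simp only [PiLp.zero_apply, mem_ball, dist_eq_norm, zero_sub, norm_neg, pW_normC] at hj
      linarith [pW_pos j]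
  · exact zero_not_V N h2

lemma pNonapprox (h01 : i0 ≠ i1) (U : Set (EuclideanSpace ℂ (Fin n))) (hU : IsOpen U)
    (hU0 : (0 : EuclideanSpace ℂ (Fin n)) ∈ U)
    (v : ℕ → EuclideanSpace ℂ (Fin n) → ℝ)
    (hv1 : ∀ k, ContinuousOn (v k) (pOm i0 i1 ∩ U))
    (hv2 : ∀ k, IsPSHOn (pOm i0 i1 ∩ U) (fun z => ((v k z : ℝ) : EReal)))
    (hv3 : ∀ k, ∀ z ∈ pOm i0 i1 ∩ U, v (k+1) z ≤ v k z)
    (hv4 : ∀ z ∈ pOm i0 i1 ∩ U, Tendsto (fun k => ((v k z : ℝ) : EReal)) atTop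
      (nhds ((pU i0 i1 z : ℝ) : EReal))) : False := by
  set O := pOm i0 i1 ∩ U with hO
  have hOo : IsOpen O := (pOm_open i0 i1).inter hU
  have hanti : ∀ z ∈ O, Antitone fun k => v k z := fun z hz =>
    antitone_nat_of_succ_le fun k => hv3 k z hz
  have hTc := pT_cont i0 i1
  -- size
  obtain ⟨ρ, hρ, hρU⟩ : ∃ ρ > 0, ∀ z w : ℂ, ‖z‖ < ρ → ‖w‖ < ρ → pT i0 i1 z w ∈ U := by
    have h1 : (0 : ℂ × ℂ) ∈ (fun q : ℂ × ℂ => pT i0 i1 q.1 q.2) ⁻¹' U := by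
      change pT i0 i1 0 0 ∈ U
      rw [pT_00]; exact hU0
    obtain ⟨ρ, hρ, hs⟩ := Metric.isOpen_iff.1 (hU.preimage hTc) 0 h1
    refine ⟨ρ, hρ, fun z w hz hw => ?_⟩
    have : (z, w) ∈ ball (0 : ℂ × ℂ) ρ := by
      rw [mem_ball_zero_iff, Prod.norm_def]; exact max_lt hz hw
    exact hs this
  have hWC : Tendsto (fun j => (pW j : ℂ)) atTop (𝓝 0) := pWC_tendsto
  obtain ⟨k, hk⟩ : ∃ k, pW k < ρ / 2 :=
    (pW_tendsto.eventually (gt_mem_nhds (by positivity : (0:ℝ) < ρ / 2))).exists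
  set c : ℝ := pW k with hc
  have hcpos : 0 < c := pW_pos k
  have hc2 : c ≤ 1 / 2 := pW_le k
  have hzn : ∀ z : ℂ, ‖z - c‖ ≤ c / 4 → ‖z‖ < 1 ∧ ‖z‖ < ρ := by
    intro z hz
    have : ‖z‖ ≤ ‖z - c‖ + ‖(c : ℂ)‖ := by
      have := norm_add_le (z - c) (c : ℂ); simpa using this
    rw [show ‖(c : ℂ)‖ = c from pW_normC k] at this
    constructor <;> linarith
  set K : Set ℂ := sphere (c : ℂ) (c / 4) with hK
  have hKc : IsCompact K := isCompact_sphere _ _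
  have hKn : ∀ z ∈ K, ‖z - c‖ = c / 4 := fun z hz => mem_sphere_iff_norm.1 hz
  have hKO : ∀ z ∈ K, pT i0 i1 z 0 ∈ O := by
    intro z hz
    obtain ⟨b1, b2⟩ := hzn z (hKn z hz).le
    refine ⟨Set.mem_iUnion.2 ⟨0, pT_norm _ _ h01 _ _ b1 (by simp), Or.inl ?_⟩,
      hρU _ _ b2 (by simpa using hρ)⟩
    rw [pT_zero _ _ h01]
    exact fun h => pSphere k z (hKn z hz) (frontier_subset_closure h)
  have hKu : ∀ z ∈ K, pU i0 i1 (pT i0 i1 z 0) = -1 := by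
    intro z hz
    have : ∀ N, pF i0 i1 N (pT i0 i1 z 0) = -1 := by
      intro N
      refine if_neg ?_
      rw [pT_zero _ _ h01]
      exact fun h => pSphere k z (hKn z hz) (subset_closure h)
    unfold pU
    simp only [this, ciInf_const]
  -- the sets where `v m < -3/4`
  have hWo : ∀ m, IsOpen (O ∩ v m ⁻¹' Set.Iio (-3/4)) := fun m =>
    (hv1 m).isOpen_inter_preimage hOo isOpen_Iio
  have hT0 : Continuous fun z : ℂ => pT i0 i1 z 0 := hTc.comp (by fun_prop : Continuous fun z : ℂ => (z, (0:ℂ)))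
  obtain ⟨m, hm⟩ := hKc.elim_directed_cover
    (fun m => (fun z : ℂ => pT i0 i1 z 0) ⁻¹' (O ∩ v m ⁻¹' Set.Iio (-3/4)))
    (fun m => (hWo m).preimage hT0)
    (by
      intro z hz
      have ht := hv4 _ (hKO z hz)
      rw [hKu z hz] at ht
      have : (((-1 : ℝ)) : EReal) < ((-3/4 : ℝ) : EReal) := by
        rw [EReal.coe_lt_coe_iff]; norm_num
      obtain ⟨m, hm⟩ := (ht.eventually (gt_mem_nhds this)).exists
      exact Set.mem_iUnion.2 ⟨m, hKO z hz, EReal.coe_lt_coe_iff.1 hm⟩)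
    (directed_of_isDirected_le fun m m' hmm z hz =>
      ⟨hz.1, lt_of_le_of_lt (hanti _ hz.1 hmm) hz.2⟩)
  have htube : ∀ᶠ w in 𝓝 (0 : ℂ), ∀ z ∈ K,
      pT i0 i1 z w ∈ O ∩ v m ⁻¹' Set.Iio (-3/4) := by
    refine hKc.eventually_forall_of_forall_eventually ?_
    intro z hz
    have : Continuous fun q : ℂ × ℂ => pT i0 i1 q.2 q.1 := hTc.comp continuous_swap
    exact ((hWo m).preimage this).mem_nhds (hm hz)
  have hcenter : pT i0 i1 (c : ℂ) 0 ∈ O :=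
    ⟨pT_center_mem i0 i1 h01 k, hρU _ _ (hzn c (by simp; positivity)).2 (by simpa using hρ)⟩
  have hev : ∀ᶠ j in atTop, v m (pT i0 i1 c (pW j)) ≤ -3/4 := by
    have e2 : ∀ᶠ j in atTop, pW j < ρ := pW_tendsto.eventually (gt_mem_nhds hρ)
    filter_upwards [hWC.eventually htube, e2] with j hj hjρ
    have heq : ∀ l : ℂ, pT i0 i1 c (pW j) + l • EuclideanSpace.single i0 ((c / 4 : ℝ) : ℂ)
        = pT i0 i1 (c + l * ((c / 4 : ℝ) : ℂ)) (pW j) := by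
      intro l
      ext i
      by_cases h0 : i = i0
      · subst h0; simp [pT, h01]
      · simp [pT, h0]
    have hln : ∀ l : ℂ, ‖(c + l * ((c / 4 : ℝ) : ℂ)) - c‖ = ‖l‖ * (c / 4) := by
      intro l
      rw [add_sub_cancel_left, norm_mul, Complex.norm_real, Real.norm_of_nonneg (by positivity)]
    have hmean := (hv2 m).2.2.2 (pT i0 i1 c (pW j)) (EuclideanSpace.single i0 ((c / 4 : ℝ) : ℂ))
      (by
        intro l hl
        rw [heq]
        have : ‖(c + l * ((c / 4 : ℝ) : ℂ)) - c‖ ≤ c / 4 := by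
          rw [hln]; nlinarith
        obtain ⟨b1, b2⟩ := hzn _ this
        refine ⟨Set.mem_iUnion.2 ⟨j + 1, pT_norm _ _ h01 _ _ b1 ?_, Or.inr ?_⟩, hρU _ _ b2 ?_⟩
        · rw [pW_normC]; linarith [pW_le j]
        · rw [pT_one _ _ h01]; exact pW_mem_V j
        · rw [pW_normC]; exact hjρ)
    have hle := hmean.trans (iInf_le _ 1)
    rw [EReal.coe_le_coe_iff] at hle
    refine hle.trans ?_
    simp only [toReal_sup, heq]
    have hcirc : ∀ θ : ℝ, (c + Complex.exp ((θ : ℂ) * Complex.I) * ((c / 4 : ℝ) : ℂ)) ∈ K := by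
      intro θ
      rw [hK, mem_sphere_iff_norm, hln, Complex.norm_exp_ofReal_mul_I, one_mul]
    have hcontv : Continuous fun θ : ℝ =>
        v m (pT i0 i1 (c + Complex.exp ((θ : ℂ) * Complex.I) * ((c / 4 : ℝ) : ℂ)) (pW j)) := by
      refine (hv1 m).comp_continuous (hTc.comp (by fun_prop : Continuous fun θ : ℝ =>
        (((c : ℂ) + Complex.exp ((θ : ℂ) * Complex.I) * ((c / 4 : ℝ) : ℂ)), (pW j : ℂ)))) ?_
      intro θ
      exact (hj _ (hcirc θ)).1
    have hI : (∫ θ in (0:ℝ)..(2 * π), max (v m (pT i0 i1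
        (c + Complex.exp ((θ : ℂ) * Complex.I) * ((c / 4 : ℝ) : ℂ)) (pW j))) (-((1 : ℕ) : ℝ))) ≤
        ∫ θ in (0:ℝ)..(2 * π), (-3/4 : ℝ) := by
      refine intervalIntegral.integral_mono_on two_pi_pos.le ?_ intervalIntegrable_const ?_
      · exact (hcontv.max continuous_const).intervalIntegrable _ _
      · intro θ _
        refine max_le (le_of_lt (hj _ (hcirc θ)).2) (by norm_num)
    refine (mul_le_mul_of_nonneg_left hI (inv_nonneg.2 two_pi_pos.le)).trans ?_
    rw [intervalIntegral.integral_const, smul_eq_mul, sub_zero, ← mul_assoc,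
      inv_mul_cancel₀ two_pi_pos.ne', one_mul]
  have hlim : Tendsto (fun j => v m (pT i0 i1 c (pW j))) atTop (𝓝 (v m (pT i0 i1 c 0))) := by
    have h1 : ContinuousAt (v m) (pT i0 i1 (c : ℂ) 0) := (hv1 m).continuousAt (hOo.mem_nhds hcenter)
    have h2 : Tendsto (fun w : ℂ => pT i0 i1 c w) (𝓝 0) (𝓝 (pT i0 i1 (c : ℂ) 0)) :=
      (hTc.comp (by fun_prop : Continuous fun w : ℂ => ((c : ℂ), w))).tendsto 0
    exact h1.tendsto.comp (h2.comp hWC)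
  have hup : v m (pT i0 i1 c 0) ≤ -3/4 := le_of_tendsto hlim hev
  have hlow : pU i0 i1 (pT i0 i1 c 0) ≤ v m (pT i0 i1 c 0) := by
    have ha : Antitone fun k => ((v k (pT i0 i1 (c : ℂ) 0) : ℝ) : EReal) := fun a b hab =>
      EReal.coe_le_coe_iff.2 (hanti _ hcenter hab)
    exact EReal.coe_le_coe_iff.1 (ha.le_of_tendsto (hv4 _ hcenter) m)
  have hlow2 : -(1/2) ≤ pU i0 i1 (pT i0 i1 (c : ℂ) 0) := by
    refine le_ciInf fun N => ?_
    have : pF i0 i1 N (pT i0 i1 (c : ℂ) 0) = pS N 0 := by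
      unfold pF
      rw [pT_zero _ _ h01, pT_one _ _ h01]
      exact if_pos (pW_mem_D k)
    rw [this]; exact pS_zero N
  linarith

end

/-- **Theorem 3 (Example).** For every `n ≥ 2` there exist a bounded domain `Ω ⊆ ℂⁿ` with
`0 ∈ ∂Ω` and a plurisubharmonic function `u` on `Ω` such that for every neighbourhood `U`
of `0` there is no sequence of smooth plurisubharmonic functions on `Ω ∩ U` decreasing
pointwise to `u` on `Ω ∩ U`. -/
theorem exists_domain_psh_not_locally_smoothable {n : ℕ} (hn : 2 ≤ n) :
    ∃ (Ω : Set (EuclideanSpace ℂ (Fin n))) (u : EuclideanSpace ℂ (Fin n) → EReal),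
      IsOpen Ω ∧ IsConnected Ω ∧ Bornology.IsBounded Ω ∧
      (0 : EuclideanSpace ℂ (Fin n)) ∈ frontier Ω ∧
      IsPSHOn Ω u ∧
      ∀ U : Set (EuclideanSpace ℂ (Fin n)), IsOpen U → (0 : EuclideanSpace ℂ (Fin n)) ∈ U →
        ¬ ∃ v : ℕ → EuclideanSpace ℂ (Fin n) → ℝ,
            (∀ k, ContDiffOn ℝ (⊤ : ℕ∞) (v k) (Ω ∩ U)) ∧
            (∀ k, IsPSHOn (Ω ∩ U) (fun z => ((v k z : ℝ) : EReal))) ∧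
            (∀ k, ∀ z ∈ Ω ∩ U, v (k+1) z ≤ v k z) ∧
            (∀ z ∈ Ω ∩ U, Tendsto (fun k => ((v k z : ℝ) : EReal)) atTop (nhds (u z))) := by
  have h01 : (⟨0, by omega⟩ : Fin n) ≠ ⟨1, by omega⟩ := by simp
  refine ⟨pOm ⟨0, by omega⟩ ⟨1, by omega⟩,
    fun x => ((pU ⟨0, by omega⟩ ⟨1, by omega⟩ x : ℝ) : EReal),
    pOm_open _ _, pOm_conn _ _ h01, pOm_bdd _ _, pOm_zero _ _ h01, pU_psh _ _, ?_⟩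
  rintro U hU hU0 ⟨v, hv1, hv2, hv3, hv4⟩
  exact pNonapprox _ _ h01 U hU hU0 v (fun k => (hv1 k).continuousOn) hv2 hv3 hv4
end
end
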